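/- arXiv:1702.07812 — 6 statements merged into one kernel-verified Lean document; each statement's English description precedes it below -/
import Mathlib

section
/- Let n ≥ 3 be an integer and set χ = χ_k^{n−2}. Let f ∈ M^{!,∞}_{2−n}(D,χ) have Fourier coefficients c(m), and assume c(m) ∈ ℤ for all m ≤ 0. Then c(m) ∈ ℚ for all m ∈ ℤ. -/
/-!
The proof shows that the coefficients `c m` are fixed by every field automorphism `σ` of `ℂ`; a
complex number with this property is rational (`rational_of_fixed`).

The point is that `σ` acts on modular forms through their `q`-expansions. In level one
(`LForm.galois`) this follows by induction on the weight from the Eisenstein series and the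
discriminant `Δ`, whose `q`-expansions are rational. For a form `F` of level `Γ₀(D)` with character
`χ` (`GForm.galois`), two explicit Eisenstein series with rational `q`-expansions are used: a
nonzero form `E` of weight `n` and character `χ`, and a form `H` of weight `4` and trivial
character which vanishes at the cusp `∞` and at no other cusp. The form `Φ = F * E` has trivial
character. Lagrange interpolation over the conjugates `Φ_j`, `H_j` of `Φ`, `H` under
`SL(2, ℤ) / Γ₀(D)` gives identities
`Φ * B = ∑ a_r H ^ r`, `B = ∏_{j ≠ 1} (H - H_j) = ∑ b_r H ^ r`, with `a_r`, `b_r` of level one, and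
`B ≠ 0` because `H` vanishes only at `∞`. Applying `σ` to `a_r` and `b_r` produces forms `C` and
`G` such that the quotient `C / G` has the `q`-expansion `σ(F)`. The square of `F` is integral over
the level one forms (the product over its conjugates); the conjugated equation holds for
`(C / G) ^ 2`, so `C / G` is locally bounded and bounded at every cusp, hence is a holomorphic
form.

For the weakly holomorphic `f` with a pole of order at most `N` at `∞`, this is applied to
`f * Δ ^ N` and `f * H ^ N`. Dividing the conjugate of the first by `Δ ^ N` gives a form `f'` with
`q`-expansion `σ(f)`, holomorphic on the upper half plane; the second shows that `f'` is bounded at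
the cusps other than `∞` (`WForm.galois`). As the principal part of `f` is integral, `f - f'` has no
pole at `∞` either, so it is a holomorphic form of negative weight `2 - n` and vanishes.
-/

/-!
Statement 4 (part of Corollary 5.1.3): for `n ≥ 3` and `χ = χ_k^{n-2}` (where `χ_k` is the
quadratic character attached to the imaginary quadratic field `k` of odd discriminant `-D`),
a form `f ∈ M^{!,∞}_{2-n}(D,χ)` whose Fourier coefficients `c(m)` are integers for `m ≤ 0`
has all its Fourier coefficients rational.
-/

noncomputable section

/-- The complex upper half plane, as a subset of `ℂ`. -/
def UHP : Set ℂ := {z : ℂ | 0 < z.im}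

/-- A `2 × 2` integer matrix viewed as a real matrix. -/
def matR (g : Matrix (Fin 2) (Fin 2) ℤ) : Matrix (Fin 2) (Fin 2) ℝ :=
  g.map fun x => (x : ℝ)

/-- The weight `w` slash action of a real `2 × 2` matrix `g = [[a,b],[c,d]]` (of positive
determinant) on functions: `(f ∣[w] g)(τ) = det(g)^{w/2} (cτ+d)^{-w} f((aτ+b)/(cτ+d))`. -/
def slash (w : ℤ) (g : Matrix (Fin 2) (Fin 2) ℝ) (f : ℂ → ℂ) : ℂ → ℂ := fun τ =>
  (Real.sqrt g.det : ℂ) ^ w * ((g 1 0 : ℂ) * τ + (g 1 1 : ℂ)) ^ (-w) *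
    f (((g 0 0 : ℂ) * τ + (g 0 1 : ℂ)) / ((g 1 0 : ℂ) * τ + (g 1 1 : ℂ)))

/-- `χ : ℤ → ℂ` is a quadratic Dirichlet character modulo `D`. -/
structure IsQuadDirChar (D : ℕ) (χ : ℤ → ℂ) : Prop where
  periodic : ∀ a : ℤ, χ (a + D) = χ a
  mul : ∀ a b : ℤ, χ (a * b) = χ a * χ b
  eq_zero_iff : ∀ a : ℤ, χ a = 0 ↔ ¬ IsCoprime a (D : ℤ)
  sq_vals : ∀ a : ℤ, χ a = 0 ∨ χ a = 1 ∨ χ a = -1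

/-- `f : ℍ → ℂ` is a weakly holomorphic modular form of weight `w`, level `Γ₀(D)`, character
`χ`, holomorphic outside the cusp `∞`, with Fourier coefficients `c`; i.e. `f ∈ M^{!,∞}_w(D,χ)`.
Only the restriction of `f` to the upper half plane matters. -/
structure IsWeaklyHolInfty (D : ℕ) (χ : ℤ → ℂ) (w : ℤ) (f : ℂ → ℂ) (c : ℤ → ℂ) : Prop where
  holo : DifferentiableOn ℂ f UHP
  transform : ∀ γ : Matrix.SpecialLinearGroup (Fin 2) ℤ, (D : ℤ) ∣ γ 1 0 →
    ∀ τ ∈ UHP, slash w (matR γ) f τ = χ (γ 1 1) * f τ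
  coeff_bddBelow : ∃ m₀ : ℤ, ∀ m : ℤ, m < -m₀ → c m = 0
  fourier : ∀ τ ∈ UHP,
    HasSum (fun m : ℤ => c m * Complex.exp (2 * (Real.pi : ℂ) * Complex.I * m * τ)) (f τ)
  bdd_at_other_cusps : ∀ γ : Matrix.SpecialLinearGroup (Fin 2) ℤ, ¬ (D : ℤ) ∣ γ 1 0 →
    ∃ C : ℝ, ∀ τ : ℂ, 1 ≤ τ.im → ‖slash w (matR γ) f τ‖ ≤ C

/-- An odd nonnegative representative of `a` modulo `D` (for odd `D`). -/
def oddRep (D : ℕ) (a : ℤ) : ℕ :=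
  if (a % (D : ℤ)).toNat % 2 = 1 then (a % (D : ℤ)).toNat else (a % (D : ℤ)).toNat + D

/-- The quadratic Dirichlet character `χ_k` modulo `D` attached to the imaginary quadratic field
`k` of discriminant `-D`: it is determined by `χ_k(a) = J(-D | a)` (Jacobi symbol) for positive
integers `a` coprime to `D`, extended to `ℤ` by periodicity modulo `D`. -/
def chiK (D : ℕ) (a : ℤ) : ℤ := jacobiSym (-(D : ℤ)) (oddRep D a)

/-! ### Complex numbers fixed by all automorphisms -/

section

/-- Two uncountable algebraically closed extensions of the same cardinality of a countable domain
are isomorphic over that domain. -/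
lemma exists_ringEquiv_comp_algebraMap {R K L : Type} [CommRing R] [IsDomain R] [Field K] [Field L]
    [Algebra R K] [Algebra R L] [IsAlgClosed K] [IsAlgClosed L]
    [FaithfulSMul R K] [FaithfulSMul R L] (hR : Cardinal.mk R ≤ Cardinal.aleph0)
    (hK : Cardinal.aleph0 < Cardinal.mk K) (hKL : Cardinal.mk K = Cardinal.mk L) :
    ∃ σ : K ≃+* L, ∀ r : R, σ (algebraMap R K r) = algebraMap R L r := by
  obtain ⟨s, hs⟩ := exists_isTranscendenceBasis R K
  obtain ⟨t, ht⟩ := exists_isTranscendenceBasis R L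
  have h1 := IsAlgClosed.cardinal_eq_cardinal_transcendence_basis_of_aleph0_lt' _ hs hR hK
  have h2 := IsAlgClosed.cardinal_eq_cardinal_transcendence_basis_of_aleph0_lt' _ ht hR
    (hKL ▸ hK)
  obtain ⟨e⟩ := Cardinal.eq.1 (h1.symm.trans (hKL.trans h2))
  let := IsAlgClosed.isAlgClosure_of_transcendence_basis _ hs
  let := IsAlgClosed.isAlgClosure_of_transcendence_basis _ ht
  let e' := hs.1.aevalEquiv.symm.trans
    ((MvPolynomial.renameEquiv R e).trans ht.1.aevalEquiv)
  refine ⟨IsAlgClosure.equivOfEquiv K L e'.toRingEquiv, fun r => ?_⟩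
  rw [IsScalarTower.algebraMap_apply R (Algebra.adjoin R (Set.range ((↑) : s → K))) K,
    IsAlgClosure.equivOfEquiv_algebraMap]
  have : e'.toRingEquiv (algebraMap R _ r) = algebraMap R _ r := e'.commutes r
  rw [this, ← IsScalarTower.algebraMap_apply R _ L]

/-- Two embeddings of a countable domain in `ℂ` differ by an automorphism of `ℂ`. -/
lemma exists_ringEquiv_comp_eq {R : Type} [CommRing R] [IsDomain R]
    (hR : Cardinal.mk R ≤ Cardinal.aleph0) (i j : R →+* ℂ)
    (hi : Function.Injective i) (hj : Function.Injective j) :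
    ∃ σ : ℂ ≃+* ℂ, ∀ r : R, σ (i r) = j r := by
  have hC : Cardinal.aleph0 < Cardinal.mk ℂ := by
    rw [Cardinal.mk_complex]; exact Cardinal.aleph0_lt_continuum
  have fi : @FaithfulSMul R ℂ i.toAlgebra.toSMul := by
    let := i.toAlgebra
    exact (faithfulSMul_iff_algebraMap_injective R ℂ).2 hi
  have fj : @FaithfulSMul R ℂ j.toAlgebra.toSMul := by
    let := j.toAlgebra
    exact (faithfulSMul_iff_algebraMap_injective R ℂ).2 hj
  exact @exists_ringEquiv_comp_algebraMap R ℂ ℂ _ _ _ _ i.toAlgebra j.toAlgebra _ _ fi fj hR hC rfl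

/-- A complex number fixed by all automorphisms of `ℂ` is rational. -/
lemma rational_of_fixed (z : ℂ) (hz : ∀ σ : ℂ ≃+* ℂ, σ z = z) : ∃ q : ℚ, z = (q : ℂ) := by
  by_cases hal : IsAlgebraic ℚ z
  · by_contra hcon
    have hnot : z ∉ (⊥ : Subalgebra ℚ ℂ) := by
      rintro ⟨q, hq⟩
      exact hcon ⟨q, by simpa using hq.symm⟩
    obtain ⟨y, hne, hconj⟩ := (notMem_iff_exists_ne_and_isConjRoot
      (minpoly.irreducible hal.isIntegral).separable (IsAlgClosed.splits _)).1 hnot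
    have := Fact.mk (minpoly.irreducible hal.isIntegral)
    have hev : (Polynomial.eval₂ (algebraMap ℚ ℂ) y (minpoly ℚ z)) = 0 := by
      rw [hconj]; exact minpoly.aeval ℚ y
    have hev0 : (Polynomial.eval₂ (algebraMap ℚ ℂ) z (minpoly ℚ z)) = 0 := minpoly.aeval ℚ z
    obtain ⟨σ, hσ⟩ := exists_ringEquiv_comp_eq (R := AdjoinRoot (minpoly ℚ z))
      (by
        refine (Cardinal.mk_le_of_surjective AdjoinRoot.mk_surjective).trans ?_
        simp)
      (AdjoinRoot.lift (algebraMap ℚ ℂ) z hev0)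
      (AdjoinRoot.lift (algebraMap ℚ ℂ) y hev) (RingHom.injective _) (RingHom.injective _)
    have := hσ (AdjoinRoot.root _)
    rw [AdjoinRoot.lift_root, AdjoinRoot.lift_root, hz] at this
    exact hne this
  · exfalso
    have hal1 : Transcendental ℚ (z + 1) := by
      intro h
      apply hal
      have := h.sub (isAlgebraic_one (R := ℚ) (A := ℂ))
      simpa using this
    obtain ⟨σ, hσ⟩ := exists_ringEquiv_comp_eq (R := Polynomial ℚ)
      (by simp)
      (Polynomial.aeval z).toRingHom (Polynomial.aeval (z + 1)).toRingHom
      (transcendental_iff_injective.1 hal) (transcendental_iff_injective.1 hal1)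
    have := hσ Polynomial.X
    simp [hz] at this

end

/-! ### Functions given by a convergent `q`-series -/

section

open UpperHalfPlane hiding I
open scoped Manifold Topology MatrixGroups
open Function Filter

/-- `HasQ F P`: the function `F` on the upper half plane is given everywhere by the convergent
`q`-series `P`, where `q = exp (2πiτ)`. -/
def HasQ (F : ℍ → ℂ) (P : PowerSeries ℂ) : Prop :=
  ∀ τ : ℍ, HasSum (fun m : ℕ => P.coeff m * Periodic.qParam 1 τ ^ m) (F τ)

namespace HasQ
variable {F G : ℍ → ℂ} {P Q : PowerSeries ℂ}

lemma congr (h : HasQ F P) (hFG : F = G) (hPQ : P = Q) : HasQ G Q := hFG ▸ hPQ ▸ h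

lemma fun_unique (h : HasQ F P) (h' : HasQ G P) : F = G :=
  funext fun τ => (h τ).unique (h' τ)

lemma add (h : HasQ F P) (h' : HasQ G Q) : HasQ (F + G) (P + Q) := fun τ => by
  simpa [add_mul] using (h τ).add (h' τ)

lemma sub (h : HasQ F P) (h' : HasQ G Q) : HasQ (F - G) (P - Q) := fun τ => by
  simpa [sub_mul] using (h τ).sub (h' τ)

lemma smul (a : ℂ) (h : HasQ F P) : HasQ (a • F) (a • P) := fun τ => by
  simpa [mul_assoc] using (h τ).mul_left a

lemma const (a : ℂ) : HasQ (fun _ => a) (PowerSeries.C a) := fun τ => by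
  convert! hasSum_ite_eq (0 : ℕ) a using 2 with m
  rw [PowerSeries.coeff_C]
  split_ifs with h <;> simp [h]

lemma zero : HasQ 0 0 := (const 0).congr rfl (map_zero _)
lemma one : HasQ 1 1 := (const 1).congr rfl (map_one _)

lemma mul (h : HasQ F P) (h' : HasQ G Q) : HasQ (F * G) (P * Q) := fun τ => by
  have s1 := (h τ).summable.norm
  have s2 := (h' τ).summable.norm
  have key := tsum_mul_tsum_eq_tsum_sum_antidiagonal_of_summable_norm s1 s2
  have s3 := (summable_norm_sum_mul_antidiagonal_of_summable_norm s1 s2).of_norm.hasSum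
  rw [← key, (h τ).tsum_eq, (h' τ).tsum_eq] at s3
  convert! s3 using 2 with m
  rw [PowerSeries.coeff_mul, Finset.sum_mul]
  refine Finset.sum_congr rfl fun x hx => ?_
  rw [← Finset.HasAntidiagonal.mem_antidiagonal.1 hx]
  ring

lemma pow (h : HasQ F P) (n : ℕ) : HasQ (F ^ n) (P ^ n) := by
  induction n with
  | zero => simpa using one
  | succ n ih => simpa [pow_succ] using ih.mul h

lemma sum {ι : Type*} (s : Finset ι) {F : ι → ℍ → ℂ} {P : ι → PowerSeries ℂ}
    (h : ∀ i ∈ s, HasQ (F i) (P i)) : HasQ (∑ i ∈ s, F i) (∑ i ∈ s, P i) := by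
  classical
  induction s using Finset.induction_on with
  | empty => simpa using zero
  | insert a s ha ih =>
    rw [Finset.sum_insert ha, Finset.sum_insert ha]
    exact (h a (by simp)).add (ih fun i hi => h i (by simp [hi]))

lemma bdd (h : HasQ F P) : IsBoundedAtImInfty F :=
  isBoundedAtImInfty_of_hasSum_qExpansion (h := 1) one_pos h

lemma periodic (h : HasQ F P) : Periodic (F ∘ ofComplex) 1 := by
  intro w
  by_cases hw : 0 < w.im
  · have h1 : 0 < (w + 1).im := by simpa using hw
    simp only [comp_apply, ofComplex_apply_of_im_pos h1, ofComplex_apply_of_im_pos hw]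
    have hq : Periodic.qParam 1 (w + 1) = Periodic.qParam 1 w := by
      simp [Periodic.qParam, mul_add, Complex.exp_add]
    have h2 := h ⟨w + 1, h1⟩
    have h3 := h ⟨w, hw⟩
    simp only [hq] at h2
    exact h2.unique h3
  · have h1 : (w + 1).im ≤ 0 := by simpa using hw
    simp [ofComplex_apply_of_im_nonpos h1, ofComplex_apply_of_im_nonpos (not_lt.1 hw)]

lemma mdiff (h : HasQ F P) : MDiff F := by
  rw [UpperHalfPlane.mdifferentiable_iff]
  set p : FormalMultilinearSeries ℂ ℂ ℂ := .ofScalars ℂ (fun m => P.coeff m) with hp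
  have hr : 1 ≤ p.radius := by
    refine ENNReal.le_of_forall_nnreal_lt fun r hr => ?_
    rw [← ENNReal.coe_one, ENNReal.coe_lt_coe] at hr
    rcases eq_or_ne r 0 with rfl | hr0
    · simp
    have hq0 : ((r : ℝ) : ℂ) ≠ 0 := by simpa using hr0
    have him := Periodic.im_invQParam_pos_of_norm_lt_one (h := 1) one_pos (q := ((r : ℝ) : ℂ))
      (by simpa using hr) hq0
    have := (h ⟨_, him⟩).summable.norm
    simp only [Periodic.qParam_right_inv one_ne_zero hq0] at this
    apply p.le_radius_of_summable
    convert! this using 2 with m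
    simp [hp]
  have hpos : 0 < p.radius := lt_of_lt_of_le one_pos hr
  have hsum := p.hasFPowerSeriesOnBall hpos
  have hEq : ∀ z : ℂ, 0 < z.im → (F ∘ ofComplex) z = p.sum (Periodic.qParam 1 z) := by
    intro z hz
    rw [comp_apply, ofComplex_apply_of_im_pos hz]
    refine (h ⟨z, hz⟩).unique ?_
    have hm : Periodic.qParam 1 z ∈ Metric.eball (0 : ℂ) p.radius := by
      rw [Metric.mem_eball, edist_zero_right]
      refine lt_of_lt_of_le ?_ hr
      have := Periodic.norm_qParam_lt_one (h := 1) one_pos (⟨z, hz⟩ : ℍ).im_pos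
      rw [← ofReal_norm]
      exact ENNReal.ofReal_lt_one.2 this
    have := p.hasSum hm
    convert! this using 2 with m
    simp [hp, mul_comm]
  refine DifferentiableOn.congr (f := fun z => p.sum (Periodic.qParam 1 z)) ?_
    (fun z hz => hEq z hz)
  refine DifferentiableOn.comp (t := Metric.eball (0 : ℂ) p.radius) hsum.differentiableOn
    ?_ ?_
  · intro z _
    exact (Periodic.differentiable_qParam z).differentiableWithinAt
  · intro z hz
    rw [Metric.mem_eball, edist_zero_right]
    refine lt_of_lt_of_le ?_ hr
    have := Periodic.norm_qParam_lt_one (h := 1) one_pos (⟨z, hz⟩ : ℍ).im_pos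
    rw [← ofReal_norm]
    exact ENNReal.ofReal_lt_one.2 this

lemma unique (h : HasQ F P) (h' : HasQ F Q) : P = Q := by
  have hper : Periodic (F ∘ ofComplex) (1 : ℝ) := by simpa using h.periodic
  have han := analyticAt_cuspFunction_zero one_pos hper h.mdiff h.bdd
  have h1 := (hasFPowerSeriesOnBall_cuspFunction one_pos han
    (c := fun m => P.coeff m) (fun τ => h τ)).hasFPowerSeriesAt
  have h2 := (hasFPowerSeriesOnBall_cuspFunction one_pos han
    (c := fun m => Q.coeff m) (fun τ => h' τ)).hasFPowerSeriesAt
  ext m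
  simpa using congr_arg (FormalMultilinearSeries.coeff · m) (h1.eq_formalMultilinearSeries h2)

end HasQ

lemma periodic_of_vadd {F : ℍ → ℂ} (h : ∀ τ, F ((1 : ℝ) +ᵥ τ) = F τ) :
    Periodic (F ∘ ofComplex) 1 := by
  intro w
  by_cases hw : 0 < w.im
  · have h1 : 0 < (w + 1).im := by simpa using hw
    simp only [comp_apply, ofComplex_apply_of_im_pos h1, ofComplex_apply_of_im_pos hw]
    convert! h ⟨w, hw⟩ using 2
    ext
    simp [add_comm]
  · have h1 : (w + 1).im ≤ 0 := by simpa using hw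
    simp [ofComplex_apply_of_im_nonpos h1, ofComplex_apply_of_im_nonpos (not_lt.1 hw)]

lemma exists_hasQ {F : ℍ → ℂ} (hd : MDiff F) (hb : IsBoundedAtImInfty F)
    (h : ∀ τ, F ((1 : ℝ) +ᵥ τ) = F τ) : HasQ F (qExpansion 1 F) := fun τ => by
  simpa using UpperHalfPlane.hasSum_qExpansion (h := 1) one_pos
    (by simpa using periodic_of_vadd h) hd hb τ

lemma hasQ_modularForm {k : ℤ} (g : ModularForm 𝒮ℒ k) : HasQ g (qExpansion 1 g) := fun τ => by
  simpa using ModularForm.hasSum_qExpansion (h := 1) g one_pos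
    (by simp) τ

end

/-! ### Forms of level one -/

section

open UpperHalfPlane hiding I
open scoped Manifold Topology MatrixGroups ModularForm
open Function Filter

/-- `F` is a holomorphic modular form of weight `k` for `SL(2, ℤ)`. -/
structure LForm (k : ℤ) (F : ℍ → ℂ) : Prop where
  mdiff : MDiff F
  slash : ∀ γ : SL(2, ℤ), F ∣[k] γ = F
  bdd : IsBoundedAtImInfty F

lemma lform_of_modularForm {k : ℤ} (g : ModularForm 𝒮ℒ k) : LForm k g where
  mdiff := g.holo'
  slash γ := by
    rw [ModularForm.SL_slash]
    exact g.slash_action_eq' _ ⟨γ, rfl⟩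
  bdd := ModularFormClass.bdd_at_infty g

namespace LForm
variable {k : ℤ} {F : ℍ → ℂ}

lemma exists_modularForm (h : LForm k F) : ∃ g : ModularForm 𝒮ℒ k, ⇑g = F :=
  ⟨{ toFun := F
     slash_action_eq' := by
      rintro _ ⟨γ, rfl⟩
      have := h.slash γ
      rwa [ModularForm.SL_slash] at this
     holo' := h.mdiff
     bdd_at_cusps' := by
      intro c hc
      rw [OnePoint.isBoundedAt_iff_forall_SL2Z hc]
      intro γ _
      rw [h.slash]
      exact h.bdd }, rfl⟩

lemma vadd (h : LForm k F) (τ : ℍ) : F ((1 : ℝ) +ᵥ τ) = F τ := by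
  have := congr_fun (h.slash ModularGroup.T) τ
  rw [ModularForm.SL_slash_apply, UpperHalfPlane.modular_T_smul] at this
  have hd : denom (ModularGroup.T : SL(2, ℤ)) τ = 1 := by
    rw [ModularGroup.denom_apply]; simp [ModularGroup.T]
  rwa [hd, one_zpow, mul_one] at this

lemma hasQ (h : LForm k F) : HasQ F (qExpansion 1 F) := exists_hasQ h.mdiff h.bdd h.vadd

lemma mul {k' : ℤ} {G : ℍ → ℂ} (h : LForm k F) (h' : LForm k' G) : LForm (k + k') (F * G) where
  mdiff := h.mdiff.mul h'.mdiff
  slash γ := by rw [ModularForm.mul_slash_SL2, h.slash, h'.slash]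
  bdd := h.bdd.mul h'.bdd

lemma smul (a : ℂ) (h : LForm k F) : LForm k (a • F) where
  mdiff := h.mdiff.const_smul a
  slash γ := by rw [ModularForm.SL_smul_slash, h.slash]
  bdd := h.bdd.smul a

lemma add {G : ℍ → ℂ} (h : LForm k F) (h' : LForm k G) : LForm k (F + G) where
  mdiff := h.mdiff.add h'.mdiff
  slash γ := by rw [SlashAction.add_slash, h.slash, h'.slash]
  bdd := h.bdd.add h'.bdd

lemma sub {G : ℍ → ℂ} (h : LForm k F) (h' : LForm k G) : LForm k (F - G) := by
  have := h.add (h'.smul (-1))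
  simpa [sub_eq_add_neg] using this

end LForm

lemma E_map (σ : ℂ →+* ℂ) {k : ℕ} (hk : 3 ≤ k) (hk2 : Even k) :
    (qExpansion 1 (ModularForm.E hk)).map σ = qExpansion 1 (ModularForm.E hk) := by
  ext m
  rw [PowerSeries.coeff_map, EisensteinSeries.E_qExpansion_coeff hk hk2]
  split_ifs
  · simp
  · simp [map_ofNat σ 2]

lemma discriminant_lform : LForm 12 ModularForm.discriminant := by
  have h4 := lform_of_modularForm ModularForm.E₄
  have h6 := lform_of_modularForm ModularForm.E₆
  have := ((h4.mul (h4.mul h4)).sub (h6.mul h6)).smul (1728⁻¹ : ℂ)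
  convert! this using 1
  ext τ
  rw [ModularForm.discriminant_eq_E₄_cube_sub_E₆_sq]
  simp [div_eq_inv_mul]
  ring

/-- The `q`-series of the discriminant is `q + O(q²)`, with coefficients fixed by every field
endomorphism of `ℂ`. -/
lemma exists_discriminant_hasQ : ∃ P : PowerSeries ℂ, HasQ ModularForm.discriminant P ∧
    (∀ σ : ℂ →+* ℂ, P.map σ = P) ∧ P.coeff 0 = 0 ∧ P.coeff 1 = 1 := by
  have h4 := hasQ_modularForm ModularForm.E₄
  have h6 := hasQ_modularForm ModularForm.E₆
  have hΔ := ((h4.pow 3).sub (h6.pow 2)).smul (1728⁻¹ : ℂ)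
  have hEq : (1728⁻¹ : ℂ) • ((⇑ModularForm.E₄) ^ 3 - (⇑ModularForm.E₆) ^ 2) =
      ModularForm.discriminant := by
    ext τ
    rw [ModularForm.discriminant_eq_E₄_cube_sub_E₆_sq]
    simp [div_eq_inv_mul]
  rw [hEq] at hΔ
  have hL := discriminant_lform.hasQ
  refine ⟨_, hΔ, fun σ => ?_, ?_, ?_⟩
  · rw [PowerSeries.smul_eq_C_mul, map_mul, map_sub, map_pow, map_pow, E_map σ _ (by decide),
      E_map σ _ (by decide), PowerSeries.map_C, map_inv₀, map_ofNat σ 1728]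
  · simp only [map_smul, map_sub]
    rw [PowerSeries.coeff_zero_eq_constantCoeff, map_pow, map_pow,
      ← PowerSeries.coeff_zero_eq_constantCoeff,
      EisensteinSeries.E_qExpansion_coeff_zero _ (by decide),
      EisensteinSeries.E_qExpansion_coeff_zero _ (by decide)]
    simp
  · rw [hΔ.unique hL]
    exact ModularForm.discriminant_qExpansion_coeff_one

/-- Field endomorphisms of `ℂ` act on level one modular forms through their `q`-expansions. -/
theorem LForm.galois (σ : ℂ →+* ℂ) (k : ℤ) (F : ℍ → ℂ) (hF : LForm k F) :
    ∃ F' P, LForm k F' ∧ HasQ F P ∧ HasQ F' (P.map σ) := by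
  have hzero : F = 0 → ∃ F' P, LForm k F' ∧ HasQ F P ∧ HasQ F' (P.map σ) := by
    intro h0
    exact ⟨F, 0, hF, h0 ▸ HasQ.zero, by simpa [h0] using HasQ.zero⟩
  by_cases hneg : k < 0
  · obtain ⟨g, rfl⟩ := hF.exists_modularForm
    exact hzero (ModularFormClass.levelOne_neg_weight_eq_zero hneg g)
  obtain ⟨n, rfl⟩ := Int.eq_ofNat_of_zero_le (not_lt.1 hneg)
  clear hneg
  induction n using Nat.strong_induction_on generalizing F with
  | _ n ih =>
  obtain ⟨g, rfl⟩ := hF.exists_modularForm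
  rcases Nat.even_or_odd n with hev | hodd
  swap
  · refine hzero ?_
    rw [ModularForm.levelOne_odd_weight_eq_zero (by exact_mod_cast hodd) g]
    rfl
  by_cases h0 : n = 0
  · subst h0
    obtain ⟨a, ha⟩ := ModularFormClass.levelOne_weight_zero_const g
    obtain ⟨b, hb⟩ := (lform_of_modularForm (ModularForm.const (Γ := 𝒮ℒ) (σ a))).exists_modularForm
    refine ⟨fun _ => σ a, PowerSeries.C a, ?_, ha ▸ HasQ.const a, ?_⟩
    · exact lform_of_modularForm (ModularForm.const (Γ := 𝒮ℒ) (σ a))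
    · simpa using HasQ.const (σ a)
  by_cases h2 : n = 2
  · subst h2
    refine hzero ?_
    rw [rank_zero_iff_forall_zero.1 ModularForm.levelOne_weight_two_rank_zero g]
    rfl
  have hn : 3 ≤ n := by obtain ⟨r, rfl⟩ := hev; omega
  obtain ⟨PΔ, hΔ, hΔσ, -, -⟩ := exists_discriminant_hasQ
  have hE := hasQ_modularForm (ModularForm.E hn)
  have hg := hasQ_modularForm g
  set a := (qExpansion 1 g).coeff 0 with ha
  -- subtracting a multiple of the Eisenstein series gives a cusp form, divisible by `Δ`
  have hc : LForm n (⇑g - a • ⇑(ModularForm.E hn)) := hF.sub ((lform_of_modularForm _).smul a)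
  have hcQ := hg.sub (hE.smul a)
  obtain ⟨c, hcc⟩ := hc.exists_modularForm
  have hc0 : (qExpansion 1 c).coeff 0 = 0 := by
    rw [← hcc] at hcQ
    rw [← hcQ.unique (hasQ_modularForm c)]
    simp only [map_sub, map_smul, EisensteinSeries.E_qExpansion_coeff_zero hn hev]
    simp [ha]
  set d := CuspForm.discriminantEquiv (c.toCuspForm hc0) with hd
  have hcd : ⇑c = ModularForm.discriminant * ⇑d :=
    (ModularForm.discriminant_mul_discriminantEquiv (c.toCuspForm hc0)).symm
  obtain ⟨d', Pd, hd'L, hdQ, hd'Q⟩ : ∃ F' P, LForm ((n : ℤ) - 12) F' ∧ HasQ d P ∧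
      HasQ F' (P.map σ) := by
    by_cases hlt : n < 12
    · have : ⇑d = 0 := ModularFormClass.levelOne_neg_weight_eq_zero (by omega) d
      refine ⟨d, 0, lform_of_modularForm d, this ▸ HasQ.zero, ?_⟩
      rw [this]; simpa using HasQ.zero
    · have hcast : ((n - 12 : ℕ) : ℤ) = (n : ℤ) - 12 := by omega
      have hdL : LForm ((n - 12 : ℕ) : ℤ) ⇑d := by rw [hcast]; exact lform_of_modularForm d
      obtain ⟨F', P, h1, h2, h3⟩ := ih (n - 12) (by omega) _ hdL
        (fun h => ⟨d, 0, hdL, h ▸ HasQ.zero, by simpa [h] using HasQ.zero⟩)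
      exact ⟨F', P, hcast ▸ h1, h2, h3⟩
  refine ⟨ModularForm.discriminant * d' + σ a • ⇑(ModularForm.E hn),
    PΔ * Pd + a • qExpansion 1 (ModularForm.E hn), ?_, ?_, ?_⟩
  · have := discriminant_lform.mul hd'L
    rw [show (12 : ℤ) + ((n : ℤ) - 12) = n by ring] at this
    exact this.add ((lform_of_modularForm _).smul _)
  · have := (hΔ.mul hdQ).add (hE.smul a)
    rwa [← hcd, hcc, sub_add_cancel] at this
  · have := (hΔ.mul hd'Q).add (hE.smul (σ a))
    convert! this using 1
    rw [map_add, map_mul, hΔσ, PowerSeries.smul_eq_C_mul, map_mul, E_map σ hn hev,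
      PowerSeries.map_C, ← PowerSeries.smul_eq_C_mul]

end

/-! ### Eisenstein series attached to functions of the lower row -/

section

open UpperHalfPlane hiding I
open scoped Manifold Topology MatrixGroups ModularForm
open Function Filter EisensteinSeries Matrix

lemma hasSum_divisors (ψ : ℕ → ℂ) (hψ : ∀ c, ‖ψ c‖ ≤ 1) (k : ℕ) {q : ℂ} (hq : ‖q‖ < 1) :
    HasSum (fun m : ℕ => (∑ x ∈ m.divisorsAntidiagonal, ψ x.1 * (x.2 : ℂ) ^ k) * q ^ m)
      (∑' (c : ℕ+) (d : ℕ+), ψ c * ((d : ℂ) ^ k * q ^ (c * d : ℕ))) := by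
  have hs : Summable fun c : ℕ+ × ℕ+ => ψ c.1 * ((c.2 : ℂ) ^ k * q ^ (c.1 * c.2 : ℕ)) := by
    refine Summable.of_norm_bounded (summable_prod_mul_pow k hq).norm fun c => ?_
    rw [norm_mul]
    exact mul_le_of_le_one_left (norm_nonneg _) (hψ _)
  have h1 := hs.hasSum
  rw [hs.tsum_prod, ← sigmaAntidiagonalEquivProd.hasSum_iff] at h1
  have h2 := h1.sigma (g := fun m : ℕ+ =>
    (∑ x ∈ (m : ℕ).divisorsAntidiagonal, ψ x.1 * (x.2 : ℂ) ^ k) * q ^ (m : ℕ)) (fun m => by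
      convert! hasSum_fintype _ using 1
      rw [Finset.sum_mul, ← Finset.sum_coe_sort]
      refine Finset.sum_congr rfl fun x _ => ?_
      have := (Nat.mem_divisorsAntidiagonal.1 x.2).1
      simp [sigmaAntidiagonalEquivProd, divisorsAntidiagonalFactors, this, mul_assoc])
  exact (PNat.coe_injective.hasSum_iff (fun m hm => by
    have : m = 0 := by
      by_contra h
      exact hm ⟨⟨m, Nat.pos_of_ne_zero h⟩, rfl⟩
    simp [this])).1 h2

/-- The Eisenstein-type series `∑ φ(v) (v₀ τ + v₁)^{-k}` over all integer vectors. -/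
def EE (φ : (Fin 2 → ℤ) → ℂ) (k : ℤ) (τ : ℍ) : ℂ := ∑' v, φ v * eisSummand k v τ

lemma EE_summable_norm {φ : (Fin 2 → ℤ) → ℂ} (hφ : ∀ v, ‖φ v‖ ≤ 1) {k : ℤ} (hk : 3 ≤ k) (τ : ℍ) :
    Summable fun v => ‖φ v * eisSummand k v τ‖ :=
  (summable_norm_eisSummand hk τ).of_nonneg_of_le (fun _ => norm_nonneg _) fun v => by
    rw [norm_mul]
    exact mul_le_of_le_one_left (norm_nonneg _) (hφ _)

/-- Right multiplication by `γ`, as a permutation of the integer row vectors. -/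
def vecMulEquiv (γ : SL(2, ℤ)) : (Fin 2 → ℤ) ≃ (Fin 2 → ℤ) where
  toFun v := v ᵥ* (γ : Matrix (Fin 2) (Fin 2) ℤ)
  invFun v := v ᵥ* ((γ⁻¹ : SL(2, ℤ)) : Matrix (Fin 2) (Fin 2) ℤ)
  left_inv v := by
    change v ᵥ* (γ : Matrix (Fin 2) (Fin 2) ℤ) ᵥ*
      ((γ⁻¹ : SL(2, ℤ)) : Matrix (Fin 2) (Fin 2) ℤ) = v
    rw [vecMul_vecMul]
    exact (congrArg (v ᵥ* ·) (congrArg Subtype.val (mul_inv_cancel γ))).trans (vecMul_one v)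
  right_inv v := by
    change v ᵥ* ((γ⁻¹ : SL(2, ℤ)) : Matrix (Fin 2) (Fin 2) ℤ) ᵥ*
      (γ : Matrix (Fin 2) (Fin 2) ℤ) = v
    rw [vecMul_vecMul]
    exact (congrArg (v ᵥ* ·) (congrArg Subtype.val (inv_mul_cancel γ))).trans (vecMul_one v)

lemma EE_slash (φ : (Fin 2 → ℤ) → ℂ) (k : ℤ) (γ : SL(2, ℤ)) :
    (EE φ k) ∣[k] γ = EE (fun v => φ (v ᵥ* ((γ⁻¹ : SL(2, ℤ)) : Matrix (Fin 2) (Fin 2) ℤ))) k := by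
  ext τ
  rw [ModularForm.SL_slash_apply, EE, EE, ← tsum_mul_right]
  refine Eq.trans (tsum_congr fun v => ?_) ((vecMulEquiv γ).tsum_eq (fun v =>
    φ (v ᵥ* ((γ⁻¹ : SL(2, ℤ)) : Matrix (Fin 2) (Fin 2) ℤ)) * eisSummand k v τ))
  have hv : (vecMulEquiv γ v) ᵥ* ((γ⁻¹ : SL(2, ℤ)) : Matrix (Fin 2) (Fin 2) ℤ) = v :=
    (vecMulEquiv γ).left_inv v
  rw [hv, eisSummand_SL2_apply, mul_assoc]
  congr 1
  rw [mul_right_comm, ← zpow_add₀ (denom_ne_zero _ _), add_neg_cancel, zpow_zero, one_mul]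
  rfl

lemma eisSummand_norm_sum_bound {k : ℤ} (hk : 3 ≤ k) :
    ∃ C : ℝ, 0 ≤ C ∧ ∀ τ : ℍ, 2 ≤ τ.im → ∑' v, ‖eisSummand k v τ‖ ≤ C := by
  have hk' : (2 : ℝ) < k := by norm_cast
  refine ⟨∑' (x : Fin 2 → ℤ), r ⟨⟨(1 : ℕ), 2⟩, Nat.ofNat_pos⟩ ^ (-k) * ‖x‖ ^ (-k),
    tsum_nonneg fun x => mul_nonneg (zpow_nonneg (r_pos _).le _) (by positivity), ?_⟩
  intro z hz
  obtain ⟨n, hn⟩ := (ModularGroup_T_zpow_mem_verticalStrip z (N := 1) one_pos)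
  set A : SL(2, ℤ) := ModularGroup.T ^ (((1 : ℕ) : ℤ) * n) with hA
  have hinv : ∑' v, ‖eisSummand k v z‖ = ∑' v, ‖eisSummand k v (A • z)‖ := by
    refine (Eq.trans (tsum_congr fun v => ?_)
      ((vecMulEquiv A).tsum_eq (fun v => ‖eisSummand k v z‖))).symm
    rw [eisSummand_SL2_apply]
    have : denom A z = 1 := by
      rw [ModularGroup.denom_apply, hA, ModularGroup.coe_T_zpow]; simp
    have h2 : denom (Matrix.SpecialLinearGroup.toGL
      ((Matrix.SpecialLinearGroup.map (Int.castRingHom ℝ)) A)) ↑z = 1 := this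
    rw [h2, _root_.one_zpow, one_mul]
    rfl
  rw [hinv]
  apply (summable_norm_eisSummand hk _).tsum_le_tsum _
  · exact_mod_cast (summable_one_div_norm_rpow hk').mul_left <|
      r ⟨⟨(1 : ℕ), 2⟩, Nat.ofNat_pos⟩ ^ (-k)
  · intro x
    simp_rw [eisSummand, norm_zpow]
    exact_mod_cast
      summand_bound_of_mem_verticalStrip (lt_trans two_pos hk').le x two_pos
      (verticalStrip_anti_right _ hz hn)

lemma EE_norm_le {φ : (Fin 2 → ℤ) → ℂ} (hφ : ∀ v, ‖φ v‖ ≤ 1) {k : ℤ} (hk : 3 ≤ k) (τ : ℍ) :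
    ‖EE φ k τ‖ ≤ ∑' v, ‖eisSummand k v τ‖ := by
  refine (norm_tsum_le_tsum_norm (EE_summable_norm hφ hk τ)).trans ?_
  refine (EE_summable_norm hφ hk τ).tsum_le_tsum (fun v => ?_) (summable_norm_eisSummand hk τ)
  rw [norm_mul]
  exact mul_le_of_le_one_left (norm_nonneg _) (hφ _)

lemma EE_bdd {φ : (Fin 2 → ℤ) → ℂ} (hφ : ∀ v, ‖φ v‖ ≤ 1) {k : ℤ} (hk : 3 ≤ k) :
    IsBoundedAtImInfty (EE φ k) := by
  obtain ⟨C, -, hC⟩ := eisSummand_norm_sum_bound hk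
  rw [UpperHalfPlane.isBoundedAtImInfty_iff]
  exact ⟨C, 2, fun τ hτ => (EE_norm_le hφ hk τ).trans (hC τ hτ)⟩

/-- The constant relating `EE` to the `q`-series with integral coefficients. -/
def eisConst (k : ℕ) : ℂ := 2 * ((-2 * Real.pi * Complex.I) ^ k / (k - 1).factorial)

lemma eisConst_ne_zero (k : ℕ) : eisConst k ≠ 0 := by
  unfold eisConst
  have := Real.pi_ne_zero
  have h2 := Nat.factorial_ne_zero (k - 1)
  simp [this, h2]

/-- The `q`-expansion of the Eisenstein series attached to `ψ`, a function of the first entry. -/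
lemma EE_hasSum (ψ : ℤ → ℂ) (hψ : ∀ c, ‖ψ c‖ ≤ 1) (h0 : ψ 0 = 0) {k : ℕ} (hk : 3 ≤ k)
    (hpar : ∀ c, ψ (-c) = (-1) ^ k * ψ c) (τ : ℍ) :
    HasSum (fun m : ℕ => (∑ x ∈ m.divisorsAntidiagonal, ψ x.1 * (x.2 : ℂ) ^ (k - 1)) *
      Periodic.qParam 1 τ ^ m) ((eisConst k)⁻¹ * EE (fun v => ψ (v 0)) k τ) := by
  have hq : ‖Periodic.qParam 1 (τ : ℂ)‖ < 1 := Periodic.norm_qParam_lt_one one_pos τ.im_pos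
  have hqe : Periodic.qParam 1 (τ : ℂ) = Complex.exp (2 * Real.pi * Complex.I * τ) := by
    simp [Periodic.qParam]
  convert! hasSum_divisors (fun c => ψ c) (fun c => hψ _) (k - 1) hq using 1
  rw [inv_mul_eq_iff_eq_mul₀ (eisConst_ne_zero k), hqe]
  have hs : Summable fun x : ℤ × ℤ => ψ x.1 * eisSummand k ![x.1, x.2] τ := by
    refine Summable.of_norm_bounded (summable_prod_eisSummand hk τ).norm fun c => ?_
    rw [norm_mul]
    exact mul_le_of_le_one_left (norm_nonneg _) (hψ _)
  have hprod := hs.prod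
  simp only [tsum_mul_left] at hprod
  rw [EE, ← (finTwoArrowEquiv ℤ).symm.tsum_eq, finTwoArrowEquiv_symm_apply]
  have hs' : Summable fun x : ℤ × ℤ => ψ (![x.1, x.2] 0) * eisSummand k ![x.1, x.2] τ := by
    simpa using hs
  rw [Summable.tsum_prod hs', tsum_int_eq_zero_add_two_mul_tsum_pnat (fun n => ?h₁)
      (by simpa [tsum_mul_left] using hprod)]
  case h₁ =>
    nth_rewrite 1 [← tsum_comp_neg]
    refine tsum_congr fun y => ?_
    simp only [cons_val_zero, hpar, eisSummand, cons_val_one, Int.cast_neg]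
    rw [show -(n : ℂ) * τ + -(y : ℂ) = (-1) * (n * τ + y) by ring, mul_zpow, _root_.zpow_neg,
      _root_.zpow_neg, zpow_natCast]
    have : ((-1 : ℂ) ^ k) * ((-1 : ℂ) ^ k)⁻¹ = 1 := mul_inv_cancel₀ (by simp)
    linear_combination (ψ n * ((n * τ + y : ℂ) ^ (k : ℤ))⁻¹) * this
  have H (b : ℕ+) := qExpansion_identity_pnat (k := k - 1) (by grind) ⟨b * τ, by simpa using τ.2⟩
  simp_rw [show k - 1 + 1 = k by grind, one_div] at H
  rw [nsmul_eq_mul, eisConst, mul_assoc]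
  simp only [cons_val_zero, h0, zero_mul, tsum_zero, zero_add, tsum_mul_left]
  rw [Nat.cast_ofNat]
  congr 1
  rw [← tsum_mul_left]
  refine tsum_congr fun b => ?_
  have hb : ∑' (x : ℤ), eisSummand (k : ℤ) ![((b : ℕ) : ℤ), x] τ =
      ∑' n : ℤ, (((b : ℂ) * τ + n) ^ k)⁻¹ := by
    refine tsum_congr fun x => ?_
    simp [eisSummand]
  have H' := H b
  rw [hb, H', mul_left_comm]
  congr 2
  refine tsum_congr fun d => ?_
  rw [← Complex.exp_nat_mul, ← Complex.exp_nat_mul]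
  push_cast
  ring_nf

end

/-! ### The character -/

section

/-- The properties of `χ = χ_k^(n-2)` used below: an integer-valued quadratic Dirichlet character
modulo `D` of parity `(-1)^n`. -/
structure NiceChar (D n : ℕ) (χ : ℤ → ℂ) : Prop where
  mul : ∀ a b, χ (a * b) = χ a * χ b
  congr : ∀ a b, (D : ℤ) ∣ a - b → χ a = χ b
  one : χ 1 = 1
  zero : χ 0 = 0
  neg : ∀ a, χ (-a) = (-1) ^ n * χ a
  int : ∀ a, ∃ z : ℤ, χ a = z
  norm_le : ∀ a, ‖χ a‖ ≤ 1
  sq : ∀ a, IsCoprime a (D : ℤ) → χ a * χ a = 1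

lemma chiK_eq (D : ℕ) (hD4 : D % 4 = 3) (a : ℤ) : chiK D a = jacobiSym a D := by
  have hodd : oddRep D a % 2 = 1 := by
    unfold oddRep
    split_ifs with h
    · exact h
    · omega
  have hcong : ((oddRep D a : ℕ) : ℤ) % D = a % D := by
    have h0 : 0 ≤ a % (D : ℤ) := Int.emod_nonneg _ (by omega)
    unfold oddRep
    split_ifs with h
    · rw [Int.toNat_of_nonneg h0, Int.emod_emod_of_dvd _ dvd_rfl]
    · push_cast
      rw [Int.toNat_of_nonneg h0, Int.add_emod_right, Int.emod_emod_of_dvd _ dvd_rfl]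
  have h1 : jacobiSym (oddRep D a : ℕ) D = jacobiSym a D := by
    rw [jacobiSym.mod_left, hcong, ← jacobiSym.mod_left]
  rw [← h1, chiK, jacobiSym.neg _ (Nat.odd_iff.2 hodd)]
  rcases (by omega : oddRep D a % 4 = 1 ∨ oddRep D a % 4 = 3) with h | h
  · rw [ZMod.χ₄_nat_one_mod_four h, one_mul,
      jacobiSym.quadratic_reciprocity_one_mod_four' (Nat.odd_iff.2 (by omega)) h]
  · rw [ZMod.χ₄_nat_three_mod_four h, jacobiSym.quadratic_reciprocity_three_mod_four hD4 h]
    ring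

lemma niceChar_chiK (D : ℕ) (hD4 : D % 4 = 3) (n : ℕ) (hn : 3 ≤ n) :
    NiceChar D n (fun a => ((chiK D a : ℤ) : ℂ) ^ (n - 2)) := by
  simp only [chiK_eq D hD4]
  refine ⟨fun a b => ?_, fun a b h => ?_, ?_, ?_, fun a => ?_, fun a => ?_, fun a => ?_,
    fun a ha => ?_⟩
  · rw [jacobiSym.mul_left]; push_cast; rw [mul_pow]
  · rw [jacobiSym.mod_left a, jacobiSym.mod_left b,
      Int.emod_eq_emod_iff_emod_sub_eq_zero.2
      (Int.emod_eq_zero_of_dvd h)]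
  · simp [jacobiSym.one_left]
  · rw [jacobiSym.zero_left (by omega)]
    simp; omega
  · rw [jacobiSym.neg _ (Nat.odd_iff.2 (by omega)), ZMod.χ₄_nat_three_mod_four hD4]
    push_cast
    rw [mul_pow]
    obtain ⟨m, rfl⟩ := Nat.exists_eq_add_of_le hn
    rw [show 3 + m - 2 = m + 1 by omega]
    ring
  · exact ⟨jacobiSym a D ^ (n - 2), by push_cast; rfl⟩
  · rw [norm_pow]
    refine pow_le_one₀ (norm_nonneg _) ?_
    rcases jacobiSym.trichotomy a D with h | h | h <;> simp [h]
  · rw [← mul_pow]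
    have := jacobiSym.sq_one (a := a) (b := D) (Int.isCoprime_iff_gcd_eq_one.1 ha)
    rw [← Int.cast_mul, ← sq, this]
    simp

end

/-! ### The Eisenstein series `E` and `H` of level `Γ₀(D)` -/

section

open UpperHalfPlane hiding I
open scoped Manifold Topology MatrixGroups ModularForm
open Function Filter EisensteinSeries Matrix

/-- `F` is a holomorphic modular form of weight `k` and character `χ` for `Γ₀(D)`. -/
structure GForm (D : ℕ) (χ : ℤ → ℂ) (k : ℤ) (F : ℍ → ℂ) : Prop where
  mdiff : MDiff F
  slash : ∀ γ : SL(2, ℤ), (D : ℤ) ∣ γ 1 0 → F ∣[k] γ = χ (γ 1 1) • F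
  bdd : ∀ γ : SL(2, ℤ), IsBoundedAtImInfty (F ∣[k] γ)

/-- The normalised Eisenstein series attached to a function `ψ` of the first entry of `v`. -/
def eisQ (ψ : ℤ → ℂ) (k : ℕ) : ℍ → ℂ := (eisConst k)⁻¹ • EE (fun v => ψ (v 0)) k

/-- The `q`-expansion of `eisQ ψ k`. -/
def eisP (ψ : ℤ → ℂ) (k : ℕ) : PowerSeries ℂ :=
  PowerSeries.mk fun m => ∑ x ∈ m.divisorsAntidiagonal, ψ x.1 * (x.2 : ℂ) ^ (k - 1)

lemma eisQ_hasQ (ψ : ℤ → ℂ) (hψ : ∀ c, ‖ψ c‖ ≤ 1) (h0 : ψ 0 = 0) {k : ℕ} (hk : 3 ≤ k)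
    (hpar : ∀ c, ψ (-c) = (-1) ^ k * ψ c) : HasQ (eisQ ψ k) (eisP ψ k) := fun τ => by
  simpa [eisP, eisQ] using EE_hasSum ψ hψ h0 hk hpar τ

lemma eisP_map (ψ : ℤ → ℂ) (hint : ∀ a, ∃ z : ℤ, ψ a = z) (k : ℕ) (σ : ℂ →+* ℂ) :
    (eisP ψ k).map σ = eisP ψ k := by
  ext m
  simp only [eisP, PowerSeries.coeff_map, PowerSeries.coeff_mk, map_sum, map_mul, map_pow,
    map_natCast]
  refine Finset.sum_congr rfl fun x _ => ?_
  obtain ⟨z, hz⟩ := hint x.1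
  rw [hz, map_intCast]

lemma eisP_coeff_zero (ψ : ℤ → ℂ) (k : ℕ) : (eisP ψ k).coeff 0 = 0 := by
  simp [eisP]

lemma eisP_coeff_one (ψ : ℤ → ℂ) (h1 : ψ 1 = 1) (k : ℕ) : (eisP ψ k).coeff 1 = 1 := by
  simp [eisP, h1]

lemma vecMul_inv_zero (γ : SL(2, ℤ)) (v : Fin 2 → ℤ) :
    (v ᵥ* ((γ⁻¹ : SL(2, ℤ)) : Matrix (Fin 2) (Fin 2) ℤ)) 0 = v 0 * γ 1 1 - v 1 * γ 1 0 := by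
  rw [Matrix.SpecialLinearGroup.SL2_inv_expl]
  simp [Matrix.vecMul, dotProduct, Fin.sum_univ_two]
  ring

lemma eisQ_slash (ψ : ℤ → ℂ) (k : ℕ) (γ : SL(2, ℤ)) :
    (eisQ ψ k) ∣[(k : ℤ)] γ =
      (eisConst k)⁻¹ • EE (fun v => ψ (v 0 * γ 1 1 - v 1 * γ 1 0)) k := by
  rw [eisQ, ModularForm.SL_smul_slash, EE_slash]
  simp only [vecMul_inv_zero]

lemma eisQ_gform (D : ℕ) (ψ χ : ℤ → ℂ) (hψ : ∀ c, ‖ψ c‖ ≤ 1) (h0 : ψ 0 = 0) {k : ℕ} (hk : 3 ≤ k)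
    (hpar : ∀ c, ψ (-c) = (-1) ^ k * ψ c)
    (ht : ∀ γ : SL(2, ℤ), (D : ℤ) ∣ γ 1 0 → ∀ c d, ψ (c * γ 1 1 - d * γ 1 0) = χ (γ 1 1) * ψ c) :
    GForm D χ k (eisQ ψ k) where
  mdiff := (eisQ_hasQ ψ hψ h0 hk hpar).mdiff
  slash γ hγ := by
    rw [eisQ_slash]
    simp only [ht γ hγ]
    ext τ
    simp only [eisQ, EE, Pi.smul_apply, smul_eq_mul, mul_assoc, tsum_mul_left]
    ring
  bdd γ := by
    rw [eisQ_slash]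
    exact (EE_bdd (fun v => hψ _) (by exact_mod_cast hk)).const_smul_left _

/-- The Eisenstein series `∑ χ(c) (cτ + d)^{-n}`, suitably normalised, has character `χ` and
integral `q`-expansion. -/
theorem exists_E {D n : ℕ} {χ : ℤ → ℂ} (hχ : NiceChar D n χ) (hn : 3 ≤ n) :
    ∃ E P, GForm D χ n E ∧ HasQ E P ∧ (∀ σ : ℂ →+* ℂ, P.map σ = P) ∧ P ≠ 0 := by
  refine ⟨eisQ χ n, eisP χ n, eisQ_gform D χ χ hχ.norm_le hχ.zero hn hχ.neg ?_,
    eisQ_hasQ χ hχ.norm_le hχ.zero hn hχ.neg, eisP_map χ hχ.int n, fun h => ?_⟩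
  · intro γ hγ c d
    rw [mul_comm, ← hχ.mul]
    refine hχ.congr _ _ ?_
    obtain ⟨e, he⟩ := hγ
    exact ⟨-d * e, by rw [he]; ring⟩
  · have := eisP_coeff_one χ hχ.one n
    simp [h] at this

/-- For `v₀ ≠ 0` the summands of weight `k + 1` gain a factor `(Im τ)⁻¹` over weight `k`. -/
lemma eisSummand_succ_le (k : ℕ) (v : Fin 2 → ℤ) (hv : v 0 ≠ 0) (τ : ℍ) :
    ‖eisSummand (k + 1 : ℕ) v τ‖ ≤ τ.im⁻¹ * ‖eisSummand k v τ‖ := by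
  have him : τ.im ≤ ‖(v 0 : ℂ) * τ + v 1‖ := by
    refine le_trans ?_ (Complex.abs_im_le_norm _)
    have : ((v 0 : ℂ) * τ + v 1).im = v 0 * τ.im := by simp
    rw [this, abs_mul, abs_of_pos τ.im_pos]
    have : (1 : ℝ) ≤ |(v 0 : ℝ)| := by exact_mod_cast Int.one_le_abs hv
    nlinarith [τ.im_pos]
  simp only [eisSummand, _root_.zpow_neg, zpow_natCast, norm_inv, norm_pow, pow_succ, mul_inv]
  rw [mul_comm, norm_mul, norm_inv, norm_inv, norm_pow]
  refine mul_le_mul_of_nonneg_right (inv_anti₀ τ.im_pos him) ?_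
  positivity

/-- The Eisenstein series of weight `4` summed over the `(c, d)` with `D ∤ c`, suitably normalised.
The constant term of its conjugate by `γ` is a sum of the `d ^ (-4)` with `D ∤ d γ₁₀`, which is
empty exactly if `D ∣ γ₁₀`. -/
theorem exists_H (D : ℕ) :
    ∃ H P, GForm D 1 4 H ∧ HasQ H P ∧ (∀ σ : ℂ →+* ℂ, P.map σ = P) ∧
      P.coeff 0 = 0 ∧ (1 < D → P.coeff 1 = 1) ∧ ∀ γ : SL(2, ℤ), ¬ (D : ℤ) ∣ γ 1 0 →
        ∃ ε > 0, ∃ A, ∀ τ : ℍ, A ≤ τ.im → ε ≤ ‖(H ∣[(4 : ℤ)] γ) τ‖ := by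
  classical
  set ψ : ℤ → ℂ := fun c => if (D : ℤ) ∣ c then 0 else 1 with hψdef
  have hψ : ∀ c, ‖ψ c‖ ≤ 1 := fun c => by
    simp only [hψdef]; split_ifs <;> simp
  have h0 : ψ 0 = 0 := by simp [hψdef]
  have hpar : ∀ c, ψ (-c) = (-1) ^ 4 * ψ c := fun c => by
    rw [Even.neg_one_pow (by decide), one_mul]; simp [hψdef]
  have hint : ∀ a, ∃ z : ℤ, ψ a = z := fun a => by
    simp only [hψdef]
    split_ifs
    · exact ⟨0, by simp⟩
    · exact ⟨1, by simp⟩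
  refine ⟨eisQ ψ 4, eisP ψ 4, eisQ_gform D ψ 1 hψ h0 (by norm_num) hpar ?_,
    eisQ_hasQ ψ hψ h0 (by norm_num) hpar, eisP_map ψ hint 4, eisP_coeff_zero ψ 4,
    fun hD => eisP_coeff_one ψ ?_ 4, fun γ hγ => ?_⟩
  · intro γ hγ c d
    have hcop : IsCoprime (D : ℤ) (γ 1 1) := by
      have hdet := Matrix.det_fin_two (γ : Matrix (Fin 2) (Fin 2) ℤ)
      rw [γ.det_coe] at hdet
      obtain ⟨e, he⟩ := hγ
      exact ⟨-(γ 0 1 * e), γ 0 0, by linear_combination -hdet + γ 0 1 * he⟩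
    have : (D : ℤ) ∣ c * γ 1 1 - d * γ 1 0 ↔ (D : ℤ) ∣ c := by
      rw [dvd_sub_left (hγ.mul_left d)]
      exact ⟨fun h => hcop.dvd_of_dvd_mul_right h, fun h => h.mul_right _⟩
    simp only [hψdef, this, Pi.one_apply, one_mul]
  · have : ¬ (D : ℤ) ∣ 1 := by
      norm_cast
      simpa using hD.ne'
    simp [hψdef, this]
  · obtain ⟨C, hC0, hC⟩ := eisSummand_norm_sum_bound (k := 3) (by norm_num)
    have hc : 0 < ‖(eisConst 4)⁻¹‖ := norm_pos_iff.2 (inv_ne_zero (eisConst_ne_zero 4))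
    refine ⟨‖(eisConst 4)⁻¹‖ * (1 / 2), by positivity, 2 * C + 2, fun τ hτ => ?_⟩
    have hmain := congrFun (eisQ_slash ψ 4 γ) τ
    rw [show ((4 : ℕ) : ℤ) = 4 by norm_num] at hmain
    rw [hmain, Pi.smul_apply, norm_smul]
    gcongr
    set φ : (Fin 2 → ℤ) → ℂ := fun v => ψ (v 0 * γ 1 1 - v 1 * γ 1 0) with hφ
    have hsum : Summable fun v => φ v * eisSummand 4 v τ :=
      (EE_summable_norm (fun v => hψ _) (by norm_num) τ).of_norm
    -- split the series into the terms with `v₀ = 0` and the rest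
    set g0 : (Fin 2 → ℤ) → ℂ := fun v => if v 0 = 0 then φ v * eisSummand 4 v τ else 0 with hg0
    set g1 : (Fin 2 → ℤ) → ℂ := fun v => if v 0 = 0 then 0 else φ v * eisSummand 4 v τ with hg1
    have hs3 := summable_norm_eisSummand (k := 3) le_rfl τ
    have hb1 : ∀ v, ‖g1 v‖ ≤ τ.im⁻¹ * ‖eisSummand 3 v τ‖ := fun v => by
      simp only [hg1]
      split_ifs with h
      · have := τ.im_pos
        simp only [norm_zero]; positivity
      · rw [norm_mul]
        exact (mul_le_of_le_one_left (norm_nonneg _) (hψ _)).trans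
          (by exact_mod_cast eisSummand_succ_le 3 v h τ)
    have hsg1 : Summable g1 := Summable.of_norm_bounded (hs3.mul_left _) hb1
    have hsg0 : Summable g0 := by
      refine (hsum.sub hsg1).congr fun v => ?_
      simp only [hg0, hg1]; split_ifs <;> simp
    have hsplit : EE φ 4 τ = ∑' v, g0 v + ∑' v, g1 v := by
      rw [← hsg0.tsum_add hsg1, EE]
      refine tsum_congr fun v => ?_
      simp only [hg0, hg1]; split_ifs <;> simp
    have h1 : ‖∑' v, g1 v‖ ≤ 1 / 2 := by
      have ha : ‖∑' v, g1 v‖ ≤ ∑' v, τ.im⁻¹ * ‖eisSummand 3 v τ‖ :=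
        tsum_of_norm_bounded (hs3.mul_left _).hasSum hb1
      rw [tsum_mul_left] at ha
      have h2 := hC τ (by linarith)
      refine ha.trans ?_
      rw [inv_mul_le_iff₀ τ.im_pos]
      linarith
    have hg0re : ∀ v, 0 ≤ (g0 v).re := fun v => by
      simp only [hg0]
      split_ifs with h
      · have : eisSummand 4 v τ = (((v 1 : ℝ) ^ 4)⁻¹ : ℝ) := by
          simp only [eisSummand, h]
          rw [show (-4 : ℤ) = -((4 : ℕ) : ℤ) by norm_num, _root_.zpow_neg, zpow_natCast]
          push_cast; ring
        rw [this]
        have h4 : (0 : ℝ) ≤ ((v 1 : ℝ) ^ 4)⁻¹ := by positivity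
        simp only [hφ, hψdef]
        split_ifs
        · simp
        · rw [one_mul, Complex.ofReal_re]; exact h4
      · simp
    have h01 : g0 ![0, 1] = 1 := by
      simp [hg0, hφ, hψdef, eisSummand, hγ]
    have h0' : 1 ≤ ‖∑' v, g0 v‖ := by
      refine le_trans ?_ (Complex.re_le_norm _)
      rw [Complex.re_tsum hsg0]
      have := (Complex.reCLM.summable hsg0).le_tsum ![0, 1] (fun v _ => hg0re v)
      simpa [h01] using this
    rw [hsplit]
    have := norm_sub_le_norm_add (∑' v, g0 v) (∑' v, g1 v)
    linarith

end

section

open UpperHalfPlane hiding I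
open scoped Manifold Topology MatrixGroups ModularForm
open Function Filter
set_option linter.unusedSectionVars false

/-! ### Lagrange interpolation polynomials -/

namespace Lag
open Polynomial
variable {Q R S : Type*} [Fintype Q] [DecidableEq Q] [CommRing R] [CommRing S]

/-- The numerator `∑_q Φ_q ∏_{j ≠ q} (X - H_j)` of the Lagrange interpolation formula. -/
def lag (Φ H : Q → R) : R[X] := ∑ q, C (Φ q) * ∏ j ∈ Finset.univ.erase q, (X - C (H j))

/-- The monic polynomial with roots `S_q`. -/
def pol (S : Q → R) : R[X] := ∏ q, (X - C (S q))

lemma lag_map (f : R →+* S) (Φ H : Q → R) :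
    (lag Φ H).map f = lag (fun q => f (Φ q)) (fun q => f (H q)) := by
  simp [lag, Polynomial.map_sum, Polynomial.map_prod]

lemma pol_map (f : R →+* S) (Φ : Q → R) : (pol Φ).map f = pol (fun q => f (Φ q)) := by
  simp [pol, Polynomial.map_prod]

lemma lag_comp (x y : R) (Φ H : Q → R) :
    (lag (fun q => x * Φ q) (fun q => y * H q)).comp (C y * X) =
      C (x * y ^ (Fintype.card Q - 1)) * lag Φ H := by
  rw [lag, lag, Polynomial.sum_comp, Finset.mul_sum]
  refine Finset.sum_congr rfl fun q _ => ?_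
  rw [mul_comp, C_comp, Polynomial.prod_comp]
  have : ∀ j ∈ Finset.univ.erase q, (X - C (y * H j)).comp (C y * X) = C y * (X - C (H j)) := by
    intro j _
    simp [mul_sub]
  rw [Finset.prod_congr rfl this, Finset.prod_mul_distrib, Finset.prod_const,
    Finset.card_erase_of_mem (Finset.mem_univ q), Finset.card_univ]
  simp only [C_mul, C_pow]
  ring

lemma pol_comp (y : R) (S : Q → R) :
    (pol (fun q => y * S q)).comp (C y * X) = C (y ^ Fintype.card Q) * pol S := by
  rw [pol, pol, Polynomial.prod_comp]
  have : ∀ j ∈ Finset.univ, (X - C (y * S j)).comp (C y * X) = C y * (X - C (S j)) := by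
    intro j _
    simp [mul_sub]
  rw [Finset.prod_congr rfl this, Finset.prod_mul_distrib, Finset.prod_const, Finset.card_univ,
    C_pow]

lemma lag_perm (e : Q ≃ Q) (Φ H : Q → R) : lag (fun q => Φ (e q)) (fun q => H (e q)) = lag Φ H := by
  refine Eq.trans (Finset.sum_congr rfl fun q _ => ?_)
    (e.sum_comp fun q => C (Φ q) * ∏ j ∈ Finset.univ.erase q, (X - C (H j)))
  congr 1
  refine Finset.prod_bij (fun j _ => e j) (by simp) (by simp) (fun b hb => ⟨e.symm b, ?_, by simp⟩)
    (by simp)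
  simpa [e.symm_apply_eq] using hb

lemma pol_perm (e : Q ≃ Q) (S : Q → R) : pol (fun q => S (e q)) = pol S := by
  exact e.prod_comp fun q => X - C (S q)

lemma lag_eval (Φ H : Q → R) (q : Q) :
    (lag Φ H).eval (H q) = Φ q * ∏ j ∈ Finset.univ.erase q, (H q - H j) := by
  rw [lag, eval_finsetSum, Finset.sum_eq_single q]
  · simp [eval_prod]
  · intro b _ hb
    rw [eval_mul, eval_prod, Finset.prod_eq_zero (Finset.mem_erase.2 ⟨hb.symm, Finset.mem_univ q⟩),
      mul_zero]
    simp
  · simp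

lemma pol_eval (S : Q → R) (q : Q) : (pol S).eval (S q) = 0 := by
  rw [pol, eval_prod, Finset.prod_eq_zero (Finset.mem_univ q)]
  simp

lemma lag_natDegree_lt [Nontrivial R] [Nonempty Q] (Φ H : Q → R) :
    (lag Φ H).natDegree < Fintype.card Q := by
  have hpos : 0 < Fintype.card Q := Fintype.card_pos
  refine lt_of_le_of_lt (b := Fintype.card Q - 1) ?_ (by omega)
  refine natDegree_sum_le_of_forall_le _ _ fun q _ => ?_
  refine (natDegree_C_mul_le _ _).trans ((natDegree_prod_le _ _).trans ?_)
  simp [Finset.card_erase_of_mem]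

lemma lag_eval_sum [Nontrivial R] [Nonempty Q] (Φ H : Q → R) (x : R) :
    (lag Φ H).eval x = ∑ r ∈ Finset.range (Fintype.card Q), (lag Φ H).coeff r * x ^ r :=
  eval_eq_sum_range' (lag_natDegree_lt Φ H) x

lemma pol_monic (S : Q → R) : (pol S).Monic := monic_prod_of_monic _ _ fun _ _ => monic_X_sub_C _

lemma pol_eval_sum [Nontrivial R] (S : Q → R) (x : R) :
    (pol S).eval x = x ^ Fintype.card Q +
      ∑ r ∈ Finset.range (Fintype.card Q), (pol S).coeff r * x ^ r := by
  have hdeg : (pol S).natDegree = Fintype.card Q := by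
    rw [pol, natDegree_prod_of_monic _ _ fun _ _ => monic_X_sub_C _]
    simp
  rw [eval_eq_sum_range, hdeg, Finset.sum_range_succ, add_comm]
  congr 1
  have := (pol_monic S).coeff_natDegree
  rw [hdeg] at this
  rw [this, one_mul]

lemma lag_coeff_mem (A : Subring R) {Φ H : Q → R} (hΦ : ∀ q, Φ q ∈ A) (hH : ∀ q, H q ∈ A) (r : ℕ) :
    (lag Φ H).coeff r ∈ A := by
  have : lag Φ H = (lag (fun q => (⟨Φ q, hΦ q⟩ : A)) (fun q => ⟨H q, hH q⟩)).map A.subtype := by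
    rw [lag_map]; rfl
  rw [this, coeff_map]
  exact Subtype.prop _

lemma pol_coeff_mem (A : Subring R) {S : Q → R} (hS : ∀ q, S q ∈ A) (r : ℕ) :
    (pol S).coeff r ∈ A := by
  have : pol S = (pol (fun q => (⟨S q, hS q⟩ : A))).map A.subtype := by
    rw [pol_map]; rfl
  rw [this, coeff_map]
  exact Subtype.prop _

end Lag

/-! ### Systems of conjugates and forms of level one -/

/-- The ring of holomorphic functions on `ℍ` that are bounded at `i∞`. -/
def niceRing : Subring (ℍ → ℂ) where
  carrier := {F | MDiff F ∧ IsBoundedAtImInfty F}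
  mul_mem' ha hb := ⟨ha.1.mul hb.1, ha.2.mul hb.2⟩
  one_mem' := ⟨mdifferentiable_const, Filter.const_boundedAtFilter _ (1 : ℂ)⟩
  add_mem' ha hb := ⟨ha.1.add hb.1, ha.2.add hb.2⟩
  zero_mem' := ⟨mdifferentiable_const, Filter.const_boundedAtFilter _ (0 : ℂ)⟩
  neg_mem' ha := ⟨ha.1.neg, ha.2.neg⟩

lemma slash_apply_eq (k : ℤ) (F : ℍ → ℂ) (γ : SL(2, ℤ)) (τ : ℍ) :
    F (γ • τ) = denom γ τ ^ k * (F ∣[k] γ) τ := by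
  rw [ModularForm.SL_slash_apply, mul_comm, mul_assoc, ← zpow_add₀ (denom_ne_zero _ _)]
  simp

/-- A family of holomorphic functions of weight `k`, bounded at `i∞`, permuted by `SL(2, ℤ)`. -/
structure Sys {Q : Type*} [MulAction SL(2, ℤ) Q] (k : ℤ) (Φ : Q → ℍ → ℂ) : Prop where
  mem : ∀ q, Φ q ∈ niceRing
  slash : ∀ (γ : SL(2, ℤ)) q, (Φ q) ∣[k] γ = Φ (γ⁻¹ • q)

lemma lform_of_coeff {F : ℍ → ℂ} (hF : F ∈ niceRing) {k : ℤ}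
    (h : ∀ (γ : SL(2, ℤ)) τ, F (γ • τ) = denom γ τ ^ k * F τ) : LForm k F where
  mdiff := hF.1
  bdd := hF.2
  slash γ := by
    ext τ
    have := h γ τ
    rw [slash_apply_eq k F] at this
    exact mul_left_cancel₀ (zpow_ne_zero _ (denom_ne_zero _ _)) this

section
variable {Q : Type*} [MulAction SL(2, ℤ) Q] [Fintype Q] [DecidableEq Q] [Nonempty Q]

lemma Sys.lag_coeff {K l : ℤ} {Φ H : Q → ℍ → ℂ} (hΦ : Sys K Φ) (hH : Sys l H) (r : ℕ) :
    LForm (K + l * ((Fintype.card Q : ℤ) - 1 - r)) ((Lag.lag Φ H).coeff r) := by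
  refine lform_of_coeff (Lag.lag_coeff_mem _ hΦ.mem hH.mem r) fun γ τ => ?_
  have hpt : ∀ σ : ℍ, (Lag.lag Φ H).coeff r σ =
      (Lag.lag (fun q => Φ q σ) (fun q => H q σ)).coeff r := fun σ => by
    have := Lag.lag_map (Pi.evalRingHom (fun _ : ℍ => ℂ) σ) Φ H
    have h2 := congrArg (fun p => Polynomial.coeff p r) this
    simpa using h2
  rw [hpt, hpt]
  set J := denom γ τ with hJ
  have hJ0 : J ≠ 0 := denom_ne_zero _ _
  have h1 : (fun q => Φ q (γ • τ)) = fun q => J ^ K * Φ (MulAction.toPerm γ⁻¹ q) τ := by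
    ext q; rw [slash_apply_eq K (Φ q), hΦ.slash]; rfl
  have h2 : (fun q => H q (γ • τ)) = fun q => J ^ l * H (MulAction.toPerm γ⁻¹ q) τ := by
    ext q; rw [slash_apply_eq l (H q), hH.slash]; rfl
  have h3 := congrArg (fun p => Polynomial.coeff p r) (Lag.lag_comp (J ^ K) (J ^ l)
    (fun q => Φ (MulAction.toPerm γ⁻¹ q) τ) (fun q => H (MulAction.toPerm γ⁻¹ q) τ))
  simp only [Polynomial.comp_C_mul_X_coeff, Polynomial.coeff_C_mul] at h3
  rw [Lag.lag_perm (MulAction.toPerm γ⁻¹) (fun q => Φ q τ) (fun q => H q τ), ← h1, ← h2] at h3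
  have hne : (J ^ l) ^ r ≠ 0 := pow_ne_zero _ (zpow_ne_zero _ hJ0)
  refine mul_right_cancel₀ hne (h3.trans ?_)
  have hpos : 0 < Fintype.card Q := Fintype.card_pos
  have e : (J ^ l) ^ (Fintype.card Q - 1) = J ^ (l * ((Fintype.card Q : ℤ) - 1)) := by
    rw [← zpow_natCast, ← zpow_mul, Nat.cast_sub hpos, Nat.cast_one]
  have e2 : (J ^ l) ^ r = J ^ (l * (r : ℤ)) := by rw [← zpow_natCast, ← zpow_mul]
  rw [e, e2, ← zpow_add₀ hJ0, mul_right_comm, ← zpow_add₀ hJ0]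
  congr 2
  ring

lemma Sys.pol_coeff {l : ℤ} {S : Q → ℍ → ℂ} (hS : Sys l S) (r : ℕ) :
    LForm (l * ((Fintype.card Q : ℤ) - r)) ((Lag.pol S).coeff r) := by
  refine lform_of_coeff (Lag.pol_coeff_mem _ hS.mem r) fun γ τ => ?_
  have hpt : ∀ σ : ℍ, (Lag.pol S).coeff r σ = (Lag.pol (fun q => S q σ)).coeff r := fun σ => by
    have := Lag.pol_map (Pi.evalRingHom (fun _ : ℍ => ℂ) σ) S
    have h2 := congrArg (fun p => Polynomial.coeff p r) this
    simpa using h2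
  rw [hpt, hpt]
  set J := denom γ τ with hJ
  have hJ0 : J ≠ 0 := denom_ne_zero _ _
  have h2 : (fun q => S q (γ • τ)) = fun q => J ^ l * S (MulAction.toPerm γ⁻¹ q) τ := by
    ext q; rw [slash_apply_eq l (S q), hS.slash]; rfl
  have h3 := congrArg (fun p => Polynomial.coeff p r) (Lag.pol_comp (J ^ l)
    (fun q => S (MulAction.toPerm γ⁻¹ q) τ))
  simp only [Polynomial.comp_C_mul_X_coeff, Polynomial.coeff_C_mul] at h3
  rw [Lag.pol_perm (MulAction.toPerm γ⁻¹) (fun q => S q τ), ← h2] at h3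
  have hne : (J ^ l) ^ r ≠ 0 := pow_ne_zero _ (zpow_ne_zero _ hJ0)
  refine mul_right_cancel₀ hne (h3.trans ?_)
  rw [← zpow_natCast, ← zpow_natCast, ← zpow_mul, ← zpow_mul, mul_right_comm, ← zpow_add₀ hJ0]
  congr 2
  ring
end

end

/-! ### Conjugates of forms of level `Γ₀(D)` -/

section

open UpperHalfPlane hiding I
open scoped Manifold Topology MatrixGroups ModularForm
open Function Filter CongruenceSubgroup

lemma mem_Gamma0_iff {D : ℕ} {γ : SL(2, ℤ)} : γ ∈ Gamma0 D ↔ (D : ℤ) ∣ γ 1 0 := by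
  rw [Gamma0_mem, ZMod.intCast_zmod_eq_zero_iff_dvd]

lemma isCoprime_of_dvd_lower {D : ℕ} {γ : SL(2, ℤ)} (h : (D : ℤ) ∣ γ 1 0) : IsCoprime (γ 1 1) (D : ℤ) := by
  have hdet := Matrix.det_fin_two (γ : Matrix (Fin 2) (Fin 2) ℤ)
  rw [γ.det_coe] at hdet
  obtain ⟨e, he⟩ := h
  exact ⟨γ 0 0, -(γ 0 1 * e), by linear_combination -hdet + γ 0 1 * he⟩

namespace GForm
variable {D : ℕ} {χ χ' : ℤ → ℂ} {k k' : ℤ} {F G : ℍ → ℂ}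

lemma mul (h : GForm D χ k F) (h' : GForm D χ' k' G) : GForm D (χ * χ') (k + k') (F * G) where
  mdiff := h.mdiff.mul h'.mdiff
  slash γ hγ := by
    rw [ModularForm.mul_slash_SL2, h.slash γ hγ, h'.slash γ hγ]
    ext τ
    simp only [Pi.mul_apply, Pi.smul_apply, smul_eq_mul]
    ring
  bdd γ := by
    rw [ModularForm.mul_slash_SL2]
    exact (h.bdd γ).mul (h'.bdd γ)

lemma congr_char (h : GForm D χ k F) (hχ : ∀ a, IsCoprime a (D : ℤ) → χ a = χ' a) :
    GForm D χ' k F :=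
  ⟨h.mdiff, fun γ hγ => by rw [h.slash γ hγ, hχ _ (isCoprime_of_dvd_lower hγ)], h.bdd⟩

lemma slash_one (h : GForm D 1 k F) {γ : SL(2, ℤ)} (hγ : γ ∈ Gamma0 D) : F ∣[k] γ = F := by
  rw [h.slash γ (mem_Gamma0_iff.1 hγ)]
  simp

lemma bdd_one (h : GForm D χ k F) : IsBoundedAtImInfty F := by
  have := h.bdd 1
  rwa [SlashAction.slash_one] at this

lemma hasQ (h : GForm D χ k F) (h1 : χ 1 = 1) : HasQ F (qExpansion 1 F) := by
  refine exists_hasQ h.mdiff h.bdd_one fun τ => ?_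
  have hT := h.slash ModularGroup.T (by simp [ModularGroup.T])
  rw [show (ModularGroup.T : SL(2, ℤ)) 1 1 = 1 by simp [ModularGroup.T], h1, one_smul] at hT
  have := congr_fun hT τ
  rw [ModularForm.SL_slash_apply, UpperHalfPlane.modular_T_smul] at this
  have hd : denom (ModularGroup.T : SL(2, ℤ)) τ = 1 := by
    rw [ModularGroup.denom_apply]; simp [ModularGroup.T]
  rwa [hd, one_zpow, mul_one] at this

end GForm

lemma slash_mdiff {F : ℍ → ℂ} (hF : MDiff F) (k : ℤ) (γ : SL(2, ℤ)) : MDiff (F ∣[k] γ) := by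
  rw [ModularForm.SL_slash]
  exact hF.slash k _

/-- The conjugates `F ∣ g⁻¹` of a form `F` on `Γ₀(D)`, indexed by the cosets `g Γ₀(D)`. -/
def conjF (D : ℕ) (k : ℤ) (F : ℍ → ℂ) (q : SL(2, ℤ) ⧸ Gamma0 D) : ℍ → ℂ := F ∣[k] (q.out)⁻¹

lemma conjF_mk {D : ℕ} {k : ℤ} {F : ℍ → ℂ} (h : GForm D 1 k F) (g : SL(2, ℤ)) :
    conjF D k F (g : SL(2, ℤ) ⧸ Gamma0 D) = F ∣[k] g⁻¹ := by
  obtain ⟨u, hu⟩ := QuotientGroup.mk_out_eq_mul (Gamma0 D) g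
  rw [conjF, hu, mul_inv_rev, SlashAction.slash_mul, h.slash_one (inv_mem u.2)]

lemma conjF_one {D : ℕ} {k : ℤ} {F : ℍ → ℂ} (h : GForm D 1 k F) :
    conjF D k F ((1 : SL(2, ℤ)) : SL(2, ℤ) ⧸ Gamma0 D) = F := by
  rw [conjF_mk h, inv_one, SlashAction.slash_one]

lemma conjF_sys {D : ℕ} {k : ℤ} {F : ℍ → ℂ} (h : GForm D 1 k F) : Sys k (conjF D k F) where
  mem q := ⟨slash_mdiff h.mdiff _ _, h.bdd _⟩
  slash γ q := by
    obtain ⟨g, rfl⟩ := QuotientGroup.mk_surjective q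
    rw [MulAction.Quotient.smul_coe, conjF_mk h, conjF_mk h, ← SlashAction.slash_mul]
    simp

lemma sys_one {Q : Type*} [MulAction SL(2, ℤ) Q] : Sys 0 (fun _ : Q => (1 : ℍ → ℂ)) where
  mem _ := one_mem _
  slash γ q := by
    ext τ
    simp [ModularForm.SL_slash_apply]

/-- Dividing a `q`-expansion by `q`. -/
lemma HasQ.div_q {F : ℍ → ℂ} {P : PowerSeries ℂ} (h : HasQ F (PowerSeries.X * P)) :
    HasQ (fun τ => F τ / Periodic.qParam 1 τ) P := fun τ => by
  have hq : Periodic.qParam 1 (τ : ℂ) ≠ 0 := Periodic.qParam_ne_zero _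
  have h1 := h τ
  rw [← hasSum_nat_add_iff' 1] at h1
  have h2 := h1.div_const (Periodic.qParam 1 (τ : ℂ))
  convert! h2 using 1
  · ext m
    rw [PowerSeries.coeff_succ_X_mul, pow_succ, ← mul_assoc, mul_div_cancel_right₀ _ hq]
  · simp

lemma HasQ.tendsto_zero {F : ℍ → ℂ} {P : PowerSeries ℂ} (h : HasQ F P) (h0 : P.coeff 0 = 0)
    {ε : ℝ} (hε : 0 < ε) : ∃ A, ∀ τ : ℍ, A ≤ τ.im → ‖F τ‖ < ε := by
  obtain ⟨R, rfl⟩ : PowerSeries.X ∣ P := PowerSeries.X_dvd_iff.2 (by simpa using h0)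
  obtain ⟨M, A, hM⟩ := isBoundedAtImInfty_iff.1 h.div_q.bdd
  have hM1 : 0 < |M| + 1 := by positivity
  refine ⟨max A (-Real.log (ε / (|M| + 1)) / (2 * Real.pi) + 1), fun τ hτ => ?_⟩
  have h1 := hM τ (le_trans (le_max_left _ _) hτ)
  have hq : Periodic.qParam 1 (τ : ℂ) ≠ 0 := Periodic.qParam_ne_zero _
  have hq' : 0 < ‖Periodic.qParam 1 (τ : ℂ)‖ := norm_pos_iff.2 hq
  rw [norm_div, div_le_iff₀ hq'] at h1
  have h2 : ‖Periodic.qParam 1 (τ : ℂ)‖ < ε / (|M| + 1) := by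
    rw [Periodic.norm_qParam, ← Real.lt_log_iff_exp_lt (by positivity)]
    have h3 := le_trans (le_max_right _ _) hτ
    have hpi := Real.pi_pos
    have h4 : -Real.log (ε / (|M| + 1)) < τ.im * (2 * Real.pi) := by
      rw [← div_lt_iff₀ (by positivity)]; linarith
    simp only [UpperHalfPlane.coe_im, div_one]
    linarith
  rw [lt_div_iff₀ hM1] at h2
  nlinarith [le_abs_self M]

end

/-! ### Locally bounded quotients -/

section

open UpperHalfPlane hiding I
open scoped Manifold Topology MatrixGroups ModularForm
open Function Filter CongruenceSubgroup

/-- The Cauchy-type bound for the roots of a monic polynomial. -/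
lemma root_bound {m : ℕ} (s : ℕ → ℂ) (y : ℂ)
    (h : y ^ m + ∑ r ∈ Finset.range m, s r * y ^ r = 0) :
    ‖y‖ ≤ 1 + ∑ r ∈ Finset.range m, ‖s r‖ := by
  have hS : 0 ≤ ∑ r ∈ Finset.range m, ‖s r‖ := Finset.sum_nonneg fun _ _ => norm_nonneg _
  rcases le_or_gt ‖y‖ 1 with hy | hy
  · linarith
  rcases m with _ | m
  · simp at h
  have h1 : ‖y‖ ^ (m + 1) ≤ (∑ r ∈ Finset.range (m + 1), ‖s r‖) * ‖y‖ ^ m := by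
    rw [← norm_pow, eq_neg_of_add_eq_zero_left h, norm_neg, Finset.sum_mul]
    refine (norm_sum_le _ _).trans (Finset.sum_le_sum fun r hr => ?_)
    rw [norm_mul, norm_pow]
    gcongr
    · exact hy.le
    · exact Nat.lt_succ_iff.1 (Finset.mem_range.1 hr)
  rw [pow_succ, mul_comm] at h1
  have := le_of_mul_le_mul_right h1 (by positivity)
  linarith

/-- A quotient of holomorphic functions that is locally bounded is holomorphic. -/
lemma exists_quotient {C G : ℍ → ℂ} (hC : MDiff C) (hG : MDiff G) (hG0 : G ≠ 0) (M : ℍ → ℝ)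
    (hM : Continuous M) (hb : ∀ τ, G τ ≠ 0 → ‖C τ / G τ‖ ≤ M τ) : ∃ F : ℍ → ℂ, MDiff F ∧ F * G = C := by
  set U : Set ℂ := {z | 0 < z.im} with hU
  have hUo : IsOpen U := isOpen_upperHalfPlaneSet
  set c : ℂ → ℂ := C ∘ ofComplex with hc
  set g : ℂ → ℂ := G ∘ ofComplex with hg
  have hcd : DifferentiableOn ℂ c U := UpperHalfPlane.mdifferentiable_iff.1 hC
  have hgd : DifferentiableOn ℂ g U := UpperHalfPlane.mdifferentiable_iff.1 hG
  have hne : ∀ z ∈ U, ∀ᶠ w in 𝓝[≠] z, g w ≠ 0 := by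
    intro z hz
    by_contra hcon
    have hfr : ∃ᶠ w in 𝓝[≠] z, g w = 0 := by
      exact fun h => hcon h
    have hpre : IsPreconnected U := (convex_halfSpace_im_gt 0).isPreconnected
    have := (hgd.analyticOnNhd hUo).eqOn_zero_of_preconnected_of_frequently_eq_zero hpre hz hfr
    apply hG0
    ext τ
    simpa [hg] using this τ.im_pos
  set h : ℂ → ℂ := fun z => c z / g z with hh
  set F : ℂ → ℂ := fun z => limUnder (𝓝[≠] z) h with hF
  have hFh : ∀ z ∈ U, g z ≠ 0 → F z = h z := by
    intro z hz hgz
    have hcont : ContinuousAt h z :=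
      ((hcd.differentiableAt (hUo.mem_nhds hz)).continuousAt).div
        ((hgd.differentiableAt (hUo.mem_nhds hz)).continuousAt) hgz
    exact (hcont.tendsto.mono_left nhdsWithin_le_nhds).limUnder_eq
  have hFd : DifferentiableOn ℂ F U := by
    intro z hz
    have hMc : ContinuousOn (M ∘ ofComplex) U := fun w hw =>
      (hM.continuousAt.comp (contMDiffAt_ofComplex (n := 0) hw).continuousAt).continuousWithinAt
    have hMz : ∀ᶠ w in 𝓝 z, (M ∘ ofComplex) w < (M ∘ ofComplex) z + 1 :=
      (hMc.continuousAt (hUo.mem_nhds hz)).eventually_lt continuousAt_const (by simp)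
    have hev : ∀ᶠ w in 𝓝 z, w ∈ U ∧ (M ∘ ofComplex) w < (M ∘ ofComplex) z + 1 ∧
        (w ≠ z → g w ≠ 0) :=
      (hUo.eventually_mem hz).and (hMz.and (eventually_nhdsWithin_iff.1 (hne z hz)))
    set s : Set ℂ := {w | w ∈ U ∧ (M ∘ ofComplex) w < (M ∘ ofComplex) z + 1 ∧
        (w ≠ z → g w ≠ 0)} with hs
    have hsz : s ∈ 𝓝 z := hev
    have hd : DifferentiableOn ℂ h (s \ {z}) := fun w hw =>
      ((hcd.differentiableAt (hUo.mem_nhds hw.1.1)).div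
        (hgd.differentiableAt (hUo.mem_nhds hw.1.1)) (hw.1.2.2 hw.2)).differentiableWithinAt
    have hbd : BddAbove (norm ∘ h '' (s \ {z})) := by
      refine ⟨(M ∘ ofComplex) z + 1, ?_⟩
      rintro _ ⟨w, hw, rfl⟩
      exact (hb _ (hw.1.2.2 hw.2)).trans hw.1.2.1.le
    have hupd := Complex.differentiableOn_update_limUnder_of_bddAbove hsz hd hbd
    have hFeq : F =ᶠ[𝓝 z] update h z (limUnder (𝓝[≠] z) h) := by
      filter_upwards [hsz] with w hw
      by_cases hwz : w = z
      · subst hwz; simp [hF]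
      · rw [update_of_ne hwz, hFh w hw.1 (hw.2.2 hwz)]
    exact ((hupd.differentiableAt hsz).congr_of_eventuallyEq hFeq).differentiableWithinAt
  refine ⟨fun τ => F τ, ?_, ?_⟩
  · rw [UpperHalfPlane.mdifferentiable_iff]
    refine hFd.congr fun z hz => ?_
    simp [ofComplex_apply_of_im_pos hz]
  · ext τ
    have hcF := (hFd.differentiableAt (hUo.mem_nhds τ.im_pos)).continuousAt
    have hcg := (hgd.differentiableAt (hUo.mem_nhds τ.im_pos)).continuousAt
    have hcc := (hcd.differentiableAt (hUo.mem_nhds τ.im_pos)).continuousAt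
    have hev : (F * g) =ᶠ[𝓝[≠] (τ : ℂ)] c := by
      filter_upwards [hne τ τ.im_pos, nhdsWithin_le_nhds (hUo.mem_nhds τ.im_pos)] with w hw hwU
      rw [Pi.mul_apply, hFh w hwU hw]
      exact div_mul_cancel₀ _ hw
    have h1 : Tendsto (F * g) (𝓝[≠] (τ : ℂ)) (𝓝 ((F * g) τ)) :=
      (hcF.mul hcg).tendsto.mono_left nhdsWithin_le_nhds
    have h2 : Tendsto (F * g) (𝓝[≠] (τ : ℂ)) (𝓝 (c τ)) :=
      (hcc.tendsto.mono_left nhdsWithin_le_nhds).congr' hev.symm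
    simpa [hg, hc] using tendsto_nhds_unique h1 h2

end

/-! ### The Galois conjugate as a quotient -/

section

open UpperHalfPlane hiding I
open scoped Manifold Topology MatrixGroups ModularForm
open Function Filter CongruenceSubgroup

/-- Clearing denominators in a monic equation. -/
lemma homog_of_root {R : Type*} [CommRing R] {m : ℕ} (s : ℕ → R) (y g : R)
    (h : y ^ m + ∑ r ∈ Finset.range m, s r * y ^ r = 0) :
    (y * g) ^ m + ∑ r ∈ Finset.range m, s r * ((y * g) ^ r * g ^ (m - r)) = 0 := by
  have h2 := congrArg (· * g ^ m) h
  simp only [zero_mul, add_mul, Finset.sum_mul] at h2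
  rw [← h2, mul_pow]
  congr 1
  refine Finset.sum_congr rfl fun r hr => ?_
  rw [← Nat.add_sub_of_le (Finset.mem_range.1 hr).le, pow_add, mul_pow]
  simp only [Nat.add_sub_cancel_left]
  ring

lemma root_of_homog {m : ℕ} (s : ℕ → ℂ) (y g : ℂ) (hg : g ≠ 0)
    (h : (y * g) ^ m + ∑ r ∈ Finset.range m, s r * ((y * g) ^ r * g ^ (m - r)) = 0) :
    y ^ m + ∑ r ∈ Finset.range m, s r * y ^ r = 0 := by
  suffices hs : (y ^ m + ∑ r ∈ Finset.range m, s r * y ^ r) * g ^ m = 0 from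
    (mul_eq_zero.1 hs).resolve_right (pow_ne_zero _ hg)
  rw [← h, add_mul, mul_pow, Finset.sum_mul]
  congr 1
  refine Finset.sum_congr rfl fun r hr => ?_
  rw [← Nat.add_sub_of_le (Finset.mem_range.1 hr).le, pow_add, mul_pow]
  simp only [Nat.add_sub_cancel_left]
  ring

/-- `H` takes different values from its other conjugates near `i∞`, where `H` tends to `0`
and the others stay away from `0`. -/
lemma prod_conj_ne_zero {D : ℕ} {H : ℍ → ℂ} {PH : PowerSeries ℂ} (hH : GForm D 1 4 H)
    (hHQ : HasQ H PH) (h0 : PH.coeff 0 = 0) (hε : ∀ γ : SL(2, ℤ), ¬ (D : ℤ) ∣ γ 1 0 →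
        ∃ ε > 0, ∃ A, ∀ τ : ℍ, A ≤ τ.im → ε ≤ ‖(H ∣[(4 : ℤ)] γ) τ‖)
    (s : Finset (SL(2, ℤ) ⧸ Gamma0 D)) (hs : ((1 : SL(2, ℤ)) : SL(2, ℤ) ⧸ Gamma0 D) ∉ s) :
    ∏ j ∈ s, (H - conjF D 4 H j) ≠ 0 := by
  have key : ∀ j ∈ s, ∀ᶠ τ in atImInfty, (H - conjF D 4 H j) τ ≠ 0 := by
    intro j hj
    obtain ⟨g, rfl⟩ := QuotientGroup.mk_surjective j
    have hg : ¬ (D : ℤ) ∣ (g⁻¹ : SL(2, ℤ)) 1 0 := by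
      rw [← mem_Gamma0_iff, inv_mem_iff]
      intro hg
      apply hs
      have : (g : SL(2, ℤ) ⧸ Gamma0 D) = ((1 : SL(2, ℤ)) : SL(2, ℤ) ⧸ Gamma0 D) := by
        rw [eq_comm, QuotientGroup.eq]; simpa using hg
      rwa [← this]
    obtain ⟨ε, hε0, A, hA⟩ := hε _ hg
    obtain ⟨A', hA'⟩ := hHQ.tendsto_zero h0 hε0
    refine (atImInfty_mem _).2 ⟨max A A', fun τ hτ => ?_⟩
    have h1 := hA τ (le_trans (le_max_left _ _) hτ)
    have h2 := hA' τ (le_trans (le_max_right _ _) hτ)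
    change (H - conjF D 4 H g) τ ≠ 0
    rw [conjF_mk hH, Pi.sub_apply, sub_ne_zero]
    intro h
    rw [h] at h2
    linarith
  have hall : ∀ᶠ τ in atImInfty, ∀ j ∈ s, (H - conjF D 4 H j) τ ≠ 0 :=
    (Filter.eventually_all_finset s).2 key
  obtain ⟨A, hA⟩ := (atImInfty_mem _).1 hall
  intro h
  have hτ := hA ⟨⟨0, max A 1⟩, by simp⟩ (le_max_left _ _)
  have := congrFun h ⟨⟨0, max A 1⟩, by simp⟩
  rw [Finset.prod_apply] at this
  exact Finset.prod_ne_zero_iff.2 hτ this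

lemma sum_slash_apply {m : ℕ} {K l : ℤ} {a : ℕ → ℍ → ℂ} {H : ℍ → ℂ} {γ : SL(2, ℤ)}
    (ha : ∀ r : ℕ, LForm (K + l * ((m : ℤ) - 1 - (r : ℤ))) (a r)) (hH : H ∣[l] γ = H) :
    (∑ r ∈ Finset.range m, a r * H ^ r) ∣[K + l * ((m : ℤ) - 1)] γ =
      ∑ r ∈ Finset.range m, a r * H ^ r := by
  ext τ
  refine mul_left_cancel₀ (zpow_ne_zero (K + l * ((m : ℤ) - 1)) (denom_ne_zero γ τ)) ?_
  rw [← slash_apply_eq, Finset.sum_apply, Finset.sum_apply, Finset.mul_sum]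
  refine Finset.sum_congr rfl fun r _ => ?_
  simp only [Pi.mul_apply, Pi.pow_apply]
  rw [slash_apply_eq _ (a r), (ha r).slash, slash_apply_eq l H, hH, mul_pow, ← zpow_natCast,
    ← zpow_mul]
  have : denom γ τ ^ (K + l * ((m : ℤ) - 1)) =
      denom γ τ ^ (K + l * ((m : ℤ) - 1 - r)) * denom γ τ ^ (l * (r : ℤ)) := by
    rw [← zpow_add₀ (denom_ne_zero _ _)]
    congr 1; ring
  rw [this]
  ring

/-- The candidate for the Galois conjugate of `F`, as a quotient `C / G`, together with an
equation of integral dependence for its square over the forms of level one. -/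
lemma galois_aux {D n : ℕ} (hD : D ≠ 0) {χ : ℤ → ℂ} (hχ : NiceChar D n χ) (hn : 3 ≤ n)
    (σ : ℂ →+* ℂ) {k : ℤ} {F : ℍ → ℂ} (hF : GForm D χ k F) :
    ∃ (m : ℕ) (K : ℤ) (C G : ℍ → ℂ) (s : ℕ → ℍ → ℂ) (P g : PowerSeries ℂ),
      HasQ F P ∧ HasQ G g ∧ HasQ C (P.map σ * g) ∧ g ≠ 0 ∧
      (∀ r : ℕ, LForm ((k + k) * ((m : ℤ) - (r : ℤ))) (s r)) ∧
      (C * C) ^ m + ∑ r ∈ Finset.range m, s r * ((C * C) ^ r * (G * G) ^ (m - r)) = 0 ∧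
      ∀ γ : SL(2, ℤ), (D : ℤ) ∣ γ 1 0 → G ∣[K] γ = χ (γ 1 1) • G ∧ C ∣[k + K] γ = C := by
  classical
  obtain ⟨E, PE, hE, hEQ, hEσ, hPE⟩ := exists_E hχ hn
  obtain ⟨H, PH, hH, hHQ, hHσ, hH0, -, hHε⟩ := exists_H D
  have : NeZero D := ⟨hD⟩
  let Q := SL(2, ℤ) ⧸ Gamma0 D
  have : Fintype Q := Fintype.ofFinite Q
  let q1 : Q := ((1 : SL(2, ℤ)) : SL(2, ℤ) ⧸ Gamma0 D)
  have : Nonempty Q := ⟨q1⟩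
  have hΦ : GForm D 1 (k + n) (F * E) := (hF.mul hE).congr_char fun a ha => by
    simpa using hχ.sq a ha
  have hS : GForm D 1 (k + k) (F * F) := (hF.mul hF).congr_char fun a ha => by
    simpa using hχ.sq a ha
  have hsΦ := conjF_sys hΦ
  have hsH := conjF_sys hH
  have hsS := conjF_sys hS
  have hs1 : Sys 0 (fun _ : Q => (1 : ℍ → ℂ)) := sys_one
  obtain ⟨m, hm⟩ : ∃ m, Fintype.card Q = m := ⟨_, rfl⟩
  -- the interpolation formula at the trivial coset reads `Φ * B = ∑ a r * H ^ r`
  set B := ∏ j ∈ Finset.univ.erase q1, (H - conjF D 4 H j) with hB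
  have hB0 : B ≠ 0 := prod_conj_ne_zero hH hHQ hH0 hHε _ (by simp [q1])
  have ha := fun r => hsΦ.lag_coeff hsH r
  have hb := fun r => hs1.lag_coeff hsH r
  have hs := fun r => hsS.pol_coeff r
  have ea := (Lag.lag_eval_sum (conjF D (k + n) (F * E)) (conjF D 4 H) (conjF D 4 H q1)).symm.trans
    (Lag.lag_eval _ _ q1)
  have eb := (Lag.lag_eval_sum (fun _ : Q => (1 : ℍ → ℂ)) (conjF D 4 H) (conjF D 4 H q1)).symm.trans
    (Lag.lag_eval _ _ q1)
  have es := (Lag.pol_eval_sum (conjF D (k + k) (F * F)) (conjF D (k + k) (F * F) q1)).symm.trans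
    (Lag.pol_eval _ q1)
  rw [conjF_one hH, conjF_one hΦ, ← hB] at ea
  rw [conjF_one hH, ← hB, one_mul] at eb
  rw [conjF_one hS] at es
  rw [hm] at ea eb es ha hb hs
  generalize (Lag.lag (conjF D (k + n) (F * E)) (conjF D 4 H)).coeff = a at *
  generalize (Lag.lag (fun _ : Q => (1 : ℍ → ℂ)) (conjF D 4 H)).coeff = b at *
  generalize (Lag.pol (conjF D (k + k) (F * F))).coeff = s at *
  choose a' Pa ha' haQ haQ' using fun r => LForm.galois σ _ _ (ha r)
  choose b' Pb hb' hbQ hbQ' using fun r => LForm.galois σ _ _ (hb r)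
  choose s' Ps hs' hsQ hsQ' using fun r => LForm.galois σ _ _ (hs r)
  have hP := hF.hasQ hχ.one
  set P := qExpansion 1 F
  have hBQ : HasQ B (∑ r ∈ Finset.range m, Pb r * PH ^ r) := eb ▸
    HasQ.sum _ fun r _ => (hbQ r).mul (hHQ.pow r)
  -- the identities are transported to `q`-series, where `σ` can be applied
  have e1 : P * PE * (∑ r ∈ Finset.range m, Pb r * PH ^ r) =
      ∑ r ∈ Finset.range m, Pa r * PH ^ r :=
    ((hP.mul hEQ).mul hBQ).unique (ea ▸ HasQ.sum _ fun r _ => (haQ r).mul (hHQ.pow r))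
  have e1σ : P.map σ * (PE * ∑ r ∈ Finset.range m, (Pb r).map σ * PH ^ r) =
      ∑ r ∈ Finset.range m, (Pa r).map σ * PH ^ r := by
    have := congrArg (PowerSeries.map σ) e1
    simpa [map_mul, map_sum, map_pow, hEσ, hHσ, mul_assoc] using this
  have e2 : (P * P) ^ m + ∑ r ∈ Finset.range m, Ps r * (P * P) ^ r = 0 :=
    (((hP.mul hP).pow m).add (HasQ.sum _ fun r _ => (hsQ r).mul ((hP.mul hP).pow r))).unique
      (es ▸ HasQ.zero)
  have e2σ : (P.map σ * P.map σ) ^ m +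
      ∑ r ∈ Finset.range m, (Ps r).map σ * (P.map σ * P.map σ) ^ r = 0 := by
    have := congrArg (PowerSeries.map σ) e2
    simpa [map_mul, map_sum, map_pow] using this
  set g := PE * ∑ r ∈ Finset.range m, (Pb r).map σ * PH ^ r with hg
  have hg0 : g ≠ 0 := by
    have hgm : g = (PE * ∑ r ∈ Finset.range m, Pb r * PH ^ r).map σ := by
      simp [hg, map_mul, map_sum, map_pow, hEσ, hHσ]
    have hne : PE * ∑ r ∈ Finset.range m, Pb r * PH ^ r ≠ 0 := by
      refine mul_ne_zero hPE fun h => hB0 ?_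
      rw [h] at hBQ
      exact hBQ.fun_unique HasQ.zero
    rw [hgm]
    intro h
    apply hne
    ext i
    have := congrArg (PowerSeries.coeff i) h
    rw [PowerSeries.coeff_map, map_zero] at this
    rw [map_zero]
    exact (map_eq_zero σ).1 this
  set G := E * ∑ r ∈ Finset.range m, b' r * H ^ r with hG
  set C := ∑ r ∈ Finset.range m, a' r * H ^ r with hC
  have hGQ : HasQ G g := hEQ.mul (HasQ.sum _ fun r _ => (hbQ' r).mul (hHQ.pow r))
  have hCQ : HasQ C (P.map σ * g) := e1σ ▸ HasQ.sum _ fun r _ => (haQ' r).mul (hHQ.pow r)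
  refine ⟨m, n + (0 + 4 * ((m : ℤ) - 1)), C, G, s', P, g, hP, hGQ, hCQ, hg0, hs', ?_, ?_⟩
  · have e3 := homog_of_root _ _ (g * g) e2σ
    rw [show P.map σ * P.map σ * (g * g) = (P.map σ * g) * (P.map σ * g) by ring] at e3
    refine HasQ.fun_unique ?_ (e3 ▸ HasQ.zero)
    exact ((hCQ.mul hCQ).pow m).add (HasQ.sum _ fun r _ =>
      (hsQ' r).mul (((hCQ.mul hCQ).pow r).mul ((hGQ.mul hGQ).pow (m - r))))
  · intro γ hγ
    have hHγ := hH.slash_one (mem_Gamma0_iff.2 hγ)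
    constructor
    · rw [hG, ModularForm.mul_slash_SL2, hE.slash γ hγ, sum_slash_apply hb' hHγ, smul_mul_assoc]
    · rw [show k + (n + (0 + 4 * ((m : ℤ) - 1))) = (k + n) + 4 * ((m : ℤ) - 1) by ring]
      exact sum_slash_apply ha' hHγ

end

/-! ### Galois conjugation in level `Γ₀(D)` -/

section

open UpperHalfPlane hiding I
open scoped Manifold Topology MatrixGroups ModularForm
open Function Filter CongruenceSubgroup

/-- The ring of holomorphic functions on `ℍ`. -/
def holRing : Subring (ℍ → ℂ) where
  carrier := {F | MDiff F}
  mul_mem' ha hb := MDifferentiable.mul ha hb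
  one_mem' := mdifferentiable_const
  add_mem' ha hb := MDifferentiable.add ha hb
  zero_mem' := mdifferentiable_const
  neg_mem' ha := MDifferentiable.neg ha

lemma norm_le_of_sq_le {z : ℂ} {S : ℝ} (hS : 0 ≤ S) (h : ‖z * z‖ ≤ 1 + S) : ‖z‖ ≤ 1 + S := by
  rw [norm_mul] at h
  nlinarith [norm_nonneg z]

/-- Field endomorphisms of `ℂ` act on modular forms with character through their
`q`-expansions. -/
theorem GForm.galois {D n : ℕ} (hD : D ≠ 0) {χ : ℤ → ℂ} (hχ : NiceChar D n χ) (hn : 3 ≤ n)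
    (σ : ℂ →+* ℂ) {k : ℤ} {F : ℍ → ℂ} (hF : GForm D χ k F) :
    ∃ F' P, GForm D χ k F' ∧ HasQ F P ∧ HasQ F' (P.map σ) := by
  obtain ⟨m, K, C, G, s, P, g, hP, hGQ, hCQ, hg0, hs, heq, htr⟩ := galois_aux hD hχ hn σ hF
  have hG0 : G ≠ 0 := fun h => hg0 (hGQ.unique (h ▸ HasQ.zero))
  set S : ℍ → ℝ := fun τ => ∑ r ∈ Finset.range m, ‖s r τ‖ with hSdef
  have hS0 : ∀ τ, 0 ≤ S τ := fun τ => Finset.sum_nonneg fun _ _ => norm_nonneg _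
  have hroot : ∀ τ, G τ ≠ 0 → ((C τ / G τ) * (C τ / G τ)) ^ m +
      ∑ r ∈ Finset.range m, s r τ * ((C τ / G τ) * (C τ / G τ)) ^ r = 0 := by
    intro τ hτ
    refine root_of_homog (fun r => s r τ) _ (G τ * G τ) (mul_ne_zero hτ hτ) ?_
    rw [show C τ / G τ * (C τ / G τ) * (G τ * G τ) = C τ * C τ by field_simp]
    simpa [Finset.sum_apply] using congrFun heq τ
  obtain ⟨F', hF', hFG⟩ := exists_quotient hCQ.mdiff hGQ.mdiff hG0 (fun τ => 1 + S τ)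
    (continuous_const.add (continuous_finsetSum _ fun r _ => (hs r).mdiff.continuous.norm))
    fun τ hτ => norm_le_of_sq_le (hS0 τ) (root_bound _ _ (hroot τ hτ))
  -- `F' ^ 2` satisfies the monic equation also at the zeros of `G`
  set T : ℍ → ℂ := (F' * F') ^ m + ∑ r ∈ Finset.range m, s r * (F' * F') ^ r with hT
  have hTd : T ∈ holRing := by
    have h1 : F' ∈ holRing := hF'
    have h2 : ∀ r, s r ∈ holRing := fun r => (hs r).mdiff
    exact add_mem (pow_mem (mul_mem h1 h1) m)
      (sum_mem fun r _ => mul_mem (h2 r) (pow_mem (mul_mem h1 h1) r))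
  have hT0 : T = 0 := by
    refine ((UpperHalfPlane.mul_eq_zero_iff hTd hGQ.mdiff).1 ?_).resolve_right hG0
    ext τ
    by_cases hτ : G τ = 0
    · simp [hτ]
    · have hFτ : F' τ = C τ / G τ := by
        rw [← hFG, Pi.mul_apply, mul_div_cancel_right₀ _ hτ]
      have := hroot τ hτ
      rw [← hFτ] at this
      simp [hT, Finset.sum_apply, this]
  -- the coefficients `s r` are of level one, so every conjugate of `F' ^ 2` satisfies the same
  -- equation, which bounds it near `i∞`
  have hbd : ∀ γ : SL(2, ℤ), ∀ τ, ‖(F' ∣[k] γ) τ‖ ≤ 1 + S τ := by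
    intro γ τ
    refine norm_le_of_sq_le (hS0 τ) (root_bound (fun r => s r τ) _ ?_)
    have hJ := denom_ne_zero γ τ
    have h := congrFun hT0 (γ • τ)
    simp only [hT, Pi.add_apply, Pi.pow_apply, Pi.mul_apply, Finset.sum_apply, Pi.zero_apply] at h
    have hsr : ∀ r, s r (γ • τ) = denom γ τ ^ ((k + k) * ((m : ℤ) - (r : ℤ))) * s r τ := fun r => by
      rw [slash_apply_eq _ (s r), (hs r).slash]
    simp only [hsr, slash_apply_eq k F'] at h
    set J := denom γ τ
    set z := (F' ∣[k] γ) τ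
    have hJJ : J ^ k * z * (J ^ k * z) = J ^ (k + k) * (z * z) := by
      rw [zpow_add₀ hJ]; ring
    rw [hJJ] at h
    suffices hz : (J ^ (k + k)) ^ m *
        ((z * z) ^ m + ∑ r ∈ Finset.range m, s r τ * (z * z) ^ r) = 0 from
      (mul_eq_zero.1 hz).resolve_left (pow_ne_zero m (zpow_ne_zero (k + k) hJ))
    rw [← h, mul_add, mul_pow (J ^ (k + k)), Finset.mul_sum]
    congr 1
    refine Finset.sum_congr rfl fun r _ => ?_
    rw [mul_pow (J ^ (k + k)), ← zpow_natCast (J ^ (k + k)) m, ← zpow_natCast (J ^ (k + k)) r, ← zpow_mul, ← zpow_mul,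
      show (k + k) * (m : ℤ) = (k + k) * ((m : ℤ) - (r : ℤ)) + (k + k) * (r : ℤ) by ring,
      zpow_add₀ hJ]
    ring
  have hSb : IsBoundedAtImInfty (fun τ => ((1 + S τ : ℝ) : ℂ)) := by
    have h1 : (fun τ => ((1 + S τ : ℝ) : ℂ)) = 1 + ∑ r ∈ Finset.range m, fun τ => (‖s r τ‖ : ℂ) := by
      ext τ; simp [hSdef, Finset.sum_apply]
    have h2 : ∀ r, IsBoundedAtImInfty (fun τ => (‖s r τ‖ : ℂ)) := fun r => by
      obtain ⟨M, A, hM⟩ := isBoundedAtImInfty_iff.1 (hs r).bdd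
      exact isBoundedAtImInfty_iff.2 ⟨M, A, fun z hz => by simpa using hM z hz⟩
    rw [h1]
    have h3 : (1 + ∑ r ∈ Finset.range m, fun τ => (‖s r τ‖ : ℂ)) ∈
        Filter.boundedFilterSubalgebra ℂ atImInfty (β := ℂ) :=
      add_mem (one_mem _) (sum_mem fun r _ => h2 r)
    exact h3
  have hG' : GForm D χ k F' := by
    refine ⟨hF', fun γ hγ => ?_, fun γ => ?_⟩
    · obtain ⟨hGγ, hCγ⟩ := htr γ hγ
      have hsq := hχ.sq _ (isCoprime_of_dvd_lower hγ)
      have h1 : (F' ∣[k] γ) * (χ (γ 1 1) • G) = F' * G := by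
        rw [← hGγ, ← ModularForm.mul_slash_SL2, hFG, hCγ]
      have h2 : (χ (γ 1 1) • (F' ∣[k] γ) - F') * G = 0 := by
        rw [sub_mul, smul_mul_assoc, ← mul_smul_comm, h1, sub_self]
      have h3 := ((UpperHalfPlane.mul_eq_zero_iff
        (((slash_mdiff hF' k γ).const_smul _).sub hF') hGQ.mdiff).1 h2).resolve_right hG0
      rw [← sub_eq_zero.1 h3, smul_smul, hsq, one_smul, sub_eq_zero.1 h3]
    · obtain ⟨M, A, hM⟩ := isBoundedAtImInfty_iff.1 hSb
      refine isBoundedAtImInfty_iff.2 ⟨M, A, fun z hz => (hbd γ z).trans ?_⟩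
      have := hM z hz
      rw [Complex.norm_real, Real.norm_eq_abs] at this
      exact (le_abs_self _).trans this
  refine ⟨F', P, hG', hP, ?_⟩
  have hR := hG'.hasQ hχ.one
  have := (hR.mul hGQ).unique (hFG ▸ hCQ)
  rwa [mul_right_cancel₀ hg0 this] at hR

end

/-! ### Weakly holomorphic forms -/

section

open UpperHalfPlane hiding I
open scoped Manifold Topology MatrixGroups ModularForm
open Function Filter CongruenceSubgroup

lemma mdiff_inv {A : ℍ → ℂ} (hA : MDiff A) (h0 : ∀ τ, A τ ≠ 0) : MDiff (fun τ => (A τ)⁻¹) := by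
  rw [UpperHalfPlane.mdifferentiable_iff] at hA ⊢
  exact hA.inv fun z _ => h0 _

lemma HasQ.vadd {F : ℍ → ℂ} {P : PowerSeries ℂ} (h : HasQ F P) (τ : ℍ) :
    F ((1 : ℝ) +ᵥ τ) = F τ := by
  have := h.periodic (τ : ℂ)
  simp only [Function.comp_apply, ofComplex_apply] at this
  rw [← this]
  congr 1
  rw [show (τ : ℂ) + 1 = (((1 : ℝ) +ᵥ τ : ℍ) : ℂ) by simp [add_comm], ofComplex_apply]

/-- A nowhere vanishing function whose `q`-series has constant term `1` has an inverse with a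
`q`-series. -/
lemma HasQ.inv {A : ℍ → ℂ} {u : PowerSeries ℂ} (h : HasQ A u) (h1 : u.coeff 0 = 1)
    (h0 : ∀ τ, A τ ≠ 0) : ∃ v, HasQ (fun τ => (A τ)⁻¹) v ∧ u * v = 1 := by
  have hb : IsBoundedAtImInfty (fun τ => (A τ)⁻¹) := by
    obtain ⟨B, hB⟩ := (h.sub HasQ.one).tendsto_zero (by rw [map_sub, h1]; simp) (ε := 1 / 2) (by norm_num)
    refine isBoundedAtImInfty_iff.2 ⟨2, B, fun τ hτ => ?_⟩
    have h2 := hB τ hτ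
    have h3 : (1 : ℝ) / 2 ≤ ‖A τ‖ := by
      have := norm_sub_norm_le (1 : ℂ) (A τ)
      rw [norm_one, norm_sub_rev] at this
      simp only [Pi.sub_apply, Pi.one_apply] at h2
      linarith
    rw [norm_inv]
    calc ‖A τ‖⁻¹ ≤ (1 / 2 : ℝ)⁻¹ := by gcongr
      _ = 2 := by norm_num
  have hv := exists_hasQ (mdiff_inv h.mdiff h0) hb fun τ => by rw [h.vadd]
  refine ⟨_, hv, ((h.mul hv).unique ?_)⟩
  refine HasQ.one.congr ?_ rfl
  ext τ
  simp [mul_inv_cancel₀ (h0 τ)]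

lemma HasQ.div_q_pow {F : ℍ → ℂ} {P : PowerSeries ℂ} (N : ℕ)
    (h : HasQ (fun τ => F τ * Periodic.qParam 1 τ ^ N) (PowerSeries.X ^ N * P)) : HasQ F P := by
  induction N with
  | zero => simpa using h
  | succ N ih =>
    apply ih
    rw [pow_succ', mul_assoc] at h
    refine h.div_q.congr ?_ rfl
    ext τ
    have hq : Periodic.qParam 1 (τ : ℂ) ≠ 0 := Periodic.qParam_ne_zero _
    rw [pow_succ]
    field_simp

lemma pow_slash (A : ℍ → ℂ) (l : ℤ) (N : ℕ) (γ : SL(2, ℤ)) :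
    (A ^ N) ∣[l * (N : ℤ)] γ = (A ∣[l] γ) ^ N := by
  induction N with
  | zero =>
    ext τ
    simp [ModularForm.SL_slash_apply]
  | succ N ih =>
    rw [pow_succ, pow_succ, show l * ((N + 1 : ℕ) : ℤ) = l * N + l by push_cast; ring,
      ModularForm.mul_slash_SL2, ih]

lemma LForm.gform {k : ℤ} {F : ℍ → ℂ} (D : ℕ) (h : LForm k F) : GForm D 1 k F :=
  ⟨h.mdiff, fun γ _ => by rw [h.slash]; simp, fun γ => by rw [h.slash]; exact h.bdd⟩

/-- Modular forms of negative weight vanish: the square has trivial character, so that the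
vanishing theorem of Mathlib applies. -/
lemma GForm.eq_zero {D n : ℕ} (hD : D ≠ 0) {χ : ℤ → ℂ} (hχ : NiceChar D n χ) {k : ℤ} (hk : k < 0)
    {F : ℍ → ℂ} (h : GForm D χ k F) : F = 0 := by
  have : NeZero D := ⟨hD⟩
  have hS : GForm D 1 (k + k) (F * F) := (h.mul h).congr_char fun a ha => by
    simpa using hχ.sq a ha
  let g : ModularForm ((Gamma0 D).map (Matrix.SpecialLinearGroup.mapGL ℝ)) (k + k) :=
    { toFun := F * F
      slash_action_eq' := by
        rintro _ ⟨γ, hγ, rfl⟩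
        have := hS.slash_one hγ
        rwa [ModularForm.SL_slash] at this
      holo' := hS.mdiff
      bdd_at_cusps' := by
        intro c hc
        rw [OnePoint.isBoundedAt_iff_forall_SL2Z]
        · exact fun γ _ => hS.bdd γ
        · exact hc.mono (by rintro _ ⟨γ, -, rfl⟩; exact ⟨γ, rfl⟩) }
  have hg : g = 0 := ModularForm.isZero_of_neg_weight (by omega) g
  ext τ
  have : F τ * F τ = 0 := congrArg (fun x : ModularForm _ _ => x τ) hg
  simpa using this

/-- `f` is a weakly holomorphic form for `Γ₀(D)`, holomorphic outside the cusp `∞`, and `q ^ N * f`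
has the `q`-series `p`. -/
structure WForm (D : ℕ) (χ : ℤ → ℂ) (k : ℤ) (N : ℕ) (f : ℍ → ℂ) (p : PowerSeries ℂ) : Prop where
  mdiff : MDiff f
  slash : ∀ γ : SL(2, ℤ), (D : ℤ) ∣ γ 1 0 → f ∣[k] γ = χ (γ 1 1) • f
  bdd : ∀ γ : SL(2, ℤ), ¬ (D : ℤ) ∣ γ 1 0 → IsBoundedAtImInfty (f ∣[k] γ)
  hasQ : HasQ (fun τ => f τ * Periodic.qParam 1 τ ^ N) p

namespace WForm
variable {D N : ℕ} {χ : ℤ → ℂ} {k : ℤ} {f : ℍ → ℂ} {p : PowerSeries ℂ}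

lemma hasQ_mul_pow {A : ℍ → ℂ} {u : PowerSeries ℂ}
    (h : HasQ (fun τ => f τ * Periodic.qParam 1 τ ^ N) p) (hA : HasQ A (PowerSeries.X * u)) :
    HasQ (f * A ^ N) (p * u ^ N) := by
  refine (h.mul (hA.div_q.pow N)).congr ?_ rfl
  ext τ
  have hq : Periodic.qParam 1 (τ : ℂ) ≠ 0 := Periodic.qParam_ne_zero _
  simp only [Pi.mul_apply, Pi.pow_apply, div_pow]
  field_simp

/-- Multiplying by a power of a form that vanishes at `∞` removes the pole. -/
lemma gform_mul_pow (h : WForm D χ k N f p) {A : ℍ → ℂ} {l : ℤ} {u : PowerSeries ℂ}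
    (hA : GForm D 1 l A) (hAQ : HasQ A (PowerSeries.X * u)) :
    GForm D χ (k + l * N) (f * A ^ N) := by
  have hs : ∀ γ : SL(2, ℤ), (D : ℤ) ∣ γ 1 0 →
      (f * A ^ N) ∣[k + l * N] γ = χ (γ 1 1) • (f * A ^ N) := fun γ hγ => by
    rw [ModularForm.mul_slash_SL2, pow_slash, h.slash γ hγ,
      hA.slash_one (mem_Gamma0_iff.2 hγ), smul_mul_assoc]
  have hQ := hasQ_mul_pow h.hasQ hAQ
  refine ⟨hQ.mdiff, hs, fun γ => ?_⟩
  by_cases hγ : (D : ℤ) ∣ γ 1 0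
  · rw [hs γ hγ]
    exact (hQ.smul _).bdd
  · rw [ModularForm.mul_slash_SL2, pow_slash]
    have h1 : (A ∣[l] γ) ^ N ∈ niceRing :=
      pow_mem (show A ∣[l] γ ∈ niceRing from ⟨slash_mdiff hA.mdiff l γ, hA.bdd γ⟩) N
    exact (h.bdd γ hγ).mul h1.2

/-- Field endomorphisms of `ℂ` act on weakly holomorphic forms through their `q`-expansions. -/
theorem galois {n : ℕ} (hD : 1 < D) (hχ : NiceChar D n χ) (hn : 3 ≤ n) (σ : ℂ →+* ℂ)
    (h : WForm D χ k N f p) : ∃ f', WForm D χ k N f' (p.map σ) := by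
  obtain ⟨PΔ, hΔ, hΔσ, hΔ0, hΔ1⟩ := exists_discriminant_hasQ
  obtain ⟨H, PH, hH, hHQ, hHσ, hH0, -, hHε⟩ := exists_H D
  have hσ : ∀ u : PowerSeries ℂ, (PowerSeries.X * u).map σ = PowerSeries.X * u → u.map σ = u := by
    intro u hu
    rw [map_mul, PowerSeries.map_X] at hu
    exact mul_left_cancel₀ PowerSeries.X_ne_zero hu
  obtain ⟨δ, rfl⟩ : PowerSeries.X ∣ PΔ := PowerSeries.X_dvd_iff.2 (by simpa using hΔ0)
  obtain ⟨u, rfl⟩ : PowerSeries.X ∣ PH := PowerSeries.X_dvd_iff.2 (by simpa using hH0)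
  have hδσ := hσ δ (hΔσ σ)
  have huσ := hσ u (hHσ σ)
  have hδ1 : δ.coeff 0 = 1 := by
    rw [← hΔ1, show (1 : ℕ) = 0 + 1 by rfl, PowerSeries.coeff_succ_X_mul]
  have hΔG := discriminant_lform.gform D
  set Δ := ModularForm.discriminant with hΔdef
  have hΔne : ∀ τ, Δ τ ≠ 0 := ModularForm.discriminant_ne_zero
  obtain ⟨F₁, P₁, hF₁, hP₁, hF₁Q⟩ := (h.gform_mul_pow hΔG hΔ).galois (by omega) hχ hn σ
  obtain ⟨F₂, P₂, hF₂, hP₂, hF₂Q⟩ := (h.gform_mul_pow hH hHQ).galois (by omega) hχ hn σ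
  obtain rfl := hP₁.unique (hasQ_mul_pow h.hasQ hΔ)
  obtain rfl := hP₂.unique (hasQ_mul_pow h.hasQ hHQ)
  rw [map_mul, map_pow, hδσ] at hF₁Q
  rw [map_mul, map_pow, huσ] at hF₂Q
  obtain ⟨v, hv, hδv⟩ := hΔ.div_q.inv hδ1 fun τ =>
    div_ne_zero (hΔne τ) (Periodic.qParam_ne_zero _)
  set f' : ℍ → ℂ := F₁ * (fun τ => (Δ τ)⁻¹) ^ N with hf'
  have hff : f' * Δ ^ N = F₁ := by
    ext τ
    simp only [hf', Pi.mul_apply, Pi.pow_apply, inv_pow]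
    rw [mul_assoc, inv_mul_cancel₀ (pow_ne_zero _ (hΔne τ)), mul_one]
  have hQ : HasQ (fun τ => f' τ * Periodic.qParam 1 τ ^ N) (p.map σ) := by
    refine (hF₁Q.mul (hv.pow N)).congr ?_ ?_
    · ext τ
      simp only [hf', Pi.mul_apply, Pi.pow_apply, inv_div, div_pow, inv_pow]
      ring
    · rw [mul_assoc, ← mul_pow, hδv, one_pow, mul_one]
  have hfH : f' * H ^ N = F₂ := (hasQ_mul_pow hQ hHQ).fun_unique hF₂Q
  refine ⟨f', ?_, fun γ hγ => ?_, fun γ hγ => ?_, hQ⟩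
  · have h1 : F₁ ∈ holRing := hF₁.mdiff
    have h2 : (fun τ => (Δ τ)⁻¹) ∈ holRing := mdiff_inv hΔ.mdiff hΔne
    exact mul_mem h1 (pow_mem h2 N)
  · have h1 := hF₁.slash γ hγ
    rw [← hff, ModularForm.mul_slash_SL2, pow_slash, hΔG.slash_one (mem_Gamma0_iff.2 hγ),
      ← smul_mul_assoc] at h1
    ext τ
    exact mul_right_cancel₀ (pow_ne_zero N (hΔne τ)) (congrFun h1 τ)
  · obtain ⟨ε, hε, A, hA⟩ := hHε γ hγ
    have h1 := hF₂.bdd γ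
    rw [← hfH, ModularForm.mul_slash_SL2, pow_slash] at h1
    obtain ⟨M, A', hM⟩ := isBoundedAtImInfty_iff.1 h1
    refine isBoundedAtImInfty_iff.2 ⟨M / ε ^ N, max A A', fun τ hτ => ?_⟩
    have h2 := hA τ ((le_max_left _ _).trans hτ)
    have h3 := hM τ ((le_max_right _ _).trans hτ)
    rw [Pi.mul_apply, Pi.pow_apply, norm_mul, norm_pow] at h3
    rw [le_div_iff₀ (by positivity)]
    refine le_trans ?_ h3
    gcongr

/-- In negative weight a form without pole vanishes, so an endomorphism of `ℂ` that fixes the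
principal part of `f` fixes its whole `q`-expansion. -/
lemma coeff_fixed {n : ℕ} (hD : 1 < D) (hχ : NiceChar D n χ) (hn : 3 ≤ n) (hk : k < 0)
    (h : WForm D χ k N f p) (σ : ℂ →+* ℂ) (hp : ∀ m < N, σ (p.coeff m) = p.coeff m) :
    p.map σ = p := by
  obtain ⟨f', h'⟩ := h.galois hD hχ hn σ
  obtain ⟨R, hR⟩ : PowerSeries.X ^ N ∣ p - p.map σ := PowerSeries.X_pow_dvd_iff.2 fun m hm => by
    rw [map_sub, PowerSeries.coeff_map, hp m hm, sub_self]
  have hd := h.hasQ.sub h'.hasQ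
  have hφ : HasQ (f - f') R := by
    refine HasQ.div_q_pow N (hd.congr ?_ hR)
    ext τ
    simp [sub_mul]
  have hs : ∀ γ : SL(2, ℤ), (D : ℤ) ∣ γ 1 0 → (f - f') ∣[k] γ = χ (γ 1 1) • (f - f') :=
    fun γ hγ => by
      rw [sub_eq_add_neg, SlashAction.add_slash, SlashAction.neg_slash, h.slash γ hγ,
        h'.slash γ hγ, smul_add, smul_neg]
  have hG : GForm D χ k (f - f') := by
    refine ⟨hφ.mdiff, hs, fun γ => ?_⟩
    by_cases hγ : (D : ℤ) ∣ γ 1 0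
    · rw [hs γ hγ]
      exact (hφ.smul _).bdd
    · rw [sub_eq_add_neg, SlashAction.add_slash, SlashAction.neg_slash]
      exact (h.bdd γ hγ).add (h'.bdd γ hγ).neg
  have hff : f = f' := sub_eq_zero.1 (hG.eq_zero (by omega) hχ hk)
  exact h'.hasQ.unique (hff ▸ h.hasQ)

end WForm

/-- On `SL(2, ℤ)` the explicit slash action agrees with the one of Mathlib. -/
lemma slash_eq_slash (w : ℤ) (f : ℂ → ℂ) (γ : SL(2, ℤ)) (τ : ℍ) :
    ((fun z : ℍ => f z) ∣[w] γ) τ = slash w (matR γ) f τ := by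
  have hdet : (matR γ).det = 1 := by
    have h1 := Matrix.det_fin_two (γ : Matrix (Fin 2) (Fin 2) ℤ)
    rw [γ.det_coe] at h1
    rw [Matrix.det_fin_two]
    simp only [matR, Matrix.map_apply]
    exact_mod_cast h1.symm
  rw [ModularForm.SL_slash_apply, slash, hdet, Real.sqrt_one, Complex.ofReal_one, one_zpow,
    one_mul, mul_comm, ModularGroup.denom_apply, UpperHalfPlane.specialLinearGroup_apply]
  simp [matR]

lemma IsWeaklyHolInfty.wform {D : ℕ} {χ : ℤ → ℂ} {w : ℤ} {f : ℂ → ℂ} {c : ℤ → ℂ}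
    (h : IsWeaklyHolInfty D χ w f c) {N : ℕ} (hN : ∀ m : ℤ, m < -N → c m = 0) :
    WForm D χ w N (fun z : ℍ => f z) (PowerSeries.mk fun i => c (i - N)) := by
  refine ⟨?_, fun γ hγ => ?_, fun γ hγ => ?_, fun τ => ?_⟩
  · rw [UpperHalfPlane.mdifferentiable_iff]
    refine h.holo.congr fun z hz => ?_
    simp [ofComplex_apply_of_im_pos hz]
  · ext τ
    rw [slash_eq_slash, h.transform γ hγ τ τ.im_pos]
    rfl
  · obtain ⟨C, hC⟩ := h.bdd_at_other_cusps γ hγ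
    refine isBoundedAtImInfty_iff.2 ⟨C, 1, fun τ hτ => ?_⟩
    rw [slash_eq_slash]
    exact hC τ hτ
  · have hq : Periodic.qParam 1 (τ : ℂ) ≠ 0 := Periodic.qParam_ne_zero _
    have h1 := (h.fourier τ τ.im_pos).mul_right (Periodic.qParam 1 (τ : ℂ) ^ N)
    have hinj : Injective (fun i : ℕ => (i : ℤ) - N) := fun a b hab => by
      simpa using hab
    rw [← hinj.hasSum_iff] at h1
    · convert! h1 using 1
      ext i
      have he : Complex.exp (2 * (Real.pi : ℂ) * Complex.I * (((i : ℤ) - N : ℤ) : ℂ) * τ) =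
          Periodic.qParam 1 (τ : ℂ) ^ ((i : ℤ) - N) := by
        rw [Periodic.qParam, ← Complex.exp_int_mul]
        congr 1
        push_cast
        ring
      simp only [Function.comp_apply, PowerSeries.coeff_mk]
      rw [he, zpow_sub₀ hq, zpow_natCast, zpow_natCast]
      field_simp
    · intro m hm
      rw [hN m, zero_mul, zero_mul]
      by_contra hlt
      exact hm ⟨(m + N).toNat, by simp only; omega⟩

end

/-- If `f ∈ M^{!,∞}_{2-n}(D, χ_k^{n-2})` has integral Fourier coefficients `c(m)` for `m ≤ 0`,
then all of its Fourier coefficients are rational. -/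
theorem fourier_coefficients_rational
    (D : ℕ) (hD : Odd D) (hDsf : Squarefree D) (hD4 : D % 4 = 3)
    (n : ℕ) (hn : 3 ≤ n)
    (f : ℂ → ℂ) (c : ℤ → ℂ)
    (hf : IsWeaklyHolInfty D (fun a => ((chiK D a : ℤ) : ℂ) ^ (n - 2)) (2 - (n : ℤ)) f c)
    (hcint : ∀ m : ℤ, m ≤ 0 → ∃ z : ℤ, c m = (z : ℂ)) :
    ∀ m : ℤ, ∃ q : ℚ, c m = (q : ℂ) := by
  intro m
  obtain ⟨m₀, hm₀⟩ := hf.coeff_bddBelow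
  have hN : ∀ l : ℤ, l < -(m₀.toNat : ℤ) → c l = 0 := fun l hl => hm₀ l (by omega)
  have hw := hf.wform hN
  refine rational_of_fixed _ fun σ => ?_
  have hfix := hw.coeff_fixed (by omega) (niceChar_chiK D hD4 n hn) hn (by omega) (σ : ℂ →+* ℂ)
    fun i hi => by
      obtain ⟨z, hz⟩ := hcint ((i : ℤ) - m₀.toNat) (by omega)
      rw [PowerSeries.coeff_mk, hz, map_intCast]
  by_cases hm : m < -(m₀.toNat : ℤ)
  · rw [hN m hm, map_zero]
  · have := congrArg (PowerSeries.coeff (m + m₀.toNat).toNat) hfix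
    rw [PowerSeries.coeff_map, PowerSeries.coeff_mk,
      show (((m + m₀.toNat).toNat : ℕ) : ℤ) - m₀.toNat = m by omega] at this
    exact this
end
end

section
/- Let V be a ℚ-vector space and W ⊆ ℂ[[X]] a ℂ-subspace of finite dimension N. Let d : ℕ → V be a sequence such that for every ℚ-linear map α : V → ℂ the formal power series ∑_{m≥0} α(d(m))·X^m lies in W. Then the ℚ-subspace of V spanned by {d(m) : m ∈ ℕ} has dimension at most N. -/
/-!
Choose indices `a k`, `k ∈ κ`, such that the vectors `d (a k)` form a basis of the `ℚ`-span of
the `d m`. Extending the dual basis to `V` gives `ℚ`-linear functionals `α k : V → ℂ` with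
`α k (d (a j)) = δ_{jk}`. The associated power series all lie in `W`, and they are `ℂ`-linearly
independent because their coefficients at the indices `a j` form an identity matrix. Hence `κ`,
whose cardinality is the dimension of the span, has at most `N` elements.
-/

noncomputable section

/-- A `ℚ`-linearly independent family has a dual family of `ℂ`-valued `ℚ`-linear functionals
on the whole space. -/
theorem exists_dual_functionals {V κ : Type*} [AddCommGroup V] [Module ℚ V] [DecidableEq κ]
    {v : κ → V} (hv : LinearIndependent ℚ v) :
    ∃ α : κ → V →ₗ[ℚ] ℂ, ∀ k j, α k (v j) = if j = k then 1 else 0 := by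
  have key : ∀ k, ∃ α : V →ₗ[ℚ] ℂ, ∀ j, α (v j) = if j = k then 1 else 0 := by
    intro k
    let B := Module.Basis.span hv
    obtain ⟨g, hg⟩ := LinearMap.exists_extend
      (B.constr ℚ fun j => if j = k then (1 : ℂ) else 0)
    refine ⟨g, fun j => ?_⟩
    have h1 := LinearMap.congr_fun hg (B j)
    rw [Module.Basis.constr_basis] at h1
    rw [← h1]
    simp [B, Module.Basis.span_apply]
  choose α hα using key
  exact ⟨α, hα⟩

theorem span_of_modular_coefficients_finiteDimensional
    (V : Type*) [AddCommGroup V] [Module ℚ V]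
    (W : Submodule ℂ (PowerSeries ℂ)) (N : ℕ)
    (hW : Module.rank ℂ W = (N : Cardinal))
    (d : ℕ → V)
    (h : ∀ α : V →ₗ[ℚ] ℂ, (PowerSeries.mk fun m => α (d m)) ∈ W) :
    Module.rank ℚ (Submodule.span ℚ (Set.range d)) ≤ (N : Cardinal) := by
  classical
  obtain ⟨κ, a, -, hspan, hli⟩ := exists_linearIndependent' ℚ d
  obtain ⟨α, hα⟩ := exists_dual_functionals hli
  let f : κ → W := fun k => ⟨PowerSeries.mk fun m => α k (d m), h (α k)⟩
  have hf : LinearIndependent ℂ f := by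
    rw [linearIndependent_iff']
    intro s g hg j hj
    -- Reading off the coefficient at `a j` isolates `g j`.
    have h1 := congrArg (fun w : W => PowerSeries.coeff (a j) (w : PowerSeries ℂ)) hg
    have h2 : ∀ k, α k (d (a j)) = if j = k then 1 else 0 := fun k => hα k j
    simpa [f, h2, hj] using h1
  have hκ : Cardinal.mk κ ≤ N := hW ▸ hf.cardinal_le_rank
  rw [← hspan, rank_span hli]
  have h3 := Cardinal.mk_range_le_lift (f := d ∘ a)
  have h4 : Cardinal.lift.{_, 0} (Cardinal.mk κ) ≤ (N : Cardinal) := by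
    simpa using hκ
  simpa using h3.trans h4
end
end

section
/- For every τ in the upper half-plane ℍ and every z ∈ ℂ, with q = e^{2πiτ}, one has the identity i·∑_{n∈ℤ} e^{πi(n+1/2)²τ + 2πi(n+1/2)(z−1/2)} = ( e^{πiτ/12}·∏_{n≥1}(1−qⁿ) ) · ( e^{πiτ/6}·(e^{πiz} − e^{−πiz})·∏_{n≥1}(1 − e^{2πiz}qⁿ)(1 − e^{−2πiz}qⁿ) ); that is, i·ϑ₁(τ,z) = η(τ)·Θ(τ,z), where ϑ₁(τ,z) = ∑_{n∈ℤ} e^{πi(n+1/2)²τ + 2πi(n+1/2)(z−1/2)} is the classical Jacobi theta function, η(τ) = e^{πiτ/12}∏_{n≥1}(1−e^{2πinτ}) is the Dedekind eta function, and Θ is the displayed product. The series and all products converge absolutely. -/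
/-!
The identity is the Jacobi triple product in disguise. Put `q = e^{2πiτ}` and `w = e^{2πiz}`.
Dividing by `q^{1/8} w^{1/2}` turns it into
`∑_{n ∈ ℤ} (-1)ⁿ q^{n(n+1)/2} wⁿ = ∏_{n ≥ 1} (1 - qⁿ) (1 - w qⁿ) (1 - w⁻¹ qⁿ⁻¹)`.

The triple product is obtained as the limit of a finite identity. Write `(q)_m = ∏_{k=1}^m (1 - qᵏ)`.
The `q`-binomial theorem (`prod_one_add_mul_pow`) with `2N` factors and `x = -w q^{1-N}` gives,
after recentring the summation index at `N`,
`∏_{k=1}^N (1 - w qᵏ)(1 - w⁻¹ qᵏ⁻¹) =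
  ∑_{|n| ≤ N} (-1)ⁿ q^{n(n+1)/2} wⁿ (q)_{2N} / ((q)_{N+n} (q)_{N-n})` (`finite_triple_product`).
As `N → ∞` each coefficient tends to `1 / (q)_∞`. The coefficients are bounded uniformly in `N` and
`n`, since `(q)_m` converges to a nonzero limit, so dominated convergence for series applies
(`triple_product`).
-/

noncomputable section

open Filter Topology Finset

/-- The finite `q`-Pochhammer symbol `(q)_m = ∏_{k=1}^m (1 - qᵏ)`. -/
def qPoch (q : ℂ) (m : ℕ) : ℂ := ∏ k ∈ range m, (1 - q ^ (k + 1))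

lemma qPoch_succ (q : ℂ) (m : ℕ) : qPoch q (m + 1) = qPoch q m * (1 - q ^ (m + 1)) := by
  simp [qPoch, prod_range_succ]

lemma one_sub_pow_ne_zero {q : ℂ} (hq : ‖q‖ < 1) (k : ℕ) : 1 - q ^ (k + 1) ≠ 0 := by
  intro h
  have h1 : ‖q ^ (k + 1)‖ = 1 := by rw [← sub_eq_zero.mp h]; simp
  rw [norm_pow] at h1
  exact absurd h1 (pow_lt_one₀ (norm_nonneg _) hq (by omega)).ne

lemma qPoch_ne_zero {q : ℂ} (hq : ‖q‖ < 1) (m : ℕ) : qPoch q m ≠ 0 :=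
  prod_ne_zero_iff.mpr fun k _ => one_sub_pow_ne_zero hq k

/-- The Gaussian binomial coefficient as a quotient of Pochhammer symbols, with value `0` for
`j > m`. -/
def gaussCoeff (q : ℂ) (m j : ℕ) : ℂ :=
  if j ≤ m then qPoch q m / (qPoch q j * qPoch q (m - j)) else 0

lemma gaussCoeff_zero {q : ℂ} (hq : ‖q‖ < 1) (m : ℕ) : gaussCoeff q m 0 = 1 := by
  simp [gaussCoeff, qPoch_ne_zero hq, show qPoch q 0 = 1 by simp [qPoch]]

/-- The `q`-analogue of Pascal's rule. -/
lemma gaussCoeff_succ {q : ℂ} (hq : ‖q‖ < 1) {m j : ℕ} (hj : j ≤ m) :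
    gaussCoeff q (m + 1) (j + 1) = gaussCoeff q m (j + 1) + q ^ (m - j) * gaussCoeff q m j := by
  obtain ⟨d, rfl⟩ := Nat.exists_eq_add_of_le hj
  have h1 := qPoch_ne_zero hq j
  have h3 := one_sub_pow_ne_zero hq j
  rcases d with _ | d
  · have h2 := qPoch_ne_zero hq (j + 1)
    simp [gaussCoeff, h1, h2, show qPoch q 0 = 1 by simp [qPoch]]
  · have h2 := qPoch_ne_zero hq d
    have h4 := one_sub_pow_ne_zero hq d
    have e1 : j + (d + 1) + 1 - (j + 1) = d + 1 := by omega
    have e2 : j + (d + 1) - (j + 1) = d := by omega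
    have e3 : j + (d + 1) - j = d + 1 := by omega
    rw [gaussCoeff, gaussCoeff, gaussCoeff, if_pos (by omega), if_pos (by omega),
      if_pos (by omega), e1, e2, e3, qPoch_succ q (j + (d + 1)), qPoch_succ q j, qPoch_succ q d]
    field_simp
    ring

/-- The `q`-binomial theorem. -/
lemma prod_one_add_mul_pow {q : ℂ} (hq : ‖q‖ < 1) (x : ℂ) (m : ℕ) :
    ∏ k ∈ range m, (1 + x * q ^ k) =
      ∑ j ∈ range (m + 1), q ^ (j.choose 2) * gaussCoeff q m j * x ^ j := by
  induction m with
  | zero => simp [gaussCoeff_zero hq]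
  | succ m ih =>
    have hlast : gaussCoeff q m (m + 1) = 0 := by simp [gaussCoeff]
    have hshift : ∑ j ∈ range (m + 1), q ^ (j.choose 2) * gaussCoeff q m j * x ^ j =
        ∑ j ∈ range (m + 1), q ^ ((j + 1).choose 2) * gaussCoeff q m (j + 1) * x ^ (j + 1) + 1 := by
      have h := sum_range_succ (fun j => q ^ (j.choose 2) * gaussCoeff q m j * x ^ j) (m + 1)
      rw [sum_range_succ'] at h
      simpa [hlast, gaussCoeff_zero hq] using h.symm
    rw [prod_range_succ, ih, mul_add, mul_one, sum_range_succ' _ (m + 1), sum_mul]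
    nth_rewrite 1 [hshift]
    rw [add_right_comm, ← sum_add_distrib]
    congr 1
    · refine sum_congr rfl fun j hj => ?_
      have hj' : j ≤ m := by simpa [Nat.lt_succ_iff] using hj
      rw [gaussCoeff_succ hq hj']
      obtain ⟨d, rfl⟩ := Nat.exists_eq_add_of_le hj'
      have hc : (j + 1).choose 2 = j + j.choose 2 := by simp [Nat.choose_succ_succ' j 1]
      rw [hc, Nat.add_sub_cancel_left]
      ring
    · simp [gaussCoeff_zero hq]

/-- The finite form of the triple product, for a sequence `A` satisfying the recurrence of
`n ↦ (-1)ⁿ q^{n(n+1)/2} wⁿ`. -/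
lemma finite_triple_product {q w : ℂ} (hq : ‖q‖ < 1) (hq0 : q ≠ 0) (hw : w ≠ 0) {A : ℤ → ℂ}
    (hA0 : A 0 = 1) (hA : ∀ n, A (n + 1) = A n * (-(w * q ^ (n + 1)))) (N : ℕ) :
    (∏ k ∈ range N, (1 - w * q ^ (k + 1))) * ∏ k ∈ range N, (1 - w⁻¹ * q ^ k) =
      ∑ j ∈ range (2 * N + 1), A ((j : ℤ) - N) * gaussCoeff q (2 * N) j := by
  set x : ℂ := -(w * q ^ (1 - (N : ℤ))) with hx
  have hterm : ∀ j : ℕ, A ((j : ℤ) - N) = A (-N) * (q ^ (j.choose 2) * x ^ j) := by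
    intro j
    induction j with
    | zero => simp
    | succ j ih =>
      have hc : (j + 1).choose 2 = j + j.choose 2 := by simp [Nat.choose_succ_succ' j 1]
      have e : ((j + 1 : ℕ) : ℤ) - N = (j - N) + 1 := by push_cast; ring
      have e2 : (j : ℤ) - N + 1 = j + (1 - N) := by ring
      rw [e, hA, ih, e2, zpow_add₀ hq0, zpow_natCast, hc, hx]
      ring
  have hneg : ∀ M : ℕ, A (-M) * ∏ k ∈ range M, (1 - w * q ^ (-(k : ℤ))) =
      ∏ k ∈ range M, (1 - w⁻¹ * q ^ k) := by
    intro M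
    induction M with
    | zero => simp [hA0]
    | succ M ih =>
      have h := hA (-((M + 1 : ℕ) : ℤ))
      have e : -((M + 1 : ℕ) : ℤ) + 1 = -M := by push_cast; ring
      rw [e] at h
      rw [prod_range_succ, prod_range_succ, ← ih, h, zpow_neg, zpow_natCast]
      have := pow_ne_zero M hq0
      field_simp
      ring
  have hsplit : ∏ k ∈ range (2 * N), (1 + x * q ^ k) =
      (∏ k ∈ range N, (1 - w * q ^ (-(k : ℤ)))) * ∏ k ∈ range N, (1 - w * q ^ (k + 1)) := by
    rw [two_mul, prod_range_add, ← prod_range_reflect (fun k => 1 + x * q ^ k)]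
    congr 1 <;> refine prod_congr rfl fun k hk => ?_
    · have hk' : k < N := by simpa using hk
      have e : -(k : ℤ) = (1 - N) + ((N - 1 - k : ℕ) : ℤ) := by omega
      rw [e, zpow_add₀ hq0, zpow_natCast, hx]
      ring
    · have e : q ^ (k + 1) = q ^ (1 - (N : ℤ)) * q ^ (N + k) := by
        rw [← zpow_natCast, ← zpow_natCast, ← zpow_add₀ hq0]
        congr 1
        push_cast
        ring
      rw [e, hx]
      ring
  calc _ = A (-N) * ∏ k ∈ range (2 * N), (1 + x * q ^ k) := by
        rw [hsplit, ← hneg N]; ring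
    _ = _ := by
        rw [prod_one_add_mul_pow hq, mul_sum]
        refine sum_congr rfl fun j _ => ?_
        rw [hterm j]
        ring

lemma summable_mul_pow {q : ℂ} (hq : ‖q‖ < 1) (c : ℂ) : Summable fun n : ℕ => ‖-(c * q ^ n)‖ := by
  simpa using (summable_geometric_of_lt_one (norm_nonneg _) hq).mul_left ‖c‖

lemma multipliable_one_sub_mul_pow {q : ℂ} (hq : ‖q‖ < 1) (c : ℂ) :
    Multipliable fun n : ℕ => 1 - c * q ^ n := by
  simpa [sub_eq_add_neg] using multipliable_one_add_of_summable (summable_mul_pow hq c)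

lemma multipliable_one_sub_mul_pow_succ {q : ℂ} (hq : ‖q‖ < 1) (c : ℂ) :
    Multipliable fun n : ℕ => 1 - c * q ^ (n + 1) := by
  simpa [pow_succ', mul_assoc] using multipliable_one_sub_mul_pow hq (c * q)

lemma tendsto_qPoch {q : ℂ} (hq : ‖q‖ < 1) :
    Tendsto (qPoch q) atTop (𝓝 (∏' n : ℕ, (1 - q ^ (n + 1)))) := by
  change Tendsto (fun m => ∏ k ∈ range m, (1 - q ^ (k + 1))) atTop _
  simpa using (multipliable_one_sub_mul_pow_succ hq 1).tendsto_prod_tprod_nat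

lemma tprod_one_sub_pow_ne_zero {q : ℂ} (hq : ‖q‖ < 1) : ∏' n : ℕ, (1 - q ^ (n + 1)) ≠ 0 := by
  have := tprod_one_add_ne_zero_of_summable (f := fun n : ℕ => -(q * q ^ n))
    (fun n => by simpa [pow_succ', sub_eq_add_neg] using one_sub_pow_ne_zero hq n)
    (summable_mul_pow hq q)
  simpa [pow_succ', sub_eq_add_neg] using this

lemma exists_gaussCoeff_bound {q : ℂ} (hq : ‖q‖ < 1) :
    ∃ C : ℝ, ∀ m j, ‖gaussCoeff q m j‖ ≤ C := by
  obtain ⟨B, hB⟩ := (tendsto_qPoch hq).norm.bddAbove_range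
  obtain ⟨D, hD⟩ := ((tendsto_qPoch hq).inv₀ (tprod_one_sub_pow_ne_zero hq)).norm.bddAbove_range
  have hB' : ∀ m, ‖qPoch q m‖ ≤ B := fun m => hB ⟨m, rfl⟩
  have hD' : ∀ m, ‖(qPoch q m)⁻¹‖ ≤ D := fun m => hD ⟨m, rfl⟩
  have hB0 : 0 ≤ B := (norm_nonneg _).trans (hB' 0)
  have hD0 : 0 ≤ D := (norm_nonneg _).trans (hD' 0)
  refine ⟨B * (D * D), fun m j => ?_⟩
  unfold gaussCoeff
  split_ifs
  · rw [div_eq_mul_inv, mul_inv, norm_mul, norm_mul]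
    gcongr
    exacts [hB' _, hD' _, hD' _]
  · simpa using by positivity

/-- The Jacobi triple product, for a summable sequence `A` satisfying the recurrence of
`n ↦ (-1)ⁿ q^{n(n+1)/2} wⁿ`. -/
lemma triple_product {q w : ℂ} (hq : ‖q‖ < 1) (hq0 : q ≠ 0) (hw : w ≠ 0) {A : ℤ → ℂ}
    (hA0 : A 0 = 1) (hA : ∀ n, A (n + 1) = A n * (-(w * q ^ (n + 1)))) (hs : Summable A) :
    ∑' n, A n = (∏' n : ℕ, (1 - q ^ (n + 1))) *
      ((∏' n : ℕ, (1 - w * q ^ (n + 1))) * ∏' n : ℕ, (1 - w⁻¹ * q ^ n)) := by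
  set P : ℂ := ∏' n : ℕ, (1 - q ^ (n + 1)) with hP
  have hP0 : P ≠ 0 := tprod_one_sub_pow_ne_zero hq
  obtain ⟨C, hC⟩ := exists_gaussCoeff_bound hq
  let f : ℕ → ℤ → ℂ := fun N n =>
    if -(N : ℤ) ≤ n then A n * gaussCoeff q (2 * N) (n + N).toNat else 0
  have hsum : ∀ N : ℕ, ∑' n, f N n =
      (∏ k ∈ range N, (1 - w * q ^ (k + 1))) * ∏ k ∈ range N, (1 - w⁻¹ * q ^ k) := by
    intro N
    rw [finite_triple_product hq hq0 hw hA0 hA, tsum_eq_sum (s := Icc (-(N : ℤ)) N)]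
    · refine sum_bij' (fun n _ => (n + N).toNat) (fun j _ => (j : ℤ) - N) ?_ ?_ ?_ ?_ ?_
      · intro n hn; simp only [mem_Icc, mem_range] at *; omega
      · intro j hj; simp only [mem_Icc, mem_range] at *; omega
      · intro n hn; simp only [mem_Icc] at *; omega
      · intro j hj; omega
      · intro n hn
        simp only [mem_Icc] at hn
        have e : (((n + N).toNat : ℕ) : ℤ) - N = n := by omega
        simp only [f, if_pos hn.1, e]
    · intro n hn
      simp only [mem_Icc, not_and, not_le] at hn
      simp only [f, gaussCoeff]
      split_ifs with h1 h2
      · have := hn h1; omega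
      · simp
      · rfl
  have hlim : ∀ n : ℤ, Tendsto (fun N => f N n) atTop (𝓝 (A n * P⁻¹)) := by
    intro n
    have t1 : Tendsto (fun N : ℕ => qPoch q (2 * N)) atTop (𝓝 P) :=
      (tendsto_qPoch hq).comp (tendsto_atTop_mono (f := fun N : ℕ => N) (fun N => by omega) tendsto_id)
    have t2 : Tendsto (fun N : ℕ => qPoch q (n + N).toNat) atTop (𝓝 P) :=
      (tendsto_qPoch hq).comp (tendsto_atTop_mono (f := fun N : ℕ => N - n.natAbs)
        (fun N => by omega) (tendsto_sub_atTop_nat _))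
    have t3 : Tendsto (fun N : ℕ => qPoch q (2 * N - (n + N).toNat)) atTop (𝓝 P) :=
      (tendsto_qPoch hq).comp (tendsto_atTop_mono (f := fun N : ℕ => N - n.natAbs)
        (fun N => by omega) (tendsto_sub_atTop_nat _))
    have t := (t1.div (t2.mul t3) (mul_ne_zero hP0 hP0)).const_mul (A n)
    have e : P / (P * P) = P⁻¹ := by field_simp
    rw [e] at t
    refine t.congr' ?_
    filter_upwards [eventually_ge_atTop n.natAbs] with N hN
    simp only [f, gaussCoeff]
    rw [if_pos (by omega), if_pos (by omega)]
    rfl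
  have hdom := tendsto_tsum_of_dominated_convergence (𝓕 := atTop) (f := f)
    (bound := fun n => ‖A n‖ * C) (hs.norm.mul_right C) hlim (Eventually.of_forall fun N n => by
      have hC0 : 0 ≤ C := (norm_nonneg _).trans (hC 0 0)
      simp only [f]
      split_ifs
      · rw [norm_mul]
        gcongr
        exact hC _ _
      · simpa using by positivity)
  simp only [hsum] at hdom
  have hprod := (multipliable_one_sub_mul_pow_succ hq w).tendsto_prod_tprod_nat.mul
    (multipliable_one_sub_mul_pow hq w⁻¹).tendsto_prod_tprod_nat
  have h := tendsto_nhds_unique hdom hprod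
  rw [tsum_mul_right] at h
  rw [← h]
  field_simp

/-- `i ⬝ ϑ₁ = η ⬝ Θ`: for `τ` in the upper half plane and `z ∈ ℂ` one has
`i ∑_{n ∈ ℤ} e^{πi(n+1/2)²τ + 2πi(n+1/2)(z-1/2)}
  = (e^{πiτ/12} ∏_{n≥1}(1-qⁿ)) ⬝ (e^{πiτ/6}(e^{πiz}-e^{-πiz}) ∏_{n≥1}(1-e^{2πiz}qⁿ)(1-e^{-2πiz}qⁿ))`,
with all series and products converging absolutely. -/
theorem jacobi_theta_eq_eta_mul_Theta (τ : ℂ) (hτ : 0 < τ.im) (z : ℂ) :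
    Summable (fun n : ℤ =>
      Complex.exp ((Real.pi : ℂ) * Complex.I * ((n : ℂ) + 1 / 2) ^ 2 * τ
        + 2 * (Real.pi : ℂ) * Complex.I * ((n : ℂ) + 1 / 2) * (z - 1 / 2))) ∧
    Multipliable (fun n : ℕ =>
      (1 : ℂ) - Complex.exp (2 * (Real.pi : ℂ) * Complex.I * τ) ^ (n + 1)) ∧
    Multipliable (fun n : ℕ =>
      ((1 : ℂ) - Complex.exp (2 * (Real.pi : ℂ) * Complex.I * z) *
          Complex.exp (2 * (Real.pi : ℂ) * Complex.I * τ) ^ (n + 1)) *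
        (1 - Complex.exp (-(2 * (Real.pi : ℂ) * Complex.I * z)) *
          Complex.exp (2 * (Real.pi : ℂ) * Complex.I * τ) ^ (n + 1))) ∧
    Complex.I * ∑' n : ℤ,
        Complex.exp ((Real.pi : ℂ) * Complex.I * ((n : ℂ) + 1 / 2) ^ 2 * τ
          + 2 * (Real.pi : ℂ) * Complex.I * ((n : ℂ) + 1 / 2) * (z - 1 / 2)) =
      (Complex.exp ((Real.pi : ℂ) * Complex.I * τ / 12) *
          ∏' n : ℕ, ((1 : ℂ) - Complex.exp (2 * (Real.pi : ℂ) * Complex.I * τ) ^ (n + 1))) *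
        (Complex.exp ((Real.pi : ℂ) * Complex.I * τ / 6) *
          (Complex.exp ((Real.pi : ℂ) * Complex.I * z) -
            Complex.exp (-((Real.pi : ℂ) * Complex.I * z))) *
          ∏' n : ℕ,
            (((1 : ℂ) - Complex.exp (2 * (Real.pi : ℂ) * Complex.I * z) *
                Complex.exp (2 * (Real.pi : ℂ) * Complex.I * τ) ^ (n + 1)) *
              (1 - Complex.exp (-(2 * (Real.pi : ℂ) * Complex.I * z)) *
                Complex.exp (2 * (Real.pi : ℂ) * Complex.I * τ) ^ (n + 1)))) := by
  set q : ℂ := Complex.exp (2 * (Real.pi : ℂ) * Complex.I * τ) with hqdef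
  set w : ℂ := Complex.exp (2 * (Real.pi : ℂ) * Complex.I * z) with hwdef
  have hq : ‖q‖ < 1 := UpperHalfPlane.norm_exp_two_pi_I_lt_one ⟨τ, hτ⟩
  have hq0 : q ≠ 0 := Complex.exp_ne_zero _
  have hw : w ≠ 0 := Complex.exp_ne_zero _
  have hwinv : Complex.exp (-(2 * (Real.pi : ℂ) * Complex.I * z)) = w⁻¹ := Complex.exp_neg _
  have hm1 := multipliable_one_sub_mul_pow_succ hq w
  have hm2 := multipliable_one_sub_mul_pow_succ hq w⁻¹
  -- With this argument the theta term at `n` is `(-1)ⁿ q^{n(n+1)/2} wⁿ`.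
  set A : ℤ → ℂ := fun n => jacobiTheta₂_term n (z - 1 / 2 + τ / 2) τ with hAdef
  have hs : Summable A := (summable_jacobiTheta₂_term_iff _ τ).mpr hτ
  have hA0 : A 0 = 1 := by simp [A, jacobiTheta₂_term]
  have hA : ∀ n, A (n + 1) = A n * (-(w * q ^ (n + 1))) := by
    intro n
    have hneg : ∀ u : ℂ, -u = u * Complex.exp (-((Real.pi : ℂ) * Complex.I)) := by
      intro u; rw [Complex.exp_neg, Complex.exp_pi_mul_I]; norm_num
    rw [hneg, hwdef, hqdef, ← Complex.exp_int_mul]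
    simp only [A, jacobiTheta₂_term, ← Complex.exp_add]
    congr 1
    push_cast
    ring
  set c : ℂ := Complex.exp ((Real.pi : ℂ) * Complex.I * τ / 4 +
    (Real.pi : ℂ) * Complex.I * (z - 1 / 2)) with hc
  have hterm : ∀ n : ℤ, Complex.exp ((Real.pi : ℂ) * Complex.I * ((n : ℂ) + 1 / 2) ^ 2 * τ
      + 2 * (Real.pi : ℂ) * Complex.I * ((n : ℂ) + 1 / 2) * (z - 1 / 2)) = c * A n := by
    intro n
    simp only [A, jacobiTheta₂_term, hc, ← Complex.exp_add]
    congr 1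
    ring
  simp only [hterm, hwinv]
  refine ⟨hs.mul_left c, by simpa using multipliable_one_sub_mul_pow_succ hq 1, hm1.mul hm2, ?_⟩
  have hIc : Complex.I * c = Complex.exp ((Real.pi : ℂ) * Complex.I * τ / 12) *
      Complex.exp ((Real.pi : ℂ) * Complex.I * τ / 6) *
      Complex.exp ((Real.pi : ℂ) * Complex.I * z) := by
    nth_rewrite 1 [← Complex.exp_pi_div_two_mul_I]
    rw [hc, ← Complex.exp_add, ← Complex.exp_add, ← Complex.exp_add]
    congr 1
    ring
  have hw1 : Complex.exp ((Real.pi : ℂ) * Complex.I * z) * (1 - w⁻¹) =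
      Complex.exp ((Real.pi : ℂ) * Complex.I * z) -
        Complex.exp (-((Real.pi : ℂ) * Complex.I * z)) := by
    rw [mul_sub, mul_one, ← hwinv, ← Complex.exp_add]
    congr 2
    ring
  have hzero : ∏' n : ℕ, (1 - w⁻¹ * q ^ n) =
      (1 - w⁻¹) * ∏' n : ℕ, (1 - w⁻¹ * q ^ (n + 1)) := by
    simpa using tprod_eq_zero_mul' (f := fun n : ℕ => 1 - w⁻¹ * q ^ n) hm2
  rw [tsum_mul_left, triple_product hq hq0 hw hA0 hA hs, hzero, hm1.tprod_mul hm2, ← hw1,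
    ← mul_assoc, hIc]
  ring
end
end

section
/- Let 𝔟 be a nonzero fractional O_k-ideal of an imaginary quadratic field k. Then the hermitian form ⟨b₁,b₂⟩ = b₁·conj(b₂)/N(𝔟) on 𝔟 satisfies: (a) ⟨b₁,b₂⟩ ∈ O_k for all b₁, b₂ ∈ 𝔟; (b) it is positive definite, i.e. ⟨b,b⟩ ∈ ℚ and ⟨b,b⟩ > 0 for every nonzero b ∈ 𝔟; (c) 𝔟 is self-dual with respect to it, i.e. {x ∈ k : x·conj(b)/N(𝔟) ∈ O_k for all b ∈ 𝔟} = 𝔟. Moreover this form is unique: if c ∈ ℚ with c > 0 satisfies {x ∈ k : c·x·conj(b) ∈ O_k for all b ∈ 𝔟} = 𝔟, then c = 1/N(𝔟). -/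
/-!
The heart of the matter is the ideal identity `I · σ(I) = (N(I))` for a nonzero integral ideal `I`
(`mul_map_conj_eq_span_absNorm`).

* The two complex embeddings of `K` are `φ` and `φ ∘ σ`, and `φ ∘ σ` is the complex conjugate of
  `φ` since `K` has no real embedding. Hence `b · σ b = Norm(b)`, which is positive for `b ≠ 0`.
* For `b₁, b₂ ∈ I` the element `b₁ · σ b₂ / N(I)` has trace
  `(Norm(b₁ + b₂) - Norm(b₁) - Norm(b₂)) / N(I)` and norm `Norm(b₁) Norm(b₂) / N(I)²`. Both are
  integers because `N(I)` divides the norm of each element of `I`, so the element is integral.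
  Thus `I · σ(I) ⊆ (N(I))`, and as both ideals have absolute norm `N(I)²`, they agree.
* Writing `N(I)` as a sum of products `i · σ j` shows that `I` is its own dual. A fractional ideal
  is reduced to its numerator by clearing the denominator `d`, using `Norm(d) = d · σ d`.
* If `c > 0` also makes `𝔟` self-dual, then `(c N(𝔟)) 𝔟 = 𝔟`, and taking absolute norms gives
  `(c N(𝔟))² = 1`.
-/

noncomputable section

open NumberField

namespace SelfDualHermitian

variable {K : Type*} [Field K] [NumberField K]

/-- Over a quadratic field without real embeddings, a nontrivial ring endomorphism `σ` becomes
complex conjugation under any complex embedding: `φ`, `φ ∘ σ` and the conjugate of `φ` cannot be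
three distinct embeddings. -/
theorem embedding_conj [DecidableEq (K →+* ℂ)] (hdeg : Module.finrank ℚ K = 2) (himag : IsEmpty (K →+* ℝ))
    (σ : K →+* K) (hσne : σ ≠ RingHom.id K) (φ : K →+* ℂ) :
    φ.comp σ ≠ φ ∧ (Finset.univ : Finset (K →+* ℂ)) = {φ, φ.comp σ} ∧
      ∀ x, φ (σ x) = starRingEnd ℂ (φ x) := by
  have h1 : φ.comp σ ≠ φ := by
    intro h
    apply hσne
    ext x
    exact φ.injective (RingHom.congr_fun h x)
  have h2 : (Finset.univ : Finset (K →+* ℂ)) = {φ, φ.comp σ} := by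
    symm
    apply Finset.eq_univ_of_card
    rw [Finset.card_pair h1.symm, NumberField.Embeddings.card, hdeg]
  refine ⟨h1, h2, ?_⟩
  have h3 : ComplexEmbedding.conjugate φ ≠ φ := by
    intro h
    exact himag.false (ComplexEmbedding.IsReal.embedding (φ := φ) h)
  have h4 : ComplexEmbedding.conjugate φ ∈ ({φ, φ.comp σ} : Finset (K →+* ℂ)) :=
    h2 ▸ Finset.mem_univ _
  simp only [Finset.mem_insert, Finset.mem_singleton, h3, false_or] at h4
  intro x
  exact (RingHom.congr_fun h4 x).symm

theorem norm_eq_mul_conj (hdeg : Module.finrank ℚ K = 2) (himag : IsEmpty (K →+* ℝ))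
    (σ : K →+* K) (hσne : σ ≠ RingHom.id K) (x : K) :
    ((Algebra.norm ℚ x : ℚ) : K) = x * σ x := by
  classical
  obtain ⟨φ⟩ : Nonempty (K →+* ℂ) := inferInstance
  obtain ⟨h1, h2, -⟩ := embedding_conj hdeg himag σ hσne φ
  apply φ.injective
  have h := Algebra.norm_eq_prod_embeddings ℚ ℂ x
  rw [← (RingHom.equivRatAlgHom K ℂ).prod_comp] at h
  have h5 : ∏ f : K →+* ℂ, (RingHom.equivRatAlgHom K ℂ f) x = ∏ f : K →+* ℂ, f x := rfl
  rw [h5, h2, Finset.prod_pair h1.symm] at h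
  simpa using h

theorem norm_pos (hdeg : Module.finrank ℚ K = 2) (himag : IsEmpty (K →+* ℝ))
    (σ : K →+* K) (hσne : σ ≠ RingHom.id K) {x : K} (hx : x ≠ 0) :
    0 < Algebra.norm ℚ x := by
  classical
  obtain ⟨φ⟩ : Nonempty (K →+* ℂ) := inferInstance
  obtain ⟨-, -, h3⟩ := embedding_conj hdeg himag σ hσne φ
  have h := congrArg φ (norm_eq_mul_conj hdeg himag σ hσne x)
  rw [map_mul, h3, Complex.mul_conj, map_ratCast] at h
  have h' : ((Algebra.norm ℚ x : ℚ) : ℝ) = Complex.normSq (φ x) := by exact_mod_cast h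
  have h6 : 0 < Complex.normSq (φ x) := Complex.normSq_pos.2 (by simpa using hx)
  rw [← h'] at h6
  exact_mod_cast h6

/-- The involution `σ` as a ring automorphism of `K`. -/
def conjEquiv (σ : K →+* K) (hσσ : ∀ x : K, σ (σ x) = x) : K ≃+* K :=
  RingEquiv.ofRingHom σ σ (RingHom.ext hσσ) (RingHom.ext hσσ)

/-- The restriction of the involution `σ` to the ring of integers. -/
def conjInt (σ : K →+* K) (hσσ : ∀ x : K, σ (σ x) = x) : 𝓞 K ≃+* 𝓞 K :=
  RingOfIntegers.mapRingEquiv (conjEquiv σ hσσ)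

theorem absNorm_map_ringEquiv (e : 𝓞 K ≃+* 𝓞 K) (I : Ideal (𝓞 K)) :
    Ideal.absNorm (I.map (e : 𝓞 K →+* 𝓞 K)) = Ideal.absNorm I := by
  rw [Ideal.absNorm_apply, Ideal.absNorm_apply, Submodule.cardQuot_apply, Submodule.cardQuot_apply]
  exact (Nat.card_congr (Ideal.quotientEquiv I _ e rfl).toEquiv).symm

theorem norm_coe_eq_absNorm_mul {I : Ideal (𝓞 K)} {b : 𝓞 K} (hb : b ∈ I) :
    ∃ m : ℤ, Algebra.norm ℚ (b : K) = (Ideal.absNorm I : ℚ) * m := by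
  obtain ⟨m, hm⟩ := Ideal.absNorm_dvd_norm_of_mem hb
  refine ⟨m, ?_⟩
  rw [← Algebra.coe_norm_int, hm]
  push_cast
  rfl

/-- The form `b₁ · σ b₂ / N(I)` is integral on `I`: its trace is obtained by polarizing the norm. -/
theorem exists_mul_conj_eq_absNorm_mul (hdeg : Module.finrank ℚ K = 2)
    (himag : IsEmpty (K →+* ℝ)) (σ : K →+* K)
    (hσne : σ ≠ RingHom.id K) {I : Ideal (𝓞 K)} (hI : I ≠ ⊥) {a b : 𝓞 K}
    (ha : a ∈ I) (hb : b ∈ I) :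
    ∃ α : 𝓞 K, (a : K) * σ b = (Ideal.absNorm I : K) * α := by
  have hN : (Ideal.absNorm I : K) ≠ 0 := by
    rwa [Nat.cast_ne_zero, Ne, Ideal.absNorm_eq_zero_iff]
  have key : ∀ c ∈ I, ∃ m : ℤ, (c : K) * σ c = (Ideal.absNorm I : K) * m := by
    intro c hc
    obtain ⟨m, hm⟩ := norm_coe_eq_absNorm_mul hc
    refine ⟨m, ?_⟩
    rw [← norm_eq_mul_conj hdeg himag σ hσne, hm]
    push_cast
    rfl
  obtain ⟨m, hm⟩ := key a ha
  obtain ⟨n, hn⟩ := key b hb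
  obtain ⟨t, ht⟩ := key (a + b) (I.add_mem ha hb)
  have hint : IsIntegral ℤ ((a : K) * σ b / (Ideal.absNorm I : K)) := by
    refine ⟨Polynomial.X ^ 2 + (Polynomial.C (-(t - m - n)) * Polynomial.X +
      Polynomial.C (m * n)), ?_, ?_⟩
    · apply Polynomial.monic_X_pow_add
      compute_degree!
    · simp only [Polynomial.eval₂_add, Polynomial.eval₂_mul, Polynomial.eval₂_pow,
        Polynomial.eval₂_X, Polynomial.eval₂_C]
      simp only [eq_intCast]
      push_cast at ht ⊢
      rw [map_add] at ht
      have h1 : (a : K) * σ b + b * σ a = (Ideal.absNorm I : K) * (t - m - n) := by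
        linear_combination ht - hm - hn
      field_simp
      linear_combination ((a : K) * σ b) * h1 - (b : K) * σ b * hm -
        (Ideal.absNorm I : K) * m * hn
  refine ⟨⟨_, hint⟩, ?_⟩
  change _ = _ * ((a : K) * σ b / (Ideal.absNorm I : K))
  field_simp

theorem mul_map_conj_eq_span_absNorm (hdeg : Module.finrank ℚ K = 2)
    (himag : IsEmpty (K →+* ℝ)) (σ : K →+* K) (hσσ : ∀ x : K, σ (σ x) = x)
    (hσne : σ ≠ RingHom.id K) {I : Ideal (𝓞 K)} (hI : I ≠ ⊥) :
    I * I.map (conjInt σ hσσ : 𝓞 K →+* 𝓞 K) = Ideal.span {(Ideal.absNorm I : 𝓞 K)} := by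
  have hle : I * I.map (conjInt σ hσσ : 𝓞 K →+* 𝓞 K) ≤
      Ideal.span {(Ideal.absNorm I : 𝓞 K)} := by
    rw [Ideal.mul_le]
    intro a ha s hs
    obtain ⟨b, hb, rfl⟩ := (Ideal.mem_map_of_equiv (conjInt σ hσσ) s).1 hs
    obtain ⟨α, hα⟩ := exists_mul_conj_eq_absNorm_mul hdeg himag σ hσne hI ha hb
    rw [Ideal.mem_span_singleton]
    refine ⟨α, RingOfIntegers.ext ?_⟩
    push_cast
    rw [← hα]
    rfl
  obtain ⟨J, hJ⟩ := Ideal.dvd_iff_le.2 hle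
  have hn := congrArg Ideal.absNorm hJ
  have hN : Ideal.absNorm I ≠ 0 := by rwa [Ne, Ideal.absNorm_eq_zero_iff]
  rw [map_mul, map_mul, absNorm_map_ringEquiv, Ideal.absNorm_span_natCast,
    RingOfIntegers.rank, hdeg, ← sq] at hn
  -- Both sides have the same absolute norm, so the cofactor `J` has norm one.
  have hJ1 : Ideal.absNorm J = 1 := by
    have : Ideal.absNorm I ^ 2 * Ideal.absNorm J = Ideal.absNorm I ^ 2 * 1 := by
      rw [← hn, mul_one]
    exact Nat.eq_of_mul_eq_mul_left (by positivity) this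
  rw [Ideal.absNorm_eq_one_iff] at hJ1
  rw [hJ, hJ1, Ideal.mul_top]

theorem integral_selfdual (hdeg : Module.finrank ℚ K = 2)
    (himag : IsEmpty (K →+* ℝ)) (σ : K →+* K) (hσσ : ∀ x : K, σ (σ x) = x)
    (hσne : σ ≠ RingHom.id K) {I : Ideal (𝓞 K)} (hI : I ≠ ⊥) (x : K) :
    (∀ b ∈ I, ∃ α : 𝓞 K, x * σ b = (Ideal.absNorm I : K) * α) ↔ ∃ j ∈ I, (j : K) = x := by
  constructor
  · intro h
    have hN : (Ideal.absNorm I : K) ≠ 0 := by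
      rwa [Nat.cast_ne_zero, Ne, Ideal.absNorm_eq_zero_iff]
    have hmem : ∀ y ∈ I * I.map (conjInt σ hσσ : 𝓞 K →+* 𝓞 K),
        ∃ j ∈ I, x * (y : K) = (Ideal.absNorm I : K) * j := by
      intro y hy
      refine Submodule.mul_induction_on hy ?_ ?_
      · intro i hi s hs
        obtain ⟨b, hb, rfl⟩ := (Ideal.mem_map_of_equiv (conjInt σ hσσ) s).1 hs
        obtain ⟨α, hα⟩ := h b hb
        refine ⟨i * α, I.mul_mem_right _ hi, ?_⟩
        push_cast
        change x * ((i : K) * σ b) = _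
        linear_combination (i : K) * hα
      · rintro y z ⟨j, hj, hj'⟩ ⟨k, hk, hk'⟩
        refine ⟨j + k, I.add_mem hj hk, ?_⟩
        push_cast
        linear_combination hj' + hk'
    obtain ⟨j, hj, hj'⟩ := hmem (Ideal.absNorm I : 𝓞 K) (by
      rw [mul_map_conj_eq_span_absNorm hdeg himag σ hσσ hσne hI]
      exact Ideal.mem_span_singleton_self _)
    refine ⟨j, hj, ?_⟩
    push_cast at hj'
    apply mul_left_cancel₀ hN
    rw [← hj', mul_comm]
  · rintro ⟨j, hj, rfl⟩ b hb
    exact exists_mul_conj_eq_absNorm_mul hdeg himag σ hσne hI hj hb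

open scoped Pointwise in
theorem mem_iff_den_mul_mem_num (𝔟 : FractionalIdeal (nonZeroDivisors (𝓞 K)) K) (x : K) :
    x ∈ 𝔟 ↔ ∃ j ∈ 𝔟.num, (j : K) = ((𝔟.den : 𝓞 K) : K) * x := by
  have h := 𝔟.den_mul_self_eq_num
  have hd : ((𝔟.den : 𝓞 K) : K) ≠ 0 := by
    simp
  constructor
  · intro hx
    have : 𝔟.den • x ∈ 𝔟.den • (𝔟 : Submodule (𝓞 K) K) :=
      Submodule.smul_mem_pointwise_smul _ _ _ hx
    rw [h] at this
    obtain ⟨j, hj, hj'⟩ := this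
    exact ⟨j, hj, hj'.trans (Algebra.smul_def (𝔟.den : 𝓞 K) x)⟩
  · rintro ⟨j, hj, hj'⟩
    have : (j : K) ∈ 𝔟.den • (𝔟 : Submodule (𝓞 K) K) := by
      rw [h]
      exact ⟨j, hj, rfl⟩
    obtain ⟨y, hy, hy'⟩ := this
    have h2 : ((𝔟.den : 𝓞 K) : K) * y = ((𝔟.den : 𝓞 K) : K) * x := by
      rw [← hj', ← hy']
      exact (Algebra.smul_def (𝔟.den : 𝓞 K) y).symm
    rw [← mul_left_cancel₀ hd h2]
    exact hy

/-- Self-duality of a fractional ideal, deduced from that of its numerator: with `d` the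
denominator, `N(𝔟) · (d · σ d)` is the norm of the numerator. -/
theorem fractional_selfdual (hdeg : Module.finrank ℚ K = 2)
    (himag : IsEmpty (K →+* ℝ)) (σ : K →+* K) (hσσ : ∀ x : K, σ (σ x) = x)
    (hσne : σ ≠ RingHom.id K) (𝔟 : FractionalIdeal (nonZeroDivisors (𝓞 K)) K) (h𝔟 : 𝔟 ≠ 0)
    (x : K) :
    (∀ b ∈ 𝔟, ∃ α : 𝓞 K,
      algebraMap (𝓞 K) K α = x * σ b / ((FractionalIdeal.absNorm 𝔟 : ℚ) : K)) ↔ x ∈ 𝔟 := by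
  have hI : 𝔟.num ≠ ⊥ := fun h ↦
    h𝔟 (FractionalIdeal.zero_of_num_eq_bot zero_notMem_nonZeroDivisors h)
  have hd : ((𝔟.den : 𝓞 K) : K) ≠ 0 := by simp
  have hσd : σ ((𝔟.den : 𝓞 K) : K) ≠ 0 := by simp
  have hN : (Ideal.absNorm 𝔟.num : K) ≠ 0 := by
    rwa [Nat.cast_ne_zero, Ne, Ideal.absNorm_eq_zero_iff]
  have habs : ((FractionalIdeal.absNorm 𝔟 : ℚ) : K) =
      (Ideal.absNorm 𝔟.num : K) / (((𝔟.den : 𝓞 K) : K) * σ ((𝔟.den : 𝓞 K) : K)) := by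
    rw [FractionalIdeal.absNorm_eq, ← norm_eq_mul_conj hdeg himag σ hσne, Int.cast_abs,
      Algebra.coe_norm_int, abs_of_pos (norm_pos hdeg himag σ hσne hd)]
    push_cast
    rfl
  rw [mem_iff_den_mul_mem_num, ← integral_selfdual hdeg himag σ hσσ hσne hI, habs]
  constructor
  · intro h b hb
    obtain ⟨α, hα⟩ := h (b / ((𝔟.den : 𝓞 K) : K)) ((mem_iff_den_mul_mem_num _ _).2
      ⟨b, hb, by field_simp⟩)
    refine ⟨α, ?_⟩
    change (α : K) = _ at hα
    rw [hα, map_div₀]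
    field_simp
  · intro h b hb
    obtain ⟨j, hj, hj'⟩ := (mem_iff_den_mul_mem_num _ _).1 hb
    obtain ⟨α, hα⟩ := h j hj
    refine ⟨α, ?_⟩
    rw [hj', map_mul] at hα
    change (α : K) = _
    field_simp
    linear_combination -hα

/-- A positive rational `q` with `q 𝔟 = 𝔟` equals `1`, by comparing absolute norms. -/
theorem eq_one_of_mul_mem_iff (hdeg : Module.finrank ℚ K = 2)
    (𝔟 : FractionalIdeal (nonZeroDivisors (𝓞 K)) K) (h𝔟 : 𝔟 ≠ 0) {q : ℚ} (hq : 0 < q)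
    (h : ∀ x : K, (q : K) * x ∈ 𝔟 ↔ x ∈ 𝔟) : q = 1 := by
  have hqK : (q : K) ≠ 0 := by exact_mod_cast hq.ne'
  have heq : FractionalIdeal.spanSingleton (nonZeroDivisors (𝓞 K)) (q : K) * 𝔟 = 𝔟 := by
    ext x
    rw [FractionalIdeal.mem_singleton_mul]
    constructor
    · rintro ⟨y, hy, rfl⟩
      exact (h y).2 hy
    · intro hx
      refine ⟨(q : K)⁻¹ * x, ?_, by field_simp⟩
      rw [← h]
      rwa [mul_inv_cancel_left₀ hqK]
  have hn := congrArg FractionalIdeal.absNorm heq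
  rw [map_mul, FractionalIdeal.absNorm_span_singleton] at hn
  have hne : FractionalIdeal.absNorm 𝔟 ≠ 0 := by rwa [Ne, FractionalIdeal.absNorm_eq_zero_iff]
  have h1 := (mul_eq_right₀ hne).1 hn
  have h2 : Algebra.norm ℚ (q : K) = q ^ 2 := by
    rw [← hdeg]
    exact Algebra.norm_algebraMap q
  rw [h2, abs_of_nonneg (sq_nonneg q)] at h1
  exact (pow_eq_one_iff_of_nonneg hq.le two_ne_zero).1 h1

end SelfDualHermitian

theorem fractional_ideal_selfdual_hermitian_form
    (K : Type*) [Field K] [NumberField K]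
    (hdeg : Module.finrank ℚ K = 2) (himag : IsEmpty (K →+* ℝ))
    -- the nontrivial automorphism x ↦ conj x of K
    (σ : K →+* K) (hσσ : ∀ x : K, σ (σ x) = x) (hσne : σ ≠ RingHom.id K)
    -- the nonzero fractional ideal 𝔟 with absolute norm N(𝔟)
    (𝔟 : FractionalIdeal (nonZeroDivisors (𝓞 K)) K) (h𝔟 : 𝔟 ≠ 0) :
    -- (a) the form takes values in O_k on 𝔟
    (∀ b₁ ∈ 𝔟, ∀ b₂ ∈ 𝔟, ∃ α : 𝓞 K,
        algebraMap (𝓞 K) K α = b₁ * σ b₂ / ((FractionalIdeal.absNorm 𝔟 : ℚ) : K)) ∧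
      -- (b) positive definiteness
      (∀ b ∈ 𝔟, b ≠ (0 : K) → ∃ q : ℚ, 0 < q ∧
        (q : K) = b * σ b / ((FractionalIdeal.absNorm 𝔟 : ℚ) : K)) ∧
      -- (c) self-duality
      (∀ x : K,
        (∀ b ∈ 𝔟, ∃ α : 𝓞 K,
          algebraMap (𝓞 K) K α = x * σ b / ((FractionalIdeal.absNorm 𝔟 : ℚ) : K)) ↔ x ∈ 𝔟) ∧
      -- uniqueness: any positive rational `c` making 𝔟 self-dual equals 1/N(𝔟)
      (∀ c : ℚ, 0 < c →
        (∀ x : K, (∀ b ∈ 𝔟, ∃ α : 𝓞 K,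
          algebraMap (𝓞 K) K α = (c : K) * (x * σ b)) ↔ x ∈ 𝔟) →
        c = 1 / FractionalIdeal.absNorm 𝔟) := by
  have hdual := SelfDualHermitian.fractional_selfdual hdeg himag σ hσσ hσne 𝔟 h𝔟
  have hne : FractionalIdeal.absNorm 𝔟 ≠ 0 := by rwa [Ne, FractionalIdeal.absNorm_eq_zero_iff]
  have hpos : 0 < FractionalIdeal.absNorm 𝔟 :=
    lt_of_le_of_ne (FractionalIdeal.absNorm_nonneg 𝔟) hne.symm
  have hneK : ((FractionalIdeal.absNorm 𝔟 : ℚ) : K) ≠ 0 := by exact_mod_cast hne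
  refine ⟨fun b₁ h₁ ↦ (hdual b₁).2 h₁, ?_, hdual, ?_⟩
  · intro b _ hb
    refine ⟨Algebra.norm ℚ b / FractionalIdeal.absNorm 𝔟,
      div_pos (SelfDualHermitian.norm_pos hdeg himag σ hσne hb) hpos, ?_⟩
    rw [Rat.cast_div, SelfDualHermitian.norm_eq_mul_conj hdeg himag σ hσne]
  · intro c hc h
    -- Scaling the form by `q = c · N(𝔟)` replaces the dual lattice `𝔟` by `q⁻¹ 𝔟`.
    have hq : c * FractionalIdeal.absNorm 𝔟 = 1 := by
      refine SelfDualHermitian.eq_one_of_mul_mem_iff hdeg 𝔟 h𝔟 (mul_pos hc hpos) fun x ↦ ?_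
      rw [← hdual, ← h x]
      have hform : ∀ b : K, ((c * FractionalIdeal.absNorm 𝔟 : ℚ) : K) * x * σ b /
          ((FractionalIdeal.absNorm 𝔟 : ℚ) : K) = (c : K) * (x * σ b) := by
        intro b
        push_cast
        field_simp
      simp only [hform]
    exact eq_one_div_of_mul_eq_one_left hq
end
end

section
/- Let k ⊂ ℂ be an imaginary quadratic field with ring of integers O_k. Let τ ∈ ℂ with Im(τ) ≠ 0 and suppose the ℤ-submodule Λ = ℤτ + ℤ of ℂ is stable under multiplication by O_k, i.e. αλ ∈ Λ for all α ∈ O_k and λ ∈ Λ. Then τ ∈ k, Λ ⊂ k, and Λ is a fractional O_k-ideal of k. -/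
/-!
Since `[K : ℚ] = 2`, some `α ∈ 𝓞 K` is not a rational integer. Stability applied to `α` and
`1 ∈ Λ` gives `α = aτ + b` with `a, b ∈ ℤ`, and `a ≠ 0` by the choice of `α`; hence
`τ = (α - b) / a ∈ K` and `Λ ⊆ K`. Stability then says that `Λ` is an `𝓞 K`-submodule of `K`,
and `a Λ ⊆ 𝓞 K`, so `Λ` is fractional.
-/

noncomputable section

open NumberField

theorem exists_integer_not_rational (K : Type*) [Field K] [NumberField K]
    (hdeg : Module.finrank ℚ K = 2) :
    ∃ α : 𝓞 K, ∀ b : ℤ, algebraMap (𝓞 K) K α ≠ (b : K) := by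
  by_contra! h
  -- Every element of `K` is a quotient of algebraic integers, so it would be rational.
  have hspan : ∀ w : K, ∃ c : ℚ, c • (1 : K) = w := by
    intro w
    obtain ⟨x, y, -, rfl⟩ := IsFractionRing.div_surjective (A := 𝓞 K) w
    obtain ⟨m, hm⟩ := h x
    obtain ⟨n, hn⟩ := h y
    refine ⟨(m : ℚ) / n, ?_⟩
    rw [hm, hn, Algebra.smul_def, mul_one]
    simp
  have h1 : Module.finrank ℚ K = 1 := finrank_eq_one (1 : K) one_ne_zero hspan
  omega

theorem lattice_stable_is_fractional_ideal
    (K : Type*) [Field K] [NumberField K]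
    (hdeg : Module.finrank ℚ K = 2) (himag : IsEmpty (K →+* ℝ))
    (emb : K →+* ℂ)
    (τ : ℂ) (hτ : τ.im ≠ 0)
    (hstable : ∀ (α : 𝓞 K) (z : ℂ), (∃ a b : ℤ, z = (a : ℂ) * τ + (b : ℂ)) →
      ∃ a b : ℤ, emb (algebraMap (𝓞 K) K α) * z = (a : ℂ) * τ + (b : ℂ)) :
    (∃ t : K, emb t = τ) ∧
      (∀ z : ℂ, (∃ a b : ℤ, z = (a : ℂ) * τ + (b : ℂ)) → ∃ x : K, emb x = z) ∧
      ∃ J : FractionalIdeal (nonZeroDivisors (𝓞 K)) K,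
        ∀ z : ℂ, (∃ x ∈ J, emb x = z) ↔ ∃ a b : ℤ, z = (a : ℂ) * τ + (b : ℂ) := by
  obtain ⟨α, hα⟩ := exists_integer_not_rational K hdeg
  obtain ⟨a, b, hab⟩ := hstable α 1 ⟨0, 1, by simp⟩
  have ha : a ≠ 0 := by
    rintro rfl
    apply hα b
    apply emb.injective
    simpa using hab
  have haK : (a : K) ≠ 0 := by exact_mod_cast ha
  have haC : (a : ℂ) ≠ 0 := by exact_mod_cast ha
  obtain ⟨t, ht⟩ : ∃ t : K, t = (algebraMap (𝓞 K) K α - b) / a := ⟨_, rfl⟩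
  have htτ : emb t = τ := by
    rw [mul_one] at hab
    rw [ht, map_div₀, map_sub, hab, map_intCast, map_intCast]
    field_simp
    ring
  have hemb : ∀ m n : ℤ, emb ((m : K) * t + n) = (m : ℂ) * τ + n := by
    intro m n
    simp [htτ]
  refine ⟨⟨t, htτ⟩, ?_, ?_⟩
  · rintro z ⟨m, n, rfl⟩
    exact ⟨_, hemb m n⟩
  · let L : Submodule (𝓞 K) K :=
      { carrier := {x | ∃ m n : ℤ, x = (m : K) * t + n}
        zero_mem' := ⟨0, 0, by simp⟩
        add_mem' := by
          rintro _ _ ⟨m, n, rfl⟩ ⟨m', n', rfl⟩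
          exact ⟨m + m', n + n', by push_cast; ring⟩
        smul_mem' := by
          rintro c _ ⟨m, n, rfl⟩
          obtain ⟨p, q, hpq⟩ := hstable c _ ⟨m, n, rfl⟩
          refine ⟨p, q, emb.injective ?_⟩
          rw [hemb, ← hpq, Algebra.smul_def, map_mul, hemb] }
    -- The integer `a` is a common denominator for `L`.
    have hL : IsFractional (nonZeroDivisors (𝓞 K)) L := by
      refine ⟨(a : 𝓞 K), mem_nonZeroDivisors_of_ne_zero (by exact_mod_cast ha), ?_⟩
      rintro _ ⟨m, n, rfl⟩
      refine ⟨m * (α - b) + n * a, ?_⟩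
      rw [Algebra.smul_def, ht]
      simp only [map_add, map_mul, map_sub, map_intCast]
      field_simp
    refine ⟨⟨L, hL⟩, fun z => ⟨?_, ?_⟩⟩
    · rintro ⟨x, ⟨m, n, rfl⟩, rfl⟩
      exact ⟨m, n, hemb m n⟩
    · rintro ⟨m, n, rfl⟩
      exact ⟨_, ⟨m, n, rfl⟩, hemb m n⟩
end
end

section
/- Let 𝔟 be a nonzero fractional O_k-ideal of an imaginary quadratic field k, and let L₀ be an O_k-module equipped with a form ⟨·,·⟩ : L₀ × L₀ → O_k that is O_k-linear in the first variable and satisfies ⟨y,x⟩ = conj(⟨x,y⟩); extend ⟨·,·⟩ to k ⊗_{O_k} L₀, k-linear in the first variable and conjugate-linear in the second. Then for every β in 𝔟·L₀ (the set of finite sums ∑ bᵢxᵢ with bᵢ ∈ 𝔟 and xᵢ ∈ L₀, viewed inside k ⊗_{O_k} L₀), one has ⟨β,β⟩ ∈ N(𝔟)·ℤ. -/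
/-!
For `b ∈ 𝔟` the element norm `b * σ b` lies in `N(𝔟) ℤ`, since `b O_K = 𝔟 J` with `J` integral and
the ideal norm is multiplicative. Polarizing `b ↦ b * σ b` gives `b * σ c + c * σ b ∈ N(𝔟) ℤ` for
`b, c ∈ 𝔟`. Hence for generators `b x` and `c y` of `𝔟 L₀` the cross term
`⟨b x, c y⟩ + ⟨c y, b x⟩` is in `N(𝔟) ℤ` (the polarized form at `b ⟨x, y⟩ ∈ 𝔟` and `c ∈ 𝔟`), and
by biadditivity this persists for all pairs in `𝔟 L₀`. On a generator,
`⟨b x, b x⟩ = (b * σ b) ⟨x, x⟩`, where `⟨x, x⟩` is integral and fixed by `σ`, so an integer. The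
theorem follows by induction over sums. The identity `𝔟 * σ 𝔟 = N(𝔟) O_K` is not required.
-/

noncomputable section

open NumberField

/-- The Galois group of a quadratic number field is `{1, σ}`. -/
lemma eq_one_or_eq_of_quadratic {K : Type*} [Field K] [NumberField K]
    (hdeg : Module.finrank ℚ K = 2) (σ : K →+* K) (hσσ : ∀ x : K, σ (σ x) = x)
    (hσne : σ ≠ RingHom.id K) :
    IsGalois ℚ K ∧ ∃ s : Gal(K/ℚ), (∀ x, s x = σ x) ∧ s ≠ 1 ∧ ∀ f : Gal(K/ℚ), f = 1 ∨ f = s := by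
  have : Algebra.IsQuadraticExtension ℚ K := { finrank_eq_two' := hdeg }
  have hG : IsGalois ℚ K := inferInstance
  let s : Gal(K/ℚ) :=
    AlgEquiv.ofRingEquiv (f := RingEquiv.ofRingHom σ σ (RingHom.ext hσσ) (RingHom.ext hσσ))
      (fun r => by simp)
  have hs : ∀ x, s x = σ x := fun x => rfl
  have hs1 : s ≠ 1 := fun h1 => hσne (RingHom.ext fun x => by
    rw [← hs, h1]; rfl)
  refine ⟨hG, s, hs, hs1, fun f => ?_⟩
  have hcard : Nat.card Gal(K/ℚ) = 2 := by rw [IsGalois.card_aut_eq_finrank, hdeg]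
  obtain ⟨y, -, hy⟩ := (Nat.card_eq_two_iff' (1 : Gal(K/ℚ))).1 hcard
  by_cases hf : f = 1
  · exact Or.inl hf
  · exact Or.inr ((hy f hf).trans (hy s hs1).symm)

lemma algebraMap_norm_eq_mul_conj {K : Type*} [Field K] [NumberField K]
    (hdeg : Module.finrank ℚ K = 2) (σ : K →+* K) (hσσ : ∀ x : K, σ (σ x) = x)
    (hσne : σ ≠ RingHom.id K) (x : K) :
    ((Algebra.norm ℚ x : ℚ) : K) = x * σ x := by
  classical
  obtain ⟨hG, s, hs, hs1, hall⟩ := eq_one_or_eq_of_quadratic hdeg σ hσσ hσne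
  have huniv : (Finset.univ : Finset Gal(K/ℚ)) = {1, s} := by
    ext f; simpa using hall f
  have := Algebra.norm_eq_prod_automorphisms ℚ x
  rw [huniv, Finset.prod_pair hs1.symm, hs] at this
  simpa using this

lemma exists_int_of_conj_eq {K : Type*} [Field K] [NumberField K]
    (hdeg : Module.finrank ℚ K = 2) (σ : K →+* K) (hσσ : ∀ x : K, σ (σ x) = x)
    (hσne : σ ≠ RingHom.id K) (a : 𝓞 K)
    (ha : σ (algebraMap (𝓞 K) K a) = algebraMap (𝓞 K) K a) :
    ∃ m : ℤ, algebraMap (𝓞 K) K a = (m : K) := by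
  obtain ⟨hG, s, hs, hs1, hall⟩ := eq_one_or_eq_of_quadratic hdeg σ hσσ hσne
  have hmem : algebraMap (𝓞 K) K a ∈ (⊥ : IntermediateField ℚ K) := by
    rw [IsGalois.mem_bot_iff_fixed]
    intro f
    rcases hall f with rfl | rfl
    · rfl
    · rw [hs, ha]
  obtain ⟨q, hq⟩ := IntermediateField.mem_bot.1 hmem
  have hint : IsIntegral ℤ (algebraMap ℚ K q) := by
    rw [hq]; exact a.isIntegral_coe
  rw [isIntegral_algebraMap_iff (algebraMap ℚ K).injective] at hint
  obtain ⟨m, hm⟩ := IsIntegrallyClosed.isIntegral_iff.1 hint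
  exact ⟨m, by rw [← hq, ← hm]; simp⟩

/-- An element norm of `b ∈ 𝔟` is a multiple of the ideal norm, because `b O_K = 𝔟 * J` with `J`
integral. -/
lemma mul_conj_mem {K : Type*} [Field K] [NumberField K]
    (hdeg : Module.finrank ℚ K = 2) (σ : K →+* K) (hσσ : ∀ x : K, σ (σ x) = x)
    (hσne : σ ≠ RingHom.id K)
    (𝔟 : FractionalIdeal (nonZeroDivisors (𝓞 K)) K) (h𝔟 : 𝔟 ≠ 0) {b : K} (hb : b ∈ 𝔟) :
    b * σ b ∈ AddSubgroup.zmultiples ((FractionalIdeal.absNorm 𝔟 : ℚ) : K) := by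
  have hle : FractionalIdeal.spanSingleton (nonZeroDivisors (𝓞 K)) b * 𝔟⁻¹ ≤ 1 := by
    rw [← mul_inv_cancel₀ h𝔟]
    gcongr
    exact (FractionalIdeal.spanSingleton_le_iff_mem).2 hb
  obtain ⟨J, hJ⟩ := FractionalIdeal.le_one_iff_exists_coeIdeal.1 hle
  have hmul : FractionalIdeal.spanSingleton (nonZeroDivisors (𝓞 K)) b = 𝔟 * J := by
    rw [hJ, mul_comm 𝔟, inv_mul_cancel_right₀ h𝔟]
  have habs := congrArg FractionalIdeal.absNorm hmul
  rw [map_mul, FractionalIdeal.coeIdeal_absNorm, FractionalIdeal.absNorm_span_singleton] at habs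
  rw [← algebraMap_norm_eq_mul_conj hdeg σ hσσ hσne b]
  have hN : ((|Algebra.norm ℚ b| : ℚ) : K) ∈
      AddSubgroup.zmultiples ((FractionalIdeal.absNorm 𝔟 : ℚ) : K) := by
    rw [habs, AddSubgroup.mem_zmultiples_iff]
    exact ⟨Ideal.absNorm J, by push_cast; rw [zsmul_eq_mul]; push_cast; ring⟩
  rcases abs_choice (Algebra.norm ℚ b) with h | h <;> rw [h] at hN
  · exact hN
  · simpa using hN

/-- Polarization of `mul_conj_mem`. -/
lemma mul_conj_add_mem {K : Type*} [Field K] [NumberField K]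
    (hdeg : Module.finrank ℚ K = 2) (σ : K →+* K) (hσσ : ∀ x : K, σ (σ x) = x)
    (hσne : σ ≠ RingHom.id K)
    (𝔟 : FractionalIdeal (nonZeroDivisors (𝓞 K)) K) (h𝔟 : 𝔟 ≠ 0) {b c : K}
    (hb : b ∈ 𝔟) (hc : c ∈ 𝔟) :
    b * σ c + c * σ b ∈ AddSubgroup.zmultiples ((FractionalIdeal.absNorm 𝔟 : ℚ) : K) := by
  have hbc : b + c ∈ 𝔟 := (𝔟 : Submodule (𝓞 K) K).add_mem hb hc
  have key := fun {x : K} (hx : x ∈ 𝔟) => mul_conj_mem hdeg σ hσσ hσne 𝔟 h𝔟 hx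
  have := sub_mem (sub_mem (key hbc) (key hb)) (key hc)
  convert this using 1
  rw [map_add]; ring

theorem herm_norm_in_ideal_norm_mul_int
    (K : Type*) [Field K] [NumberField K]
    (hdeg : Module.finrank ℚ K = 2) (himag : IsEmpty (K →+* ℝ))
    -- the nontrivial automorphism x ↦ conj x of K
    (σ : K →+* K) (hσσ : ∀ x : K, σ (σ x) = x) (hσne : σ ≠ RingHom.id K)
    -- the nonzero fractional ideal 𝔟
    (𝔟 : FractionalIdeal (nonZeroDivisors (𝓞 K)) K) (h𝔟 : 𝔟 ≠ 0)
    -- the hermitian O_k-module (L₀, h)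
    (L₀ : Type*) [AddCommGroup L₀] [Module (𝓞 K) L₀]
    (h : L₀ → L₀ → 𝓞 K)
    (hadd : ∀ x x' y : L₀, h (x + x') y = h x y + h x' y)
    (hsmul : ∀ (a : 𝓞 K) (x y : L₀), h (a • x) y = a * h x y)
    (hherm : ∀ x y : L₀,
      algebraMap (𝓞 K) K (h y x) = σ (algebraMap (𝓞 K) K (h x y)))
    -- V = k ⊗_{O_k} L₀, with the extension H of h (k-linear in the first variable,
    -- conjugate-linear in the second)
    (V : Type*) [AddCommGroup V] [Module K V]
    (ι : L₀ → V) (hι : ∀ x y : L₀, ι (x + y) = ι x + ι y)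
    (hιsmul : ∀ (a : 𝓞 K) (x : L₀), ι (a • x) = algebraMap (𝓞 K) K a • ι x)
    (H : V → V → K)
    (Hadd₁ : ∀ v v' w : V, H (v + v') w = H v w + H v' w)
    (Hadd₂ : ∀ v w w' : V, H v (w + w') = H v w + H v w')
    (Hsmul₁ : ∀ (a : K) (v w : V), H (a • v) w = a * H v w)
    (Hsmul₂ : ∀ (a : K) (v w : V), H v (a • w) = σ a * H v w)
    (Hcompat : ∀ x y : L₀, H (ι x) (ι y) = algebraMap (𝓞 K) K (h x y)) :
    -- conclusion: ⟨β,β⟩ ∈ N(𝔟) ℤ for every β ∈ 𝔟 L₀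
    ∀ β ∈ AddSubgroup.closure {v : V | ∃ b ∈ 𝔟, ∃ x : L₀, v = b • ι x},
      ∃ m : ℤ, H β β = ((FractionalIdeal.absNorm 𝔟 : ℚ) : K) * (m : K) := by
  set M := AddSubgroup.zmultiples ((FractionalIdeal.absNorm 𝔟 : ℚ) : K) with hM
  have H0l : ∀ w, H 0 w = 0 := fun w => by simpa using Hsmul₁ 0 0 w
  have H0r : ∀ v, H v 0 = 0 := fun v => by simpa using Hsmul₂ 0 v 0
  have Hnl : ∀ v w, H (-v) w = -H v w := fun v w => by simpa using Hsmul₁ (-1) v w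
  have Hnr : ∀ v w, H v (-w) = -H v w := fun v w => by simpa using Hsmul₂ (-1) v w
  have cross : ∀ v w, v ∈ AddSubgroup.closure {v : V | ∃ b ∈ 𝔟, ∃ x : L₀, v = b • ι x} →
      w ∈ AddSubgroup.closure {v : V | ∃ b ∈ 𝔟, ∃ x : L₀, v = b • ι x} →
      H v w + H w v ∈ M := by
    intro v w hv hw
    induction hv, hw using AddSubgroup.closure_induction₂ with
    | mem v w hv hw =>
      obtain ⟨b, hb, x, rfl⟩ := hv
      obtain ⟨c, hc, y, rfl⟩ := hw
      have hab : algebraMap (𝓞 K) K (h x y) * b ∈ 𝔟 := by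
        rw [← Algebra.smul_def]
        exact (𝔟 : Submodule (𝓞 K) K).smul_mem _ hb
      have := mul_conj_add_mem hdeg σ hσσ hσne 𝔟 h𝔟 hab hc
      convert this using 1
      rw [Hsmul₁, Hsmul₁, Hsmul₂, Hsmul₂, Hcompat, Hcompat, hherm x y, map_mul]
      ring
    | zero_left w _ => simp [H0l, H0r]
    | zero_right v _ => simp [H0l, H0r]
    | add_left u v w _ _ _ h₁ h₂ =>
      rw [Hadd₁, Hadd₂]
      convert add_mem h₁ h₂ using 1
      ring
    | add_right u v w _ _ _ h₁ h₂ =>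
      rw [Hadd₁, Hadd₂]
      convert add_mem h₁ h₂ using 1
      ring
    | neg_left v w _ _ h₁ =>
      rw [Hnl, Hnr]
      convert neg_mem h₁ using 1
      ring
    | neg_right v w _ _ h₁ =>
      rw [Hnl, Hnr]
      convert neg_mem h₁ using 1
      ring
  intro β hβ
  suffices hmem : H β β ∈ M by
    obtain ⟨m, hm⟩ := AddSubgroup.mem_zmultiples_iff.1 hmem
    exact ⟨m, by rw [← hm, zsmul_eq_mul, mul_comm]⟩
  induction hβ using AddSubgroup.closure_induction with
  | mem v hv =>
    obtain ⟨b, hb, x, rfl⟩ := hv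
    obtain ⟨m, hm⟩ := exists_int_of_conj_eq hdeg σ hσσ hσne (h x x) (hherm x x).symm
    have := zsmul_mem (mul_conj_mem hdeg σ hσσ hσne 𝔟 h𝔟 hb) m
    convert this using 1
    rw [Hsmul₁, Hsmul₂, Hcompat, hm, zsmul_eq_mul]
    ring
  | zero => rw [H0l]; exact zero_mem M
  | add v w hv hw h₁ h₂ =>
    rw [Hadd₁, Hadd₂, Hadd₂]
    convert add_mem (add_mem h₁ h₂) (cross v w hv hw) using 1
    ring
  | neg v _ h₁ => rwa [Hnl, Hnr, neg_neg]
end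
end
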